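/- arXiv:2001.09525 — 4 statements merged into one kernel-verified Lean document; each statement's English description precedes it below -/
import Mathlib

section
/- There is a unique real number α* in the interval [π/5, π/4] satisfying sin(α*)·sin(2α*) = sin(3α*)² (numerically α* ≈ 41.831452°). A triangle with side lengths a < b < c has three pairwise distinct minimum area isosceles containers if and only if its three angles are α*, π − 3α*, and 2α*. In particular, up to similarity there is a unique triangle with precisely 3 different minimum area isosceles containers. -/
open EuclideanGeometry MeasureTheory Real

noncomputable section

/-- The Euclidean plane. -/
abbrev Pt : Type := EuclideanSpace ℝ (Fin 2)

/-- The closed triangular region with vertices `A`, `B`, `C`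
(the convex hull of the three vertices). -/
def tri (A B C : Pt) : Set Pt := convexHull ℝ {A, B, C}

/-- The area of the triangle `A B C`:
the 2-dimensional Lebesgue measure of its convex hull. -/
def triArea (A B C : Pt) : ℝ := (volume (tri A B C)).toReal

/-- A triangle is isosceles if at least two of its side lengths coincide. -/
def IsIsosceles (A B C : Pt) : Prop :=
  dist B C = dist C A ∨ dist C A = dist A B ∨ dist A B = dist B C

/-- `S P R` is an isosceles container for the triangle `A B C`:
it is a genuine isosceles triangle whose convex hull contains that of `A B C`. -/
def IsIsoscelesContainer (A B C S P R : Pt) : Prop :=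
  AffineIndependent ℝ ![S, P, R] ∧ IsIsosceles S P R ∧ tri A B C ⊆ tri S P R

/-- `S P R` is a minimum area isosceles container for the triangle `A B C`. -/
def IsMinIsoscelesContainer (A B C S P R : Pt) : Prop :=
  IsIsoscelesContainer A B C S P R ∧
    ∀ S' P' R' : Pt, IsIsoscelesContainer A B C S' P' R' →
      triArea S P R ≤ triArea S' P' R'

/-- `Z` lies on the ray starting at `X` passing through `Y`. -/
def OnRay (X Y Z : Pt) : Prop := SameRay ℝ (Y - X) (Z - X)

/-!
A smallest isosceles container of a triangle must have a side through two of the vertices of that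
triangle. Indeed, rotate the directions of the sides of a container and take the smallest
circumscribed copy: its similarity ratio is, up to a constant, a sum of support functions in three
rotating directions. Away from the flush positions this sum is locally a single sinusoid, which
has no positive local minimum, so the container can be rotated and shrunk until it is flush.

For sides `a < b < c`, put `m = min (c / b) (b / a) ((b² + c² - a²) / c²)`. A flush isosceles
container has at least `m` times the area of the triangle, and equality forces it to be obtained by
stretching one side by the factor `m`. Each of the three ratios that attains the minimum
contributes exactly one such container, so there are three of them if and only if the ratios
coincide, that is, `a c = b²` and `c = 2 a cos α`. By the law of sines this says `γ = 2 α` and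
`sin α sin 2α = sin² 3α`.
-/

/- In the next lemmas a side of a triangle occupies the interval `[x, y]` of a leg of length `L`,
measured from the apex, and `d = y - x`. The third vertex is reached from the apex by going `q`
along this leg and then `b` in the direction of the other one, `κ` is the projection of the second
step to this leg, and `ρ`, `τ` are the distances from the third vertex to the ends `x`, `y`. The
foot of the third vertex lies at the signed distances `p = q + κ - x` and `v = y - q - κ` from these
ends, and `t = x - q`. -/
lemma mul_le_of_le_sub {b d κ m v τ : ℝ} (hd : 0 < d) (hκ : κ ≤ 0) (hbκ : -b < κ)
    (hv : b - κ ≤ v) (hτ : τ ^ 2 = b ^ 2 - κ ^ 2 + v ^ 2) (hm : m * τ ^ 2 ≤ 2 * d * v) :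
    m * b ≤ d ∧ (m * b = d → v = b - κ) := by
  have hb : 0 < b := by linarith
  have hτ_pos : 0 < τ ^ 2 := by rw [hτ]; nlinarith
  have hfactor : τ ^ 2 = 2 * v * b + (v - (b - κ)) * (v - (b + κ)) := by rw [hτ]; ring
  have hle : m * b * τ ^ 2 + d * ((v - (b - κ)) * (v - (b + κ))) ≤ d * τ ^ 2 := by
    linear_combination b * hm - d * hfactor
  rcases hv.eq_or_lt with rfl | hlt
  · exact ⟨le_of_mul_le_mul_right (by simpa using hle) hτ_pos, fun _ => rfl⟩
  · have hpos : 0 < d * ((v - (b - κ)) * (v - (b + κ))) :=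
      mul_pos hd (mul_pos (by linarith) (by linarith))
    have hmb : m * b < d := lt_of_mul_lt_mul_right (by linarith) hτ_pos.le
    exact ⟨hmb.le, fun h => absurd h hmb.ne⟩

lemma mul_lt_sq_of_abs_le {b κ m p v τ : ℝ} (hκ : |κ| < b) (hpv : |p| ≤ v) (hd : 0 < p + v)
    (hv : v < b - κ) (hτ : τ ^ 2 = b ^ 2 - κ ^ 2 + v ^ 2) (hm : m * τ ^ 2 ≤ 2 * (p + v) * v) :
    m * (p + v) * b < (p + (b - κ)) ^ 2 := by
  obtain ⟨hκl, hκr⟩ := abs_lt.mp hκ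
  obtain ⟨w, hw⟩ : ∃ w, w = b - κ := ⟨_, rfl⟩
  obtain ⟨s, hs⟩ : ∃ s, s = b ^ 2 - κ ^ 2 := ⟨_, rfl⟩
  have hs_pos : 0 < s := by rw [hs]; nlinarith
  have hw_pos : 0 < w := by linarith
  have hws : 2 * b * w = w ^ 2 + s := by rw [hw, hs]; ring
  rw [← hw] at hv ⊢
  rw [← hs] at hτ
  have hv_nonneg : 0 ≤ v := (abs_nonneg p).trans hpv
  have hp_sq : p ^ 2 ≤ v * w := by
    nlinarith [sq_abs p, abs_nonneg p, mul_le_mul hpv hpv (abs_nonneg p) hv_nonneg]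
  have hmono : (p + v) ^ 2 * v * (w ^ 2 + s) < (p + w) ^ 2 * w * (v ^ 2 + s) := by
    have h₁ : (p + v) ^ 2 * v < (p + w) ^ 2 * w := by
      apply mul_lt_mul'' (by nlinarith) hv (sq_nonneg _) hv_nonneg
    nlinarith [mul_lt_mul_of_pos_left h₁ hs_pos,
      mul_nonneg (mul_nonneg hv_nonneg hw_pos.le) (mul_nonneg (sub_nonneg.mpr hv.le)
        (sub_nonneg.mpr hp_sq))]
  have hkey : 2 * (p + v) ^ 2 * v * b < (p + w) ^ 2 * (v ^ 2 + s) := by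
    refine lt_of_mul_lt_mul_right ?_ hw_pos.le
    linear_combination hmono + (p + v) ^ 2 * v * hws
  refine lt_of_mul_lt_mul_right ?_ (by positivity : 0 ≤ v ^ 2 + s)
  have hb : 0 < b := by linarith
  have := mul_le_mul_of_nonneg_left hm (mul_pos hd hb).le
  rw [hτ] at this
  linarith

lemma mul_lt_sq_of_lt {b κ m p v ρ : ℝ} (hb : 0 < b) (hκ : κ ≤ 0) (hp : 0 < p) (hpρ : p ≤ ρ)
    (hd : 0 < p + v) (hvp : v < p) (hm : m * ρ ≤ p + v) :
    m * (p + v) * b < (p + (b - κ)) ^ 2 := by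
  refine lt_of_mul_lt_mul_right ?_ (hp.le.trans hpρ)
  calc m * (p + v) * b * ρ = m * ρ * ((p + v) * b) := by ring
    _ ≤ (p + v) * ((p + v) * b) := by gcongr
    _ < (2 * p) * ((2 * p) * b) := by gcongr <;> linarith
    _ ≤ (p + b) ^ 2 * p := by nlinarith [mul_nonneg hp.le (sq_nonneg (p - b))]
    _ ≤ (p + (b - κ)) ^ 2 * ρ := by gcongr; linarith

lemma mul_lt_sq_of_le_add {b d m t ρ : ℝ} (hd : 0 < d) (ht : 0 < t) (hρ : 0 < ρ) (hm₂ : m < 2)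
    (hb : 0 < b) (hbρ : b ≤ ρ + t) (hm : m * ρ ≤ d) : m * d * b < (d + t) ^ 2 := by
  rcases le_or_gt d (2 * ρ) with hdρ | hdρ
  · refine lt_of_mul_lt_mul_right ?_ hρ.le
    calc m * d * b * ρ = m * ρ * (d * b) := by ring
      _ ≤ d * (d * (ρ + t)) := by gcongr
      _ < (d + t) ^ 2 * ρ := by nlinarith [mul_pos (mul_pos ht ht) hρ, mul_pos hd ht]
  · calc m * d * b < 2 * d * b := by gcongr
      _ ≤ 2 * d * (ρ + t) := by gcongr
      _ < (d + t) ^ 2 := by nlinarith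

lemma mul_lt_of_le_add {b d m t κ v ρ τ : ℝ} (hd : 0 < d) (ht : 0 < t)
    (hb : 0 < b) (hv : v = t + d - κ) (hρ : ρ ^ 2 = b ^ 2 + t ^ 2 - 2 * t * κ)
    (hτ : τ ^ 2 = b ^ 2 + (t + d) ^ 2 - 2 * (t + d) * κ) (hbρ : b ≤ ρ) (hdρ : d < ρ)
    (hm : m * τ ^ 2 ≤ 2 * (τ ^ 2 - d * v)) : m * d < max b (d + t) := by
  have hτρ : τ ^ 2 = ρ ^ 2 + 2 * d * v - d ^ 2 := by rw [hτ, hρ, hv]; ring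
  have hκt : 2 * κ ≤ t := by
    refine le_of_mul_le_mul_left ?_ ht
    nlinarith
  have hv_pos : 0 < v := by linarith
  rcases le_or_gt b (d + t) with hbt | hbt
  · have hlt : 2 * d * v < τ ^ 2 := by nlinarith
    have hmd : m * (2 * d * v) < τ ^ 2 := by
      refine lt_of_mul_lt_mul_right ?_ (sq_nonneg τ)
      nlinarith [mul_le_mul_of_nonneg_left hm (by positivity : 0 ≤ 2 * d * v),
        pow_pos (sub_pos.mpr hlt) 2]
    have hτv : τ ^ 2 ≤ 2 * v * (d + t) := by rw [hτ, hv]; nlinarith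
    exact lt_max_of_lt_right (lt_of_mul_lt_mul_left (by linarith) (by positivity : 0 ≤ 2 * v))
  · have hτ' : τ ^ 2 = b ^ 2 - (d + t) ^ 2 + 2 * (d + t) * v := by rw [hτ, hv]; ring
    have hkey : (2 * d - b) * τ ^ 2 < 2 * v * d ^ 2 := by
      have hslope : 0 ≤ (b * (d + t) - (d ^ 2 + 2 * d * t)) * (2 * v - (2 * d + t)) :=
        mul_nonneg (by nlinarith) (by linarith)
      have hend : 0 < (b - d) * (b ^ 2 - d * b + d * t) :=
        mul_pos (by linarith) (by nlinarith [mul_pos hd ht])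
      rw [hτ']
      linarith
    refine lt_max_of_lt_left (lt_of_mul_lt_mul_right ?_ (sq_nonneg τ))
    linarith [mul_le_mul_of_nonneg_left hm hd.le]

lemma leg_far_lt {x y q b κ m ρ τ : ℝ} (hxq : x ≤ q) (hyq : y < b + q) (hκ : |κ| < b)
    (hρ_pos : 0 < ρ) (hρb : ρ < b) (hρ : ρ ^ 2 = b ^ 2 + (q - x) ^ 2 + 2 * (q - x) * κ)
    (hτ : τ ^ 2 = b ^ 2 - κ ^ 2 + (y - q - κ) ^ 2) (hfar : ρ < y - x)
    (hmρ : m * ρ ≤ y - x) (hmτ : m * τ ^ 2 ≤ 2 * (y - x) * (y - q - κ)) :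
    m * (y - x) * b < (b + (q - x)) ^ 2 := by
  obtain ⟨hκl, hκr⟩ := abs_lt.mp hκ
  have hκ_neg : κ < 0 := by nlinarith
  have hp : |q - x + κ| ≤ ρ := abs_le_of_sq_le_sq (by nlinarith) hρ_pos.le
  rcases le_or_gt |q - x + κ| (y - q - κ) with hpv | hvp
  · have := mul_lt_sq_of_abs_le (m := m) (τ := τ) hκ hpv (by linarith) (by linarith) hτ
      (by linear_combination hmτ)
    linear_combination this
  · have hp_pos : 0 < q - x + κ := by
      by_contra! h
      rw [abs_of_nonpos h] at hvp
      linarith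
    rw [abs_of_pos hp_pos] at hp hvp
    have := mul_lt_sq_of_lt (b := b) (m := m) (by linarith) hκ_neg.le hp_pos hp (by linarith) hvp
      (by linear_combination hmρ)
    linear_combination this

lemma mul_mul_lt_sq_or_eq {L x y b m : ℝ} (hx : 0 ≤ x) (hxy : x < y) (hy : y ≤ L)
    (hmb : m * b ≤ y - x) :
    m * (y - x) * b < L ^ 2 ∨ m * (y - x) * b = L ^ 2 ∧ m * b = y - x ∧ x = 0 ∧ y = L := by
  have hle : m * (y - x) * b ≤ (y - x) ^ 2 := by nlinarith
  rcases (by linarith : y - x ≤ L).lt_or_eq with hlt | hdL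
  · left; nlinarith
  rcases hmb.lt_or_eq with hlt | hmb
  · left; nlinarith
  · exact .inr ⟨by rw [mul_right_comm, hmb, hdL, sq], hmb, by linarith, by linarith⟩

lemma leg_area_le_of_far {L x y q b κ m ρ τ : ℝ} (hx : 0 ≤ x) (hxy : x < y) (hy : y ≤ L)
    (hq : 0 ≤ q) (hbq : b + q ≤ L) (hκ : |κ| < b) (hρ_nonneg : 0 ≤ ρ) (hm_pos : 0 < m)
    (hm₂ : m < 2) (hρ : ρ ^ 2 = b ^ 2 + (q - x) ^ 2 + 2 * (q - x) * κ)
    (hτ : τ ^ 2 = b ^ 2 + (q - y) ^ 2 + 2 * (q - y) * κ) (hfar : ρ < y - x)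
    (hmρ : m * ρ ≤ y - x) (hmτ : m * τ ^ 2 ≤ (y - x) ^ 2 + τ ^ 2 - ρ ^ 2) :
    m * (y - x) * b < L ^ 2 ∨
      m * (y - x) * b = L ^ 2 ∧ x = 0 ∧ y = L ∧ (q = 0 ∨ b + q = L) := by
  obtain ⟨hκl, hκr⟩ := abs_lt.mp hκ
  have hb : 0 < b := by linarith
  have hd : 0 < y - x := sub_pos.mpr hxy
  have hρ_pos : 0 < ρ := by
    have hsq : 0 < ρ ^ 2 := by
      nlinarith [sq_nonneg (q - x + κ), mul_pos (neg_lt_iff_pos_add.mp hκl) (sub_pos.mpr hκr)]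
    exact hρ_nonneg.lt_of_ne' (sq_pos_iff.mp hsq)
  rcases lt_or_ge q x with hqx | hxq
  · left
    have hbρ : b - (x - q) ≤ ρ := (abs_le_of_sq_le_sq' (by nlinarith) hρ_pos.le).2
    calc m * (y - x) * b < (y - x + (x - q)) ^ 2 :=
          mul_lt_sq_of_le_add hd (by linarith) hρ_pos hm₂ hb (by linarith) hmρ
      _ ≤ L ^ 2 := pow_le_pow_left₀ (by linarith) (by linarith) 2
  replace hmτ : m * τ ^ 2 ≤ 2 * (y - x) * (y - q - κ) := by
    linear_combination hmτ - hρ + hτ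
  replace hτ : τ ^ 2 = b ^ 2 - κ ^ 2 + (y - q - κ) ^ 2 := by linear_combination hτ
  by_cases hfoot : κ ≤ 0 ∧ b + q ≤ y
  · obtain ⟨hmb, heq⟩ := mul_le_of_le_sub hd hfoot.1 hκl (by linarith) hτ hmτ
    exact (mul_mul_lt_sq_or_eq hx hxy hy hmb).imp_right fun ⟨hL, h, hx0, hyL⟩ =>
      ⟨hL, hx0, hyL, .inr (by linarith [heq h])⟩
  rcases le_or_gt b ρ with hbρ | hρb
  · refine (mul_mul_lt_sq_or_eq hx hxy hy (by nlinarith)).imp_right ?_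
    rintro ⟨heq, h, rfl, rfl⟩
    have hρb : ρ = b := le_antisymm (le_of_mul_le_mul_left (by linarith) hm_pos) hbρ
    have hqκ : q * (q + 2 * κ) = 0 := by rw [hρb] at hρ; linear_combination -hρ
    refine ⟨heq, rfl, rfl, (mul_eq_zero.mp hqκ).imp_right fun hqκ => ?_⟩
    exact absurd ⟨by linarith, by linarith⟩ hfoot
  · left
    calc m * (y - x) * b < (b + (q - x)) ^ 2 := by
          refine leg_far_lt hxq ?_ hκ hρ_pos hρb hρ hτ hfar hmρ hmτ
          by_contra! hyq
          exact hfoot ⟨by nlinarith, hyq⟩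
      _ ≤ L ^ 2 := pow_le_pow_left₀ (by linarith) (by linarith) 2

lemma leg_area_le_of_near {L x y q b κ m ρ τ : ℝ} (hx : 0 ≤ x) (hxy : x < y) (hy : y ≤ L)
    (hq : 0 ≤ q) (hbq : b + q ≤ L) (hκ : |κ| < b)
    (hρ : ρ ^ 2 = b ^ 2 + (q - x) ^ 2 + 2 * (q - x) * κ)
    (hτ : τ ^ 2 = b ^ 2 + (q - y) ^ 2 + 2 * (q - y) * κ) (hnear : y - x < ρ)
    (hmd : m * (y - x) ≤ ρ) (hmτ : m * τ ^ 2 ≤ ρ ^ 2 + τ ^ 2 - (y - x) ^ 2) :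
    m * (y - x) * b < L ^ 2 ∨ m * (y - x) * b = L ^ 2 ∧ x = 0 ∧ q = 0 ∧ b = L := by
  obtain ⟨hκl, hκr⟩ := abs_lt.mp hκ
  have hb : 0 < b := by linarith
  have : 0 < ρ := by linarith
  have hmdb : m * (y - x) * b ≤ ρ * b := by gcongr
  rcases le_or_gt x q with hxq | hqx
  · have hρ_le : ρ ≤ b + (q - x) :=
      (abs_le_of_sq_le_sq' (by nlinarith) (by linarith)).2
    rcases hq.eq_or_lt with rfl | hq_pos
    · obtain rfl : x = 0 := le_antisymm hxq hx
      have hρL : m * (y - 0) * b ≤ L ^ 2 := by nlinarith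
      exact hρL.lt_or_eq.imp_right fun h => ⟨h, rfl, rfl, by nlinarith⟩
    · left; nlinarith
  left
  rcases lt_or_ge ρ b with hρb | hbρ
  · nlinarith
  have hmax := mul_lt_of_le_add (m := m) (κ := κ) (τ := τ) (sub_pos.mpr hxy) (sub_pos.mpr hqx) hb
    rfl (by linear_combination hρ) (by linear_combination hτ) hbρ hnear
    (by linear_combination hmτ + hρ - hτ)
  have hmax_le : max b (y - x + (x - q)) ≤ L := max_le (by linarith) (by linarith)
  calc m * (y - x) * b < L * b := by gcongr; linarith
    _ ≤ L ^ 2 := by nlinarith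

/-! ### Areas of triangles -/

lemma tri_eq_convexHull_range (T : Fin 3 → Pt) :
    tri (T 0) (T 1) (T 2) = convexHull ℝ (Set.range T) := by
  rw [tri]
  congr 1
  ext x
  simp [Fin.exists_fin_succ, eq_comm]

lemma convexHull_range_comp (T : Fin 3 → Pt) (σ : Equiv.Perm (Fin 3)) :
    convexHull ℝ (Set.range (T ∘ σ)) = convexHull ℝ (Set.range T) := by
  rw [σ.surjective.range_comp]

lemma mem_convexHull_range {ι E : Type*} [Fintype ι] [AddCommGroup E] [Module ℝ E] {T : ι → E}
    {x : E} : x ∈ convexHull ℝ (Set.range T) ↔ ∃ w ∈ stdSimplex ℝ ι, ∑ i, w i • T i = x := by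
  classical
  have : Set.range T = Fintype.linearCombination ℝ T '' Set.range fun i => Pi.single i (1 : ℝ) := by
    rw [← Set.range_comp]
    congr 1
    ext i
    simp
  rw [this, ← LinearMap.image_convexHull, convexHull_rangle_single_eq_stdSimplex]
  simp [Fintype.linearCombination_apply]

/-- Twice the signed area of the triangle with vertices `T 0`, `T 1`, `T 2`. -/
def doubleArea (T : Fin 3 → Pt) : ℝ := (Matrix.of fun i => ![1, T i 0, T i 1]).det

lemma doubleArea_eq (T : Fin 3 → Pt) : doubleArea T =
    (T 1 0 - T 0 0) * (T 2 1 - T 0 1) - (T 1 1 - T 0 1) * (T 2 0 - T 0 0) := by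
  simp only [doubleArea, Matrix.det_fin_three, Matrix.of_apply, Matrix.cons_val]
  ring

lemma abs_doubleArea_comp (T : Fin 3 → Pt) (σ : Equiv.Perm (Fin 3)) :
    |doubleArea (T ∘ σ)| = |doubleArea T| := by
  have : doubleArea (T ∘ σ) = Equiv.Perm.sign σ * doubleArea T :=
    Matrix.det_permute σ (Matrix.of fun i => ![1, T i 0, T i 1])
  rw [this, abs_mul]
  rcases Int.units_eq_one_or (Equiv.Perm.sign σ) with h | h <;> simp [h]

lemma doubleArea_comp_ne_zero_iff {T : Fin 3 → Pt} {σ : Equiv.Perm (Fin 3)} :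
    doubleArea (T ∘ σ) ≠ 0 ↔ doubleArea T ≠ 0 := by
  rw [← abs_ne_zero, abs_doubleArea_comp, abs_ne_zero]

lemma affineIndependent_iff_doubleArea_ne_zero {T : Fin 3 → Pt} :
    AffineIndependent ℝ T ↔ doubleArea T ≠ 0 := by
  rw [doubleArea, ← isUnit_iff_ne_zero, ← Matrix.isUnit_iff_isUnit_det,
    ← Matrix.linearIndependent_rows_iff_isUnit, Fintype.linearIndependent_iff,
    affineIndependent_iff_of_fintype]
  refine forall_congr' fun w => ?_
  have hrows : ∑ i, w i • (Matrix.of fun i => ![1, T i 0, T i 1]) i = 0 ↔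
      ∑ i, w i = 0 ∧ ∑ i, w i * T i 0 = 0 ∧ ∑ i, w i * T i 1 = 0 := by
    simp [funext_iff, Fin.forall_fin_succ]
  have hcoord : ∑ i, w i • T i = 0 ↔ ∑ i, w i * T i 0 = 0 ∧ ∑ i, w i * T i 1 = 0 := by
    simp [PiLp.ext_iff, Fin.forall_fin_two]
  rw [Matrix.row_def, hrows, ← hcoord, ← and_imp]
  refine imp_congr_left (and_congr_right fun hw => ?_)
  rw [Finset.weightedVSub_eq_linear_combination _ hw]

lemma exists_volume_convexHull_range_eq :
    ∃ κ : ℝ, 0 < κ ∧ ∀ T : Fin 3 → Pt,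
      (volume (convexHull ℝ (Set.range T))).toReal = κ * |doubleArea T| := by
  let T₀ : Fin 3 → Pt := ![0, !₂[1, 0], !₂[0, 1]]
  have hT₀ : AffineIndependent ℝ T₀ := by
    rw [affineIndependent_iff_doubleArea_ne_zero]
    simp [doubleArea_eq, T₀]
  refine ⟨(volume (convexHull ℝ (Set.range T₀))).toReal, ENNReal.toReal_pos ?_ ?_, fun T => ?_⟩
  · have hint : (interior (convexHull ℝ (Set.range T₀))).Nonempty := by
      refine interior_convexHull_nonempty_iff_affineSpan_eq_top.mpr ?_
      exact hT₀.affineSpan_eq_top_iff_card_eq_finrank_add_one.mpr (by simp)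
    exact (Measure.measure_pos_of_nonempty_interior volume hint).ne'
  · exact ((Set.finite_range T₀).isCompact_convexHull ℝ).measure_lt_top.ne
  · let b := (EuclideanSpace.basisFun (Fin 2) ℝ).toBasis
    let M : Matrix (Fin 2) (Fin 2) ℝ := .of fun i j => T j.succ i - T 0 i
    let f : Pt →ₗ[ℝ] Pt := Matrix.toLin b b M
    have hdet : LinearMap.det f = doubleArea T := by
      rw [LinearMap.det_toLin, Matrix.det_fin_two, doubleArea_eq]
      simp only [M, Matrix.of_apply, Fin.succ_zero_eq_one, Fin.succ_one_eq_two]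
      ring
    have hrange : Set.range T = (f.toAffineMap + AffineMap.const ℝ Pt (T 0)) '' Set.range T₀ := by
      rw [← Set.range_comp]
      congr 1
      ext i j
      fin_cases i <;> fin_cases j <;> simp [f, b, M, T₀, Matrix.toLin_apply, Matrix.mulVec]
    have himage : convexHull ℝ (Set.range T) =
        (· + T 0) '' (f '' convexHull ℝ (Set.range T₀)) := by
      rw [hrange, ← AffineMap.image_convexHull, Set.image_image]
      rfl
    rw [himage, Set.image_add_right, measure_preimage_add_right,
      Measure.addHaar_image_linearMap, hdet, ENNReal.toReal_mul,
      ENNReal.toReal_ofReal (abs_nonneg _), mul_comm]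

/-! ### Stretched triangles -/

/-- The triangle obtained from `V` by stretching its side `V 0 V 2` from `V 0` by the factor `m`. -/
def stretch (m : ℝ) (V : Fin 3 → Pt) : Fin 3 → Pt :=
  ![V 0, V 1, AffineMap.lineMap (V 0) (V 2) m]

/-- The triangle `V` is scalene and `m ∈ (0, 2)` is at most every factor `r > 1` for which some
`stretch r (V ∘ σ)` is isosceles with apex `V (σ 0)` (field `mul_dist_le`) or `V (σ 1)` (field
`mul_dist_sq_le`). -/
structure IsAdmissible (m : ℝ) (V : Fin 3 → Pt) : Prop where
  pos : 0 < m
  lt_two : m < 2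
  scalene : ∀ σ : Equiv.Perm (Fin 3), dist (V (σ 0)) (V (σ 1)) ≠ dist (V (σ 0)) (V (σ 2))
  mul_dist_le : ∀ σ : Equiv.Perm (Fin 3), dist (V (σ 0)) (V (σ 2)) < dist (V (σ 0)) (V (σ 1)) →
    m * dist (V (σ 0)) (V (σ 2)) ≤ dist (V (σ 0)) (V (σ 1))
  mul_dist_sq_le : ∀ σ : Equiv.Perm (Fin 3),
    dist (V (σ 1)) (V (σ 2)) < dist (V (σ 0)) (V (σ 1)) →
    m * dist (V (σ 0)) (V (σ 2)) ^ 2 ≤ dist (V (σ 0)) (V (σ 1)) ^ 2 +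
      dist (V (σ 0)) (V (σ 2)) ^ 2 - dist (V (σ 1)) (V (σ 2)) ^ 2

/-- `K` is one of the isosceles triangles `stretch m (V ∘ σ)` for which one of the bounds in
`IsAdmissible m V` is attained. -/
def IsSharp (m : ℝ) (V : Fin 3 → Pt) (K : Set Pt) : Prop :=
  ∃ σ : Equiv.Perm (Fin 3), K = convexHull ℝ (Set.range (stretch m (V ∘ σ))) ∧
    (dist (V (σ 0)) (V (σ 2)) < dist (V (σ 0)) (V (σ 1)) ∧
        m * dist (V (σ 0)) (V (σ 2)) = dist (V (σ 0)) (V (σ 1)) ∨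
      dist (V (σ 1)) (V (σ 2)) < dist (V (σ 0)) (V (σ 1)) ∧
        m * dist (V (σ 0)) (V (σ 2)) ^ 2 = dist (V (σ 0)) (V (σ 1)) ^ 2 +
          dist (V (σ 0)) (V (σ 2)) ^ 2 - dist (V (σ 1)) (V (σ 2)) ^ 2)

/-- The triangle `T` has at least `m` times the area of `V`, with equality only for the special
containers described by `IsSharp`. -/
def AreaBound (m : ℝ) (V T : Fin 3 → Pt) : Prop :=
  m * |doubleArea V| < |doubleArea T| ∨
    m * |doubleArea V| = |doubleArea T| ∧ IsSharp m V (convexHull ℝ (Set.range T))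

section Perm

variable {m : ℝ} {V T : Fin 3 → Pt}

lemma IsAdmissible.comp (h : IsAdmissible m V) (σ : Equiv.Perm (Fin 3)) :
    IsAdmissible m (V ∘ σ) where
  pos := h.pos
  lt_two := h.lt_two
  scalene τ := h.scalene (σ * τ)
  mul_dist_le τ := h.mul_dist_le (σ * τ)
  mul_dist_sq_le τ := h.mul_dist_sq_le (σ * τ)

lemma IsSharp.of_comp {K : Set Pt} {σ : Equiv.Perm (Fin 3)} : IsSharp m (V ∘ σ) K → IsSharp m V K :=
  fun ⟨τ, h⟩ => ⟨σ * τ, h⟩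

lemma AreaBound.of_comp {σ τ : Equiv.Perm (Fin 3)} (h : AreaBound m (V ∘ σ) (T ∘ τ)) :
    AreaBound m V T := by
  rw [AreaBound, abs_doubleArea_comp, abs_doubleArea_comp, convexHull_range_comp] at h
  exact h.imp_right (And.imp_right IsSharp.of_comp)

end Perm

lemma doubleArea_stretch (m : ℝ) (V : Fin 3 → Pt) :
    doubleArea (stretch m V) = m * doubleArea V := by
  simp only [doubleArea_eq, stretch, AffineMap.lineMap_apply_module', Matrix.cons_val,
    PiLp.add_apply, PiLp.smul_apply, PiLp.sub_apply, smul_eq_mul]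
  ring

lemma dist_lineMap_sq {E : Type*} [NormedAddCommGroup E] [InnerProductSpace ℝ E] (X Y Z : E)
    (m : ℝ) : dist Y (AffineMap.lineMap X Z m) ^ 2 =
      dist X Y ^ 2 + m * (m * dist X Z ^ 2 - (dist X Y ^ 2 + dist X Z ^ 2 - dist Y Z ^ 2)) := by
  obtain ⟨u, rfl⟩ : ∃ u, Y = X + u := ⟨Y - X, by simp⟩
  obtain ⟨v, rfl⟩ : ∃ v, Z = X + v := ⟨Z - X, by simp⟩
  rw [AffineMap.lineMap_apply, vsub_eq_sub, vadd_eq_add, add_sub_cancel_left, add_comm _ X]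
  simp only [dist_add_left, dist_self_add_right, dist_eq_norm u, norm_sub_sq_real, norm_smul,
    inner_smul_right, Real.norm_eq_abs, mul_pow, sq_abs]
  ring

lemma dist_stretch_zero {m : ℝ} (hm : 0 < m) (V : Fin 3 → Pt) :
    dist (stretch m V 0) (stretch m V 2) = dist (stretch m V 0) (stretch m V 1) ↔
      m * dist (V 0) (V 2) = dist (V 0) (V 1) := by
  simp [stretch, dist_left_lineMap, abs_of_pos hm]

lemma dist_stretch_one {m : ℝ} (hm : 0 < m) (V : Fin 3 → Pt) :
    dist (stretch m V 1) (stretch m V 2) = dist (stretch m V 0) (stretch m V 1) ↔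
      m * dist (V 0) (V 2) ^ 2 =
        dist (V 0) (V 1) ^ 2 + dist (V 0) (V 2) ^ 2 - dist (V 1) (V 2) ^ 2 := by
  rw [← sq_eq_sq₀ dist_nonneg dist_nonneg]
  simp only [stretch, Matrix.cons_val, dist_lineMap_sq, add_eq_left, mul_eq_zero, hm.ne', false_or,
    sub_eq_zero]

section Sharp

variable {m : ℝ} {V T : Fin 3 → Pt}

lemma stretch_eq_iff :
    stretch m V = T ↔ V 0 = T 0 ∧ V 1 = T 1 ∧ AffineMap.lineMap (V 0) (V 2) m = T 2 := by
  simp [funext_iff, Fin.forall_fin_succ, stretch]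

lemma IsSharp.of_dist_zero_eq (hm : 0 < m) (σ τ : Equiv.Perm (Fin 3))
    (h₀ : V (σ 0) = T (τ 0)) (h₁ : V (σ 1) = T (τ 1))
    (h₂ : AffineMap.lineMap (V (σ 0)) (V (σ 2)) m = T (τ 2))
    (hlt : dist (V (σ 0)) (V (σ 2)) < dist (V (σ 0)) (V (σ 1)))
    (hT : dist (T (τ 0)) (T (τ 2)) = dist (T (τ 0)) (T (τ 1))) :
    IsSharp m V (convexHull ℝ (Set.range T)) := by
  have hσ : stretch m (V ∘ σ) = T ∘ τ := stretch_eq_iff.mpr ⟨h₀, h₁, h₂⟩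
  refine ⟨σ, by rw [hσ, convexHull_range_comp], .inl ⟨hlt, (dist_stretch_zero hm (V ∘ σ)).mp ?_⟩⟩
  rwa [hσ]

lemma IsSharp.of_dist_one_eq (hm : 0 < m) (σ τ : Equiv.Perm (Fin 3))
    (h₀ : V (σ 0) = T (τ 0)) (h₁ : V (σ 1) = T (τ 1))
    (h₂ : AffineMap.lineMap (V (σ 0)) (V (σ 2)) m = T (τ 2))
    (hlt : dist (V (σ 1)) (V (σ 2)) < dist (V (σ 0)) (V (σ 1)))
    (hT : dist (T (τ 1)) (T (τ 2)) = dist (T (τ 0)) (T (τ 1))) :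
    IsSharp m V (convexHull ℝ (Set.range T)) := by
  have hσ : stretch m (V ∘ σ) = T ∘ τ := stretch_eq_iff.mpr ⟨h₀, h₁, h₂⟩
  refine ⟨σ, by rw [hσ, convexHull_range_comp], .inr ⟨hlt, (dist_stretch_one hm (V ∘ σ)).mp ?_⟩⟩
  rwa [hσ]

end Sharp

lemma norm_smul_add_smul_sq {E : Type*} [NormedAddCommGroup E] [InnerProductSpace ℝ E] (a b : ℝ)
    (u v : E) :
    ‖a • u + b • v‖ ^ 2 = a ^ 2 * ‖u‖ ^ 2 + b ^ 2 * ‖v‖ ^ 2 + 2 * a * b * inner ℝ u v := by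
  rw [norm_add_sq_real, norm_smul, norm_smul, inner_smul_left, inner_smul_right, mul_pow, mul_pow,
    Real.norm_eq_abs, Real.norm_eq_abs, sq_abs, sq_abs, RCLike.conj_to_real]
  ring

lemma inner_sq_add_doubleArea_sq (T : Fin 3 → Pt) :
    inner ℝ (T 1 - T 0) (T 2 - T 0) ^ 2 + doubleArea T ^ 2 =
      dist (T 0) (T 1) ^ 2 * dist (T 0) (T 2) ^ 2 := by
  simp only [dist_eq_norm', EuclideanSpace.norm_sq_eq, Real.norm_eq_abs, sq_abs,
    PiLp.inner_apply, Fin.sum_univ_two, doubleArea_eq, PiLp.sub_apply, RCLike.inner_apply,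
    conj_trivial]
  ring

/-! ### Flush isosceles triangles -/

/-- The triangle `V` lies in `T` with `V 0` and `V 1`, in this order, on the side from `T 0` to
`T 2`: these are the coordinates of `V` in the frame of `T` with origin `T 0`. -/
structure IsInscribed (V T : Fin 3 → Pt) (ξ η β γ : ℝ) : Prop where
  zero : V 0 = T 0 + ξ • (T 2 - T 0)
  one : V 1 = T 0 + η • (T 2 - T 0)
  two : V 2 = T 0 + β • (T 1 - T 0) + γ • (T 2 - T 0)
  nonneg_left : 0 ≤ ξ
  lt : ξ < η
  le_one : η ≤ 1
  height_pos : 0 < β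
  nonneg : 0 ≤ γ
  add_le_one : β + γ ≤ 1

namespace IsInscribed

variable {V T : Fin 3 → Pt} {ξ η β γ m : ℝ}

lemma doubleArea_eq (h : IsInscribed V T ξ η β γ) :
    doubleArea V = -((η - ξ) * β * doubleArea T) := by
  simp only [_root_.doubleArea_eq, h.zero, h.one, h.two, PiLp.add_apply, PiLp.smul_apply,
    PiLp.sub_apply, smul_eq_mul]
  ring

lemma mul_abs_doubleArea (h : IsInscribed V T ξ η β γ) (m : ℝ) :
    m * |doubleArea V| = m * (η - ξ) * β * |doubleArea T| := by
  rw [h.doubleArea_eq, abs_neg, abs_mul,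
    abs_of_nonneg (mul_nonneg (sub_nonneg.mpr h.lt.le) h.height_pos.le)]
  ring

lemma reverse (h : IsInscribed V T ξ η β γ) :
    IsInscribed (V ∘ Equiv.swap 0 1) (T ∘ Equiv.swap 0 2) (1 - η) (1 - ξ) β (1 - β - γ) where
  zero := by
    simp only [Function.comp_apply, Equiv.swap_apply_left, Equiv.swap_apply_right, h.one]
    module
  one := by
    simp only [Function.comp_apply, Equiv.swap_apply_left, Equiv.swap_apply_right, h.zero]
    module
  two := by
    simp only [Function.comp_apply, Equiv.swap_apply_left, Equiv.swap_apply_right]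
    rw [Equiv.swap_apply_of_ne_of_ne (by decide) (by decide),
      Equiv.swap_apply_of_ne_of_ne (by decide) (by decide), h.two]
    module
  nonneg_left := by linarith [h.le_one]
  lt := by linarith [h.lt]
  le_one := by linarith [h.nonneg_left]
  height_pos := h.height_pos
  nonneg := by linarith [h.add_le_one]
  add_le_one := by linarith [h.nonneg]

lemma dist_zero_one (h : IsInscribed V T ξ η β γ) :
    dist (V 0) (V 1) = (η - ξ) * dist (T 0) (T 2) := by
  rw [h.zero, h.one, dist_add_left, dist_eq_norm, ← sub_smul, norm_smul, Real.norm_eq_abs,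
    abs_sub_comm, abs_of_pos (sub_pos.mpr h.lt), ← dist_eq_norm, dist_comm]

lemma dist_zero_two_sq (h : IsInscribed V T ξ η β γ) :
    dist (V 0) (V 2) ^ 2 = β ^ 2 * dist (T 0) (T 1) ^ 2 + (γ - ξ) ^ 2 * dist (T 0) (T 2) ^ 2 +
      2 * β * (γ - ξ) * inner ℝ (T 1 - T 0) (T 2 - T 0) := by
  have : V 2 - V 0 = β • (T 1 - T 0) + (γ - ξ) • (T 2 - T 0) := by
    rw [h.zero, h.two]
    module
  rw [dist_eq_norm', this, norm_smul_add_smul_sq, ← dist_eq_norm', ← dist_eq_norm']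

lemma dist_one_two_sq (h : IsInscribed V T ξ η β γ) :
    dist (V 1) (V 2) ^ 2 = β ^ 2 * dist (T 0) (T 1) ^ 2 + (γ - η) ^ 2 * dist (T 0) (T 2) ^ 2 +
      2 * β * (γ - η) * inner ℝ (T 1 - T 0) (T 2 - T 0) := by
  have : V 2 - V 1 = β • (T 1 - T 0) + (γ - η) • (T 2 - T 0) := by
    rw [h.one, h.two]
    module
  rw [dist_eq_norm', this, norm_smul_add_smul_sq, ← dist_eq_norm', ← dist_eq_norm']

lemma exists_dist_sq_eq (h : IsInscribed V T ξ η β γ) (hT : dist (T 0) (T 1) = dist (T 0) (T 2))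
    (hT₀ : doubleArea T ≠ 0) :
    ∃ L, 0 < L ∧ dist (V 0) (V 1) = η * L - ξ * L ∧ ∃ κ, |κ| < β * L ∧
      dist (V 0) (V 2) ^ 2 =
        (β * L) ^ 2 + (γ * L - ξ * L) ^ 2 + 2 * (γ * L - ξ * L) * κ ∧
      dist (V 1) (V 2) ^ 2 =
        (β * L) ^ 2 + (γ * L - η * L) ^ 2 + 2 * (γ * L - η * L) * κ := by
  obtain ⟨L, hL⟩ : ∃ L, dist (T 0) (T 2) = L := ⟨_, rfl⟩
  obtain ⟨ι, hι⟩ : ∃ ι, inner ℝ (T 1 - T 0) (T 2 - T 0) = ι := ⟨_, rfl⟩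
  have hLagrange := inner_sq_add_doubleArea_sq T
  have hρ := h.dist_zero_two_sq
  have hτ := h.dist_one_two_sq
  rw [hT, hL, hι] at hLagrange hρ hτ
  have harea : 0 < doubleArea T ^ 2 := by positivity
  have hL_pos : 0 < L := by
    refine (hL ▸ dist_nonneg).lt_of_ne ?_
    rintro rfl
    nlinarith
  have hι_lt : |ι| < L ^ 2 := abs_lt_of_sq_lt_sq (by linarith) (sq_nonneg L)
  obtain ⟨κ, rfl⟩ : ∃ κ, ι = L * κ := ⟨ι / L, by field_simp⟩
  rw [abs_mul, abs_of_pos hL_pos, sq, mul_lt_mul_iff_right₀ hL_pos] at hι_lt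
  refine ⟨L, hL_pos, by rw [h.dist_zero_one, hL]; ring, β * κ, ?_, ?_, ?_⟩
  · rw [abs_mul, abs_of_pos h.height_pos]
    gcongr
    exact h.height_pos
  · linear_combination hρ
  · linear_combination hτ

lemma areaBound_of_or (h : IsInscribed V T ξ η β γ) (hT₀ : doubleArea T ≠ 0) {L : ℝ} (hL : 0 < L)
    (hle : m * (η * L - ξ * L) * (β * L) < L ^ 2 ∨
      m * (η * L - ξ * L) * (β * L) = L ^ 2 ∧ IsSharp m V (convexHull ℝ (Set.range T))) :
    AreaBound m V T := by
  rw [AreaBound, h.mul_abs_doubleArea, mul_lt_iff_lt_one_left (abs_pos.mpr hT₀),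
    mul_eq_right₀ (abs_ne_zero.mpr hT₀)]
  have hscale : m * (η * L - ξ * L) * (β * L) = m * (η - ξ) * β * L ^ 2 := by ring
  rwa [hscale, mul_lt_iff_lt_one_left (by positivity), mul_eq_right₀ (by positivity)] at hle

lemma isSharp_of_apex_zero (h : IsInscribed V T 0 1 β γ)
    (hT : dist (T 0) (T 1) = dist (T 0) (T 2)) (hm : 0 < m) (hmβ : m * β = 1)
    (hβγ : γ = 0 ∨ β + γ = 1) (hlt : dist (V 0) (V 2) < dist (V 0) (V 1)) :
    IsSharp m V (convexHull ℝ (Set.range T)) := by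
  rcases hβγ with hγ | hβγ
  · subst hγ
    refine .of_dist_zero_eq hm 1 (Equiv.swap 1 2) ?_ ?_ ?_ hlt hT
    · change V 0 = T 0
      simp [h.zero]
    · change V 1 = T 2
      simp [h.one]
    · change AffineMap.lineMap (V 0) (V 2) m = T 1
      simp [h.zero, h.two, AffineMap.lineMap_apply_module', smul_smul, hmβ]
  · obtain rfl : γ = 1 - β := by linarith
    rw [dist_comm (V 0) (V 1)] at hlt
    rw [dist_comm (T 0) (T 2)] at hT
    refine .of_dist_one_eq hm (Equiv.swap 0 1) (finRotate 3).symm ?_ ?_ ?_ hlt hT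
    · change V 1 = T 2
      simp [h.one]
    · change V 0 = T 0
      simp [h.zero]
    · change AffineMap.lineMap (V 1) (V 2) m = T 1
      have : V 2 - V 1 = β • (T 1 - T 2) := by
        rw [h.one, h.two]
        module
      rw [AffineMap.lineMap_apply_module', this, smul_smul, hmβ, h.one]
      module

lemma areaBound_of_apex_zero_of_lt (h : IsInscribed V T ξ η β γ)
    (hT : dist (T 0) (T 1) = dist (T 0) (T 2)) (hT₀ : doubleArea T ≠ 0) (hV : IsAdmissible m V)
    (hlt : dist (V 0) (V 2) < dist (V 0) (V 1)) : AreaBound m V T := by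
  have hρ_le : m * dist (V 0) (V 2) ≤ dist (V 0) (V 1) := hV.mul_dist_le 1 hlt
  have hτ_le : m * dist (V 1) (V 2) ^ 2 ≤
      dist (V 0) (V 1) ^ 2 + dist (V 1) (V 2) ^ 2 - dist (V 0) (V 2) ^ 2 := by
    rw [dist_comm (V 0) (V 1)] at hlt ⊢
    exact hV.mul_dist_sq_le (Equiv.swap 0 1) hlt
  obtain ⟨L, hL, hd, κ, hκ, hρ, hτ⟩ := h.exists_dist_sq_eq hT hT₀
  refine h.areaBound_of_or hT₀ hL ?_
  rw [hd] at hρ_le hτ_le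
  refine (leg_area_le_of_far (by have := h.nonneg_left; positivity) (by gcongr; exact h.lt)
    (mul_le_of_le_one_left hL.le h.le_one) (by have := h.nonneg; positivity)
    (by rw [← add_mul]; exact mul_le_of_le_one_left hL.le h.add_le_one) hκ dist_nonneg hV.pos
    hV.lt_two hρ hτ (hd ▸ hlt) hρ_le hτ_le).imp_right ?_
  rintro ⟨heq, hξ, hη, hβγ⟩
  obtain rfl : ξ = 0 := by nlinarith
  obtain rfl : η = 1 := by nlinarith
  have hmβ : m * β = 1 := by
    refine mul_right_cancel₀ (pow_pos hL 2).ne' ?_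
    linear_combination heq
  refine ⟨heq, h.isSharp_of_apex_zero hT hV.pos hmβ (hβγ.imp (fun hγ => ?_) fun hβγ => ?_) hlt⟩
  · nlinarith
  · nlinarith

lemma areaBound_of_apex_zero_of_gt (h : IsInscribed V T ξ η β γ)
    (hT : dist (T 0) (T 1) = dist (T 0) (T 2)) (hT₀ : doubleArea T ≠ 0) (hV : IsAdmissible m V)
    (hlt : dist (V 0) (V 1) < dist (V 0) (V 2)) : AreaBound m V T := by
  have hd_le : m * dist (V 0) (V 1) ≤ dist (V 0) (V 2) := hV.mul_dist_le (Equiv.swap 1 2) hlt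
  have hτ_le : m * dist (V 1) (V 2) ^ 2 ≤
      dist (V 0) (V 2) ^ 2 + dist (V 1) (V 2) ^ 2 - dist (V 0) (V 1) ^ 2 := by
    rw [dist_comm (V 1), dist_comm (V 0) (V 2)] at *
    exact hV.mul_dist_sq_le (finRotate 3).symm hlt
  obtain ⟨L, hL, hd, κ, hκ, hρ, hτ⟩ := h.exists_dist_sq_eq hT hT₀
  refine h.areaBound_of_or hT₀ hL ?_
  rw [hd] at hd_le hτ_le
  refine (leg_area_le_of_near (by have := h.nonneg_left; positivity) (by gcongr; exact h.lt)
    (mul_le_of_le_one_left hL.le h.le_one) (by have := h.nonneg; positivity)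
    (by rw [← add_mul]; exact mul_le_of_le_one_left hL.le h.add_le_one) hκ
    hρ hτ (hd ▸ hlt) hd_le hτ_le).imp_right ?_
  rintro ⟨heq, hξ, hγ, hβ⟩
  obtain rfl : ξ = 0 := by nlinarith
  obtain rfl : γ = 0 := by nlinarith
  obtain rfl : β = 1 := by nlinarith
  have hmη : m * η = 1 := by
    refine mul_right_cancel₀ (pow_pos hL 2).ne' ?_
    linear_combination heq
  refine ⟨heq, .of_dist_zero_eq hV.pos (Equiv.swap 1 2) 1 ?_ ?_ ?_ hlt hT.symm⟩
  · change V 0 = T 0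
    simp [h.zero]
  · change V 2 = T 1
    simp [h.two]
  · change AffineMap.lineMap (V 0) (V 1) m = T 2
    simp [h.zero, h.one, AffineMap.lineMap_apply_module', smul_smul, hmη]

lemma areaBound_of_apex_zero (h : IsInscribed V T ξ η β γ)
    (hT : dist (T 0) (T 1) = dist (T 0) (T 2)) (hT₀ : doubleArea T ≠ 0) (hV : IsAdmissible m V) :
    AreaBound m V T :=
  (hV.scalene 1).lt_or_gt.elim (h.areaBound_of_apex_zero_of_gt hT hT₀ hV)
    (h.areaBound_of_apex_zero_of_lt hT hT₀ hV)

lemma mul_sub_le_of_apex_one (h : IsInscribed V T ξ η β γ)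
    (hT : dist (T 1) (T 0) = dist (T 1) (T 2)) (hT₀ : doubleArea T ≠ 0) (hV : IsAdmissible m V)
    (hlt : dist (V 2) (V 0) < dist (V 1) (V 2)) : m * (η - ξ) ≤ 2 * (η - γ) - β := by
  have hinner : 2 * inner ℝ (T 1 - T 0) (T 2 - T 0) = dist (T 0) (T 2) ^ 2 := by
    have := norm_sub_sq_real (T 1 - T 0) (T 2 - T 0)
    rw [sub_sub_sub_cancel_right, ← dist_eq_norm, ← dist_eq_norm, ← dist_eq_norm', hT] at this
    linarith
  have hbase : 0 < dist (T 0) (T 2) := by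
    refine dist_pos.mpr fun h₀₂ => hT₀ ?_
    rw [_root_.doubleArea_eq, h₀₂]
    ring
  have hle : m * dist (V 1) (V 0) ^ 2 ≤
      dist (V 1) (V 2) ^ 2 + dist (V 1) (V 0) ^ 2 - dist (V 2) (V 0) ^ 2 :=
    hV.mul_dist_sq_le (finRotate 3) hlt
  rw [dist_comm (V 1) (V 0), dist_comm (V 2), h.dist_zero_one, h.dist_zero_two_sq,
    h.dist_one_two_sq] at hle
  refine le_of_mul_le_mul_right ?_ (mul_pos (sub_pos.mpr h.lt) (pow_pos hbase 2))
  linear_combination hle - β * (η - ξ) * hinner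

lemma areaBound_of_apex_one_of_lt (h : IsInscribed V T ξ η β γ)
    (hT : dist (T 1) (T 0) = dist (T 1) (T 2)) (hT₀ : doubleArea T ≠ 0) (hV : IsAdmissible m V)
    (hlt : dist (V 2) (V 0) < dist (V 1) (V 2)) : AreaBound m V T := by
  have hmd := h.mul_sub_le_of_apex_one hT hT₀ hV hlt
  obtain ⟨hη, hγ, hβ, hβγ⟩ :=
    And.intro h.le_one (And.intro h.nonneg (And.intro h.height_pos h.add_le_one))
  have hmdβ : m * (η - ξ) * β ≤ (2 * (η - γ) - β) * β := by gcongr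
  have hle : (2 * (η - γ) - β) * β ≤ (1 - γ) ^ 2 := by nlinarith [sq_nonneg (1 - γ - β)]
  have hγ_sq : (1 - γ) ^ 2 ≤ 1 := by nlinarith
  refine h.areaBound_of_or hT₀ one_pos ?_
  simp only [mul_one, one_pow]
  refine (hmdβ.trans (hle.trans hγ_sq)).lt_or_eq.imp_right fun heq => ⟨heq, ?_⟩
  obtain rfl : γ = 0 := by nlinarith
  obtain rfl : β = 1 := by nlinarith
  obtain rfl : η = 1 := by linarith
  rw [mul_one] at heq
  rw [dist_comm (T 1) (T 2)] at hT
  refine .of_dist_one_eq hV.pos (finRotate 3) (Equiv.swap 0 2) ?_ ?_ ?_ hlt hT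
  · change V 1 = T 2
    simp [h.one]
  · change V 2 = T 1
    simp [h.two]
  · change AffineMap.lineMap (V 1) (V 0) m = T 0
    have : V 0 - V 1 = (1 - ξ) • (T 0 - T 2) := by
      rw [h.zero, h.one]
      module
    rw [AffineMap.lineMap_apply_module', this, smul_smul, heq, h.one]
    module

lemma areaBound_of_apex_one (h : IsInscribed V T ξ η β γ)
    (hT : dist (T 1) (T 0) = dist (T 1) (T 2)) (hT₀ : doubleArea T ≠ 0) (hV : IsAdmissible m V) :
    AreaBound m V T := by
  have hne : dist (V 2) (V 1) ≠ dist (V 2) (V 0) := hV.scalene (Equiv.swap 0 2)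
  rcases hne.lt_or_gt with hlt | hlt
  · refine .of_comp (h.reverse.areaBound_of_apex_one_of_lt hT.symm ?_ (hV.comp _) ?_)
    · exact doubleArea_comp_ne_zero_iff.mpr hT₀
    · change dist (V 2) (V 1) < dist (V 0) (V 2)
      rwa [dist_comm (V 0)]
  · exact h.areaBound_of_apex_one_of_lt hT hT₀ hV (by rwa [dist_comm (V 1)])

end IsInscribed

lemma exists_isInscribed {V T : Fin 3 → Pt} (hV : doubleArea V ≠ 0)
    (h₀ : V 0 ∈ segment ℝ (T 0) (T 2)) (h₁ : V 1 ∈ segment ℝ (T 0) (T 2))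
    (h₂ : V 2 ∈ convexHull ℝ (Set.range T)) :
    ∃ (σ : Equiv.Perm (Fin 3)) (ξ η β γ : ℝ), IsInscribed (V ∘ σ) T ξ η β γ := by
  rw [segment_eq_image'] at h₀ h₁
  obtain ⟨ξ, ⟨hξ₀, hξ₁⟩, hξ⟩ := h₀
  obtain ⟨η, ⟨hη₀, hη₁⟩, hη⟩ := h₁
  obtain ⟨w, ⟨hw_nonneg, hw_sum⟩, hw⟩ := mem_convexHull_range.mp h₂
  rw [Fin.sum_univ_three] at hw_sum hw
  have htwo : V 2 = T 0 + w 1 • (T 1 - T 0) + w 2 • (T 2 - T 0) := by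
    rw [← hw, show w 0 = 1 - w 1 - w 2 by linarith]
    module
  have harea : doubleArea V = -((η - ξ) * w 1 * doubleArea T) := by
    simp only [doubleArea_eq, ← hξ, ← hη, htwo, PiLp.add_apply, PiLp.smul_apply, PiLp.sub_apply,
      smul_eq_mul]
    ring
  have hne : (η - ξ) * w 1 ≠ 0 := fun h => hV (by rw [harea, h, zero_mul, neg_zero])
  have hβ := (hw_nonneg 1).lt_of_ne' (right_ne_zero_of_mul hne)
  have hβγ : w 1 + w 2 ≤ 1 := by linarith [hw_nonneg 0]
  rcases (sub_ne_zero.mp (left_ne_zero_of_mul hne)).lt_or_gt with hlt | hlt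
  · exact ⟨Equiv.swap 0 1, η, ξ, w 1, w 2, hη.symm, hξ.symm, htwo, hη₀, hlt, hξ₁, hβ,
      hw_nonneg 2, hβγ⟩
  · exact ⟨1, ξ, η, w 1, w 2, hξ.symm, hη.symm, htwo, hξ₀, hlt, hη₁, hβ, hw_nonneg 2, hβγ⟩

/-- Some side of the triangle `T` contains two of the points `V k`. -/
def IsFlush {ι : Type*} (V : ι → Pt) (T : Fin 3 → Pt) : Prop :=
  ∃ i j k l, i ≠ j ∧ k ≠ l ∧ V k ∈ segment ℝ (T i) (T j) ∧ V l ∈ segment ℝ (T i) (T j)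

lemma exists_perm_apply_eq :
    ∀ i j k l : Fin 3, i ≠ j → k ≠ l → ∃ σ : Equiv.Perm (Fin 3), σ i = k ∧ σ j = l := by
  decide

lemma IsFlush.areaBound {m : ℝ} {V T : Fin 3 → Pt} (h : IsFlush V T) (hV : IsAdmissible m V)
    (hV₀ : doubleArea V ≠ 0) (hT₀ : doubleArea T ≠ 0)
    (hT : ∃ p, ∀ q r, q ≠ p → r ≠ p → dist (T p) (T q) = dist (T p) (T r))
    (hsub : ∀ i, V i ∈ convexHull ℝ (Set.range T)) : AreaBound m V T := by
  obtain ⟨p, hp⟩ := hT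
  obtain ⟨i, j, k, l, hpj, hij, hkl, hk, hl⟩ : ∃ i j k l, p ≠ j ∧ i ≠ j ∧ k ≠ l ∧
      V k ∈ segment ℝ (T i) (T j) ∧ V l ∈ segment ℝ (T i) (T j) := by
    obtain ⟨i, j, k, l, hij, hkl, hk, hl⟩ := h
    rcases eq_or_ne p j with rfl | hpj
    · rw [segment_symm] at hk hl
      exact ⟨p, i, k, l, hij.symm, hij.symm, hkl, hk, hl⟩
    · exact ⟨i, j, k, l, hpj, hij, hkl, hk, hl⟩
  obtain ⟨σ, rfl, rfl⟩ := exists_perm_apply_eq 0 1 k l (by decide) hkl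
  obtain ⟨τ, rfl, rfl⟩ := exists_perm_apply_eq 0 2 i j (by decide) hij
  obtain ⟨ρ, ξ, η, β, γ, hρ⟩ := exists_isInscribed (V := V ∘ σ) (T := T ∘ τ)
    (doubleArea_comp_ne_zero_iff.mpr hV₀) hk hl (by rw [convexHull_range_comp]; exact hsub _)
  refine .of_comp (σ := σ) (τ := τ) (.of_comp (σ := ρ) (τ := 1) ?_)
  obtain ⟨a, rfl⟩ := τ.surjective p
  have hT (q r) (hq : q ≠ a) (hr : r ≠ a) : dist (T (τ a)) (T (τ q)) = dist (T (τ a)) (T (τ r)) :=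
    hp _ _ (τ.injective.ne hq) (τ.injective.ne hr)
  have hTτ₀ : doubleArea (T ∘ τ) ≠ 0 := doubleArea_comp_ne_zero_iff.mpr hT₀
  have ha : a = 0 ∨ a = 1 := by
    have : a ≠ 2 := fun h => hpj (by rw [h])
    omega
  rcases ha with rfl | rfl
  · exact hρ.areaBound_of_apex_zero (hT 1 2 (by decide) (by decide)) hTτ₀ ((hV.comp σ).comp ρ)
  · exact hρ.areaBound_of_apex_one (hT 0 2 (by decide) (by decide)) hTτ₀ ((hV.comp σ).comp ρ)

/-! ### Rotating a circumscribed triangle -/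

section SupportSum

open Filter Topology

lemma eventually_forall_le_of_forall_lt {X κ : Type*} [TopologicalSpace X] [Finite κ]
    {f : κ → X → ℝ} {x : X} {k : κ} (hf : ∀ j, ContinuousAt (f j) x)
    (hk : ∀ j ≠ k, f j x < f k x) : ∀ᶠ y in 𝓝 x, ∀ j, f j y ≤ f k y := by
  refine eventually_all.mpr fun j => ?_
  rcases eq_or_ne j k with rfl | hj
  · exact .of_forall fun _ => le_rfl
  · exact ((hf j).eventually_lt (hf k) (hk j hj)).mono fun _ => le_of_lt

lemma mul_cos_add_mul_sin_nonpos_of_isLocalMin {a b φ : ℝ}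
    (h : IsLocalMin (fun ψ => a * cos ψ + b * sin ψ) φ) : a * cos φ + b * sin φ ≤ 0 := by
  obtain ⟨ε, hε, hmin⟩ := Metric.eventually_nhds_iff.mp h
  obtain ⟨δ, hδ_pos, hδ⟩ := exists_between (lt_min hε one_pos)
  obtain ⟨hδε, hδ₁⟩ := lt_min_iff.mp hδ
  have hadd := hmin (y := φ + δ) (by simpa [abs_of_pos hδ_pos] using hδε)
  have hsub := hmin (y := φ - δ) (by simpa [dist_eq_norm, abs_of_pos hδ_pos] using hδε)
  have hcos : cos δ < 1 := by
    rw [← cos_zero]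
    exact cos_lt_cos_of_nonneg_of_le_pi le_rfl (by linarith [pi_gt_three]) hδ_pos
  have hmean : (a * cos (φ + δ) + b * sin (φ + δ)) + (a * cos (φ - δ) + b * sin (φ - δ)) =
      2 * cos δ * (a * cos φ + b * sin φ) := by
    rw [cos_add, cos_sub, sin_add, sin_sub]
    ring
  nlinarith

variable {ι κ : Type*} [Fintype κ] [Nonempty κ]

/-- The support function, in the direction at angle `φ`, of the planar point set with coordinates
`(a j, b j)`. -/
def support (a b : κ → ℝ) (φ : ℝ) : ℝ :=
  Finset.univ.sup' Finset.univ_nonempty fun j => a j * cos φ + b j * sin φ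

lemma le_support (a b : κ → ℝ) (φ : ℝ) (j : κ) : a j * cos φ + b j * sin φ ≤ support a b φ :=
  Finset.le_sup' (fun j => a j * cos φ + b j * sin φ) (Finset.mem_univ j)

lemma exists_eq_support (a b : κ → ℝ) (φ : ℝ) : ∃ j, a j * cos φ + b j * sin φ = support a b φ := by
  obtain ⟨j, -, hj⟩ := Finset.exists_mem_eq_sup' Finset.univ_nonempty
    fun j => a j * cos φ + b j * sin φ
  exact ⟨j, hj.symm⟩

lemma continuous_support (a b : κ → ℝ) : Continuous (support a b) :=
  Continuous.finset_sup'_apply _ fun j _ => by fun_prop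

lemma periodic_support (a b : κ → ℝ) : Function.Periodic (support a b) (2 * π) :=
  fun φ => by simp [support]

variable [Fintype ι]

lemma exists_forall_sum_support_le (a b : ι → κ → ℝ) :
    ∃ φ, ∀ ψ, ∑ i, support (a i) (b i) φ ≤ ∑ i, support (a i) (b i) ψ := by
  have hcont : Continuous fun φ => ∑ i, support (a i) (b i) φ :=
    continuous_finsetSum _ fun i _ => continuous_support (a i) (b i)
  obtain ⟨φ, -, hφ⟩ := (isCompact_Icc (a := (0 : ℝ)) (b := 2 * π)).exists_isMinOn
    (Set.nonempty_Icc.mpr (by positivity)) hcont.continuousOn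
  refine ⟨φ, fun ψ => ?_⟩
  have hper : Function.Periodic (fun φ => ∑ i, support (a i) (b i) φ) (2 * π) := fun φ =>
    Finset.sum_congr rfl fun i _ => periodic_support (a i) (b i) φ
  obtain ⟨ψ', hψ', h⟩ := hper.exists_mem_Ico₀ (by positivity) ψ
  exact (hφ (Set.Ico_subset_Icc_self hψ')).trans h.ge

/- If no maximum were attained twice, then near `φ` the sum would be a single sinusoid, which has
no positive local minimum. -/
lemma exists_ne_eq_support_of_forall_sum_support_le {a b : ι → κ → ℝ} {φ : ℝ}
    (hpos : 0 < ∑ i, support (a i) (b i) φ)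
    (hmin : ∀ ψ, ∑ i, support (a i) (b i) φ ≤ ∑ i, support (a i) (b i) ψ) :
    ∃ i j k, j ≠ k ∧ a i j * cos φ + b i j * sin φ = support (a i) (b i) φ ∧
      a i k * cos φ + b i k * sin φ = support (a i) (b i) φ := by
  by_contra! hunique
  choose j hj using fun i => exists_eq_support (a i) (b i) φ
  have hlt (i l) (hl : l ≠ j i) :
      a i l * cos φ + b i l * sin φ < a i (j i) * cos φ + b i (j i) * sin φ :=
    (hj i).symm ▸ (le_support _ _ _ _).lt_of_ne (hunique i (j i) l hl.symm (hj i))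
  have hev : ∀ᶠ ψ in 𝓝 φ, ∀ i l,
      a i l * cos ψ + b i l * sin ψ ≤ a i (j i) * cos ψ + b i (j i) * sin ψ :=
    eventually_all.mpr fun i => eventually_forall_le_of_forall_lt
      (f := fun l ψ => a i l * cos ψ + b i l * sin ψ) (fun l => by fun_prop) (hlt i)
  have hsum (ψ) : (∑ i, a i (j i)) * cos ψ + (∑ i, b i (j i)) * sin ψ =
      ∑ i, (a i (j i) * cos ψ + b i (j i) * sin ψ) := by
    rw [Finset.sum_add_distrib, Finset.sum_mul, Finset.sum_mul]
  have hφ : (∑ i, a i (j i)) * cos φ + (∑ i, b i (j i)) * sin φ = ∑ i, support (a i) (b i) φ := by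
    rw [hsum]
    exact Finset.sum_congr rfl fun i _ => hj i
  refine (hφ ▸ hpos).not_ge (mul_cos_add_mul_sin_nonpos_of_isLocalMin ?_)
  filter_upwards [hev] with ψ hψ
  rw [hφ, hsum]
  exact (hmin ψ).trans (Finset.sum_le_sum fun i _ => Finset.sup'_le _ _ fun l _ => hψ i l)

end SupportSum

/-- The determinant of two vectors of the plane. -/
def cross (u v : Pt) : ℝ := u 0 * v 1 - u 1 * v 0

/-- The counterclockwise rotation of the plane about the origin by the angle `φ`. -/
def rotate (φ : ℝ) (u : Pt) : Pt := !₂[cos φ * u 0 - sin φ * u 1, sin φ * u 0 + cos φ * u 1]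

lemma rotate_zero (u : Pt) : rotate 0 u = u := by
  ext i
  fin_cases i <;> simp [rotate]

lemma dist_rotate_rotate (φ : ℝ) (u v : Pt) : dist (rotate φ u) (rotate φ v) = dist u v := by
  simp only [EuclideanSpace.dist_eq, Real.dist_eq, sq_abs, Fin.sum_univ_two, rotate,
    Matrix.cons_val_zero, Matrix.cons_val_one]
  congr 1
  linear_combination ((u 0 - v 0) ^ 2 + (u 1 - v 1) ^ 2) * cos_sq_add_sin_sq φ

lemma doubleArea_rotate (φ : ℝ) (T : Fin 3 → Pt) :
    doubleArea (fun i => rotate φ (T i)) = doubleArea T := by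
  simp only [doubleArea_eq, rotate, Matrix.cons_val_zero, Matrix.cons_val_one]
  linear_combination ((T 1 0 - T 0 0) * (T 2 1 - T 0 1) - (T 1 1 - T 0 1) * (T 2 0 - T 0 0)) *
    cos_sq_add_sin_sq φ

lemma cross_rotate_sub_rotate (φ : ℝ) (u v w : Pt) :
    cross u (rotate φ v - rotate φ w) = cross u (v - w) * cos φ + inner ℝ u (v - w) * sin φ := by
  simp only [cross, rotate, PiLp.inner_apply, Fin.sum_univ_two, PiLp.sub_apply,
    Matrix.cons_val_zero, Matrix.cons_val_one, RCLike.inner_apply, conj_trivial]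
  ring

lemma doubleArea_add_smul (v : Pt) (r : ℝ) (T : Fin 3 → Pt) :
    doubleArea (fun i => v + r • T i) = r ^ 2 * doubleArea T := by
  simp only [doubleArea_eq, PiLp.add_apply, PiLp.smul_apply, smul_eq_mul]
  ring

lemma dist_add_smul (v : Pt) {r : ℝ} (hr : 0 ≤ r) (X Y : Pt) :
    dist (v + r • X) (v + r • Y) = r * dist X Y := by
  rw [dist_add_left, dist_smul₀, norm_of_nonneg hr]

lemma sum_cross_apply_sub (T : Fin 3 → Pt) :
    ∑ i, cross (T i) (T (i + 1) - T i) = doubleArea T := by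
  simp only [cross, PiLp.sub_apply, Fin.sum_univ_three, zero_add, Fin.reduceAdd, doubleArea_eq]
  ring

lemma sum_cross_sub (u : Pt) (T : Fin 3 → Pt) : ∑ i, cross u (T (i + 1) - T i) = 0 := by
  simp only [cross, PiLp.sub_apply, Fin.sum_univ_three, zero_add, Fin.reduceAdd]
  ring

lemma exists_sum_smul_eq {T : Fin 3 → Pt} (hT : doubleArea T ≠ 0) (X : Pt) :
    ∃ w : Fin 3 → ℝ, ∑ i, w i = 1 ∧ ∑ i, w i • T i = X := by
  have hind := affineIndependent_iff_doubleArea_ne_zero.mpr hT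
  let b : AffineBasis (Fin 3) ℝ Pt :=
    ⟨T, hind, hind.affineSpan_eq_top_iff_card_eq_finrank_add_one.mpr (by simp)⟩
  exact ⟨fun i => b.coord i X, b.sum_coord_apply_eq_one X, b.linear_combination_coord_eq_self X⟩

lemma mul_doubleArea_eq {T : Fin 3 → Pt} {w : Fin 3 → ℝ} (hw : ∑ i, w i = 1) (i : Fin 3) :
    w (i + 2) * doubleArea T =
      cross (T i) (T (i + 1) - T i) - cross (∑ j, w j • T j) (T (i + 1) - T i) := by
  have hcross := congr_arg (· * cross (T i) (T (i + 1) - T i)) hw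
  simp only [Fin.sum_univ_three, cross, doubleArea_eq, PiLp.add_apply, PiLp.smul_apply,
    PiLp.sub_apply, smul_eq_mul, one_mul] at hcross ⊢
  fin_cases i <;> simp only [Fin.zero_eta, Fin.mk_one, Fin.reduceFinMk, Fin.reduceAdd,
    zero_add] at hcross ⊢ <;> linear_combination hcross

lemma mem_convexHull_range_iff_cross_le {T : Fin 3 → Pt} (hT : 0 < doubleArea T) {X : Pt} :
    X ∈ convexHull ℝ (Set.range T) ↔
      ∀ i, cross X (T (i + 1) - T i) ≤ cross (T i) (T (i + 1) - T i) := by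
  obtain ⟨w, hw, rfl⟩ := exists_sum_smul_eq hT.ne' X
  refine ⟨fun hX i => ?_, fun h => mem_convexHull_range.mpr ⟨w, ⟨fun j => ?_, hw⟩, rfl⟩⟩
  · obtain ⟨w', ⟨hw'_nonneg, hw'⟩, hX⟩ := mem_convexHull_range.mp hX
    rw [← hX, ← sub_nonneg, ← mul_doubleArea_eq hw']
    exact mul_nonneg (hw'_nonneg _) hT.le
  · have := sub_nonneg.mpr (h (j + 1))
    rw [← mul_doubleArea_eq hw, add_assoc] at this
    simpa using nonneg_of_mul_nonneg_left this hT

lemma mem_segment_of_cross_eq {T : Fin 3 → Pt} (hT : 0 < doubleArea T) {X : Pt}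
    (hX : X ∈ convexHull ℝ (Set.range T)) {i : Fin 3}
    (hi : cross X (T (i + 1) - T i) = cross (T i) (T (i + 1) - T i)) :
    X ∈ segment ℝ (T i) (T (i + 1)) := by
  obtain ⟨w, ⟨hw_nonneg, hw⟩, rfl⟩ := mem_convexHull_range.mp hX
  have hwi : w (i + 2) = 0 := by
    have := mul_doubleArea_eq (T := T) hw i
    rw [hi, sub_self] at this
    exact (mul_eq_zero_iff_right hT.ne').mp this
  refine ⟨w i, w (i + 1), hw_nonneg _, hw_nonneg _, ?_, ?_⟩
  · rw [← hw]
    fin_cases i <;> simp_all [Fin.sum_univ_three, add_comm]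
  · fin_cases i <;> simp_all [Fin.sum_univ_three, add_comm]

lemma eq_of_forall_cross_eq {T : Fin 3 → Pt} (hT : doubleArea T ≠ 0) {X Y : Pt}
    (h : ∀ i, cross X (T (i + 1) - T i) = cross Y (T (i + 1) - T i)) : X = Y := by
  obtain ⟨w, hw, rfl⟩ := exists_sum_smul_eq hT X
  obtain ⟨w', hw', rfl⟩ := exists_sum_smul_eq hT Y
  have hww' (i : Fin 3) : w (i + 2) = w' (i + 2) :=
    mul_right_cancel₀ hT (by rw [mul_doubleArea_eq hw, mul_doubleArea_eq hw', h])
  congr! 2 with i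
  simpa [add_assoc] using hww' (i + 1)

lemma exists_forall_cross_add_smul_eq {T : Fin 3 → Pt} (hT : doubleArea T ≠ 0) {h : Fin 3 → ℝ}
    {r : ℝ} (hr : r * doubleArea T = ∑ i, h i) :
    ∃ v, ∀ i, cross (v + r • T i) (T (i + 1) - T i) = h i := by
  obtain ⟨a, ha⟩ : ∃ a, a * doubleArea T = h 0 - r * cross (T 0) (T 1 - T 0) :=
    ⟨_, div_mul_cancel₀ _ hT⟩
  obtain ⟨b, hb⟩ : ∃ b, b * doubleArea T = h 1 - r * cross (T 1) (T 2 - T 1) :=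
    ⟨_, div_mul_cancel₀ _ hT⟩
  refine ⟨b • (T 1 - T 0) - a • (T 2 - T 1), fun i => ?_⟩
  rw [Fin.sum_univ_three] at hr
  rw [doubleArea_eq] at ha hb hr
  simp only [cross, PiLp.add_apply, PiLp.smul_apply, PiLp.sub_apply, smul_eq_mul] at ha hb ⊢
  fin_cases i <;> simp only [Fin.zero_eta, Fin.mk_one, Fin.reduceFinMk, Fin.reduceAdd, zero_add]
  · linear_combination ha
  · linear_combination hb
  · linear_combination hr - ha - hb

lemma sum_pos_of_forall_cross_le {T : Fin 3 → Pt} (hT : doubleArea T ≠ 0) {h : Fin 3 → ℝ}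
    {X Y : Pt} (hXY : X ≠ Y) (hX : ∀ i, cross X (T (i + 1) - T i) ≤ h i)
    (hY : ∀ i, cross Y (T (i + 1) - T i) ≤ h i) : 0 < ∑ i, h i := by
  have hsum (Z) (hZ : ∀ i, cross Z (T (i + 1) - T i) ≤ h i) :
      0 ≤ ∑ i, h i ∧ (0 = ∑ i, h i → ∀ i, cross Z (T (i + 1) - T i) = h i) := by
    rw [← sum_cross_sub Z T]
    exact ⟨Finset.sum_le_sum fun i _ => hZ i, fun h0 i =>
      (Finset.sum_eq_sum_iff_of_le fun i _ => hZ i).mp h0 i (Finset.mem_univ i)⟩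
  refine (hsum X hX).1.lt_of_ne fun h0 => hXY (eq_of_forall_cross_eq hT fun i => ?_)
  rw [(hsum X hX).2 h0, (hsum Y hY).2 h0]

lemma exists_circumscribed {ι : Type*} {V : ι → Pt} {T : Fin 3 → Pt} (hT : 0 < doubleArea T)
    {h : Fin 3 → ℝ} (hV : ∀ j i, cross (V j) (T (i + 1) - T i) ≤ h i) {r : ℝ} (hr : 0 < r)
    (hrT : r * doubleArea T = ∑ i, h i) :
    ∃ v, (∀ j, V j ∈ convexHull ℝ (Set.range fun i => v + r • T i)) ∧
      ∀ i j, cross (V j) (T (i + 1) - T i) = h i →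
        V j ∈ segment ℝ (v + r • T i) (v + r • T (i + 1)) := by
  obtain ⟨v, hv⟩ := exists_forall_cross_add_smul_eq hT.ne' hrT
  have hT' : 0 < doubleArea fun i => v + r • T i := by
    rw [doubleArea_add_smul]
    positivity
  have hcross (X : Pt) (i : Fin 3) :
      cross X ((v + r • T (i + 1)) - (v + r • T i)) = r * cross X (T (i + 1) - T i) := by
    simp only [cross, PiLp.sub_apply, PiLp.add_apply, PiLp.smul_apply, smul_eq_mul]
    ring
  have hmem (j) : V j ∈ convexHull ℝ (Set.range fun i => v + r • T i) := by
    refine (mem_convexHull_range_iff_cross_le hT').mpr fun i => ?_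
    rw [hcross, hcross, hv]
    exact mul_le_mul_of_nonneg_left (hV j i) hr.le
  refine ⟨v, hmem, fun i j hij => mem_segment_of_cross_eq hT' (hmem j) ?_⟩
  rw [hcross, hcross, hv, hij]

section SideSupport

variable {ι : Type*} [Fintype ι] [Nonempty ι] {V : ι → Pt} {T : Fin 3 → Pt}

/-- The support function of the point set `V` in the direction of the outer normal of the side from
`T i` to `T (i + 1)`, rotated by `φ` and scaled by the length of that side. -/
def sideSupport (V : ι → Pt) (T : Fin 3 → Pt) (φ : ℝ) (i : Fin 3) : ℝ :=
  support (fun j => cross (V j) (T (i + 1) - T i)) (fun j => inner ℝ (V j) (T (i + 1) - T i)) φ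

lemma cross_le_sideSupport (V : ι → Pt) (T : Fin 3 → Pt) (φ : ℝ) (j : ι) (i : Fin 3) :
    cross (V j) (rotate φ (T (i + 1)) - rotate φ (T i)) ≤ sideSupport V T φ i := by
  rw [cross_rotate_sub_rotate]
  exact le_support (fun j => cross (V j) (T (i + 1) - T i))
    (fun j => inner ℝ (V j) (T (i + 1) - T i)) φ j

lemma sum_sideSupport_pos (hV : ∃ j k, V j ≠ V k) (hT : doubleArea T ≠ 0) (φ : ℝ) :
    0 < ∑ i, sideSupport V T φ i := by
  obtain ⟨j, k, hjk⟩ := hV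
  refine sum_pos_of_forall_cross_le (T := fun i => rotate φ (T i)) ?_ hjk
    (cross_le_sideSupport V T φ j) (cross_le_sideSupport V T φ k)
  rwa [doubleArea_rotate]

lemma sideSupport_zero_le (hT : 0 < doubleArea T) (hsub : ∀ j, V j ∈ convexHull ℝ (Set.range T))
    (i : Fin 3) : sideSupport V T 0 i ≤ cross (T i) (T (i + 1) - T i) := by
  refine Finset.sup'_le Finset.univ_nonempty _ fun j _ => ?_
  simpa using (mem_convexHull_range_iff_cross_le hT).mp (hsub j) i

lemma exists_ne_cross_eq_sideSupport (hV : ∃ j k, V j ≠ V k) (hT : doubleArea T ≠ 0) {φ : ℝ}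
    (hφ : ∀ ψ, ∑ i, sideSupport V T φ i ≤ ∑ i, sideSupport V T ψ i) :
    ∃ i j k, j ≠ k ∧
      cross (V j) (rotate φ (T (i + 1)) - rotate φ (T i)) = sideSupport V T φ i ∧
      cross (V k) (rotate φ (T (i + 1)) - rotate φ (T i)) = sideSupport V T φ i := by
  simp only [cross_rotate_sub_rotate]
  exact exists_ne_eq_support_of_forall_sum_support_le (sum_sideSupport_pos hV hT φ) hφ

lemma isFlush_of_forall_doubleArea_le (hV : ∃ j k, V j ≠ V k) (hT : 0 < doubleArea T)
    (hsub : ∀ j, V j ∈ convexHull ℝ (Set.range T))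
    (hmin : ∀ ψ, doubleArea T ≤ ∑ i, sideSupport V T ψ i) : IsFlush V T := by
  have hle := sideSupport_zero_le hT hsub
  have hsum : ∑ i, sideSupport V T 0 i = ∑ i, cross (T i) (T (i + 1) - T i) :=
    (Finset.sum_le_sum fun i _ => hle i).antisymm ((sum_cross_apply_sub T).trans_le (hmin 0))
  have hcross (i) : sideSupport V T 0 i = cross (T i) (T (i + 1) - T i) :=
    (Finset.sum_eq_sum_iff_of_le fun i _ => hle i).mp hsum i (Finset.mem_univ i)
  obtain ⟨i, j, k, hjk, hj, hk⟩ := exists_ne_cross_eq_sideSupport hV hT.ne' (φ := 0)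
    (by rwa [hsum, sum_cross_apply_sub])
  rw [rotate_zero, rotate_zero, hcross] at hj hk
  exact ⟨i, i + 1, j, k, by simp, hjk, mem_segment_of_cross_eq hT (hsub j) hj,
    mem_segment_of_cross_eq hT (hsub k) hk⟩

end SideSupport

/- Rotating the directions of the sides of `T`, the similarity ratio of the triangle circumscribed
about `V` is proportional to `∑ i, sideSupport V T φ i`, and a position minimizing it is flush. -/
lemma exists_lt_one_isFlush_of_not_isFlush {ι : Type*} [Finite ι] {V : ι → Pt} {T : Fin 3 → Pt}
    (hV : ∃ j k, V j ≠ V k) (hT : 0 < doubleArea T)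
    (hsub : ∀ j, V j ∈ convexHull ℝ (Set.range T)) (hflush : ¬ IsFlush V T) :
    ∃ (r φ : ℝ) (v : Pt), 0 < r ∧ r < 1 ∧
      (∀ j, V j ∈ convexHull ℝ (Set.range fun i => v + r • rotate φ (T i))) ∧
      IsFlush V fun i => v + r • rotate φ (T i) := by
  have := Fintype.ofFinite ι
  have : Nonempty ι := ⟨hV.choose⟩
  obtain ⟨φ, hφ⟩ : ∃ φ, ∀ ψ, ∑ i, sideSupport V T φ i ≤ ∑ i, sideSupport V T ψ i :=
    exists_forall_sum_support_le (fun i j => cross (V j) (T (i + 1) - T i)) _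
  have hlt : ∑ i, sideSupport V T φ i < doubleArea T := by
    by_contra! hge
    exact hflush (isFlush_of_forall_doubleArea_le hV hT hsub fun ψ => hge.trans (hφ ψ))
  obtain ⟨r, hr⟩ : ∃ r, r * doubleArea T = ∑ i, sideSupport V T φ i :=
    ⟨_, div_mul_cancel₀ _ hT.ne'⟩
  have hr₀ : 0 < r := pos_of_mul_pos_left (hr ▸ sum_sideSupport_pos hV hT.ne' φ) hT.le
  have hr₁ : r < 1 := by
    rwa [← hr, mul_lt_iff_lt_one_left hT] at hlt
  obtain ⟨v, hmem, hseg⟩ := exists_circumscribed (T := fun i => rotate φ (T i))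
    (by rwa [doubleArea_rotate]) (cross_le_sideSupport V T φ) hr₀ (by rwa [doubleArea_rotate])
  obtain ⟨i, j, k, hjk, hj, hk⟩ := exists_ne_cross_eq_sideSupport hV hT.ne' hφ
  exact ⟨r, φ, v, hr₀, hr₁, hmem, i, i + 1, j, k, by simp, hjk, hseg i j hj, hseg i k hk⟩

/-! ### Minimal isosceles containers -/

lemma isIsosceles_iff_exists_apex {T : Fin 3 → Pt} : IsIsosceles (T 0) (T 1) (T 2) ↔
    ∃ p, ∀ q r, q ≠ p → r ≠ p → dist (T p) (T q) = dist (T p) (T r) := by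
  simp [IsIsosceles, Fin.exists_fin_succ, Fin.forall_fin_succ]
  grind [dist_comm]

lemma doubleArea_comp_swap (T : Fin 3 → Pt) :
    doubleArea (T ∘ Equiv.swap 0 1) = -doubleArea T := by
  simp only [doubleArea_eq, Function.comp_apply, Equiv.swap_apply_left, Equiv.swap_apply_right,
    Equiv.swap_apply_of_ne_of_ne (a := 0) (b := 1) (x := (2 : Fin 3)) (by decide) (by decide)]
  ring

lemma areaBound_of_isIsosceles {m : ℝ} {V T : Fin 3 → Pt} (hV : IsAdmissible m V)
    (hV₀ : doubleArea V ≠ 0) (hT₀ : doubleArea T ≠ 0)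
    (hT : ∃ p, ∀ q r, q ≠ p → r ≠ p → dist (T p) (T q) = dist (T p) (T r))
    (hsub : ∀ i, V i ∈ convexHull ℝ (Set.range T)) : AreaBound m V T := by
  wlog hpos : 0 < doubleArea T generalizing T
  · refine .of_comp (σ := 1) (τ := Equiv.swap 0 1) (this ?_ ?_ ?_ ?_)
    · exact doubleArea_comp_ne_zero_iff.mpr hT₀
    · obtain ⟨p, hp⟩ := hT
      refine ⟨Equiv.swap 0 1 p, fun q r hq hr => ?_⟩
      simp only [Function.comp_apply, Equiv.swap_apply_self]
      exact hp _ _ (by rwa [ne_eq, Equiv.swap_apply_eq_iff])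
        (by rwa [ne_eq, Equiv.swap_apply_eq_iff])
    · simpa only [convexHull_range_comp] using hsub
    · rw [doubleArea_comp_swap]
      exact neg_pos.mpr (hT₀.lt_of_le (not_lt.mp hpos))
  by_cases hflush : IsFlush V T
  · exact hflush.areaBound hV hV₀ hT₀ hT hsub
  have hne : V 0 ≠ V 1 :=
    (affineIndependent_iff_doubleArea_ne_zero.mpr hV₀).injective.ne zero_ne_one
  obtain ⟨r, φ, v, hr₀, hr₁, hmem, hflush'⟩ :=
    exists_lt_one_isFlush_of_not_isFlush ⟨0, 1, hne⟩ hpos hsub hflush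
  have harea : doubleArea (fun i => v + r • rotate φ (T i)) = r ^ 2 * doubleArea T := by
    rw [doubleArea_add_smul, doubleArea_rotate]
  have hbound : AreaBound m V fun i => v + r • rotate φ (T i) := by
    refine hflush'.areaBound hV hV₀ ?_ ?_ hmem
    · rw [harea]
      positivity
    · simpa only [dist_add_smul v hr₀.le, dist_rotate_rotate, mul_right_inj' hr₀.ne'] using hT
  have hle : m * |doubleArea V| ≤ r ^ 2 * |doubleArea T| := by
    rw [AreaBound, harea, abs_mul, abs_of_pos (pow_pos hr₀ 2)] at hbound
    exact hbound.elim le_of_lt fun h => h.1.le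
  exact .inl (hle.trans_lt (mul_lt_of_lt_one_left (abs_pos.mpr hT₀)
    (pow_lt_one₀ hr₀.le hr₁ two_ne_zero)))

lemma tri_subset_tri_iff {V : Fin 3 → Pt} {S P R : Pt} :
    tri (V 0) (V 1) (V 2) ⊆ tri S P R ↔ ∀ i, V i ∈ convexHull ℝ (Set.range ![S, P, R]) := by
  have hSPR : tri S P R = convexHull ℝ (Set.range ![S, P, R]) := tri_eq_convexHull_range ![S, P, R]
  rw [hSPR, tri_eq_convexHull_range V, (convex_convexHull ℝ _).convexHull_subset_iff,
    Set.range_subset_iff]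

lemma IsIsoscelesContainer.areaBound {m : ℝ} {V : Fin 3 → Pt} {S P R : Pt} (hV : IsAdmissible m V)
    (hV₀ : doubleArea V ≠ 0) (h : IsIsoscelesContainer (V 0) (V 1) (V 2) S P R) :
    AreaBound m V ![S, P, R] := by
  refine areaBound_of_isIsosceles hV hV₀ (affineIndependent_iff_doubleArea_ne_zero.mp h.1) ?_
    (tri_subset_tri_iff.mp h.2.2)
  exact isIsosceles_iff_exists_apex.mp h.2.1

section Minimal

variable {m : ℝ} {V : Fin 3 → Pt} {K : Set Pt}

lemma tri_subset_tri_lineMap (A B C : Pt) {m : ℝ} (hm : 1 ≤ m) :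
    tri A B C ⊆ tri A B (AffineMap.lineMap A C m) := by
  have hm₀ : 0 < m := one_pos.trans_le hm
  have hC : C = AffineMap.lineMap A (AffineMap.lineMap A C m) m⁻¹ := by
    rw [AffineMap.lineMap_lineMap_right, inv_mul_cancel₀ hm₀.ne', AffineMap.lineMap_apply_one]
  have hsegment : C ∈ segment ℝ A (AffineMap.lineMap A C m) := by
    rw [segment_eq_image_lineMap]
    exact ⟨m⁻¹, ⟨by positivity, inv_le_one_of_one_le₀ hm⟩, hC.symm⟩
  refine convexHull_min ?_ (convex_convexHull ℝ _)
  rintro X (rfl | rfl | rfl)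
  · exact subset_convexHull ℝ _ (by simp)
  · exact subset_convexHull ℝ _ (by simp)
  · exact segment_subset_convexHull (by simp) (by simp) hsegment

lemma isIsoscelesContainer_stretch (hV : doubleArea V ≠ 0) (hm : 1 < m)
    (h : m * dist (V 0) (V 2) = dist (V 0) (V 1) ∨ m * dist (V 0) (V 2) ^ 2 =
      dist (V 0) (V 1) ^ 2 + dist (V 0) (V 2) ^ 2 - dist (V 1) (V 2) ^ 2) :
    IsIsoscelesContainer (V 0) (V 1) (V 2) (stretch m V 0) (stretch m V 1) (stretch m V 2) := by
  have hm₀ : 0 < m := one_pos.trans hm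
  refine ⟨?_, ?_, tri_subset_tri_lineMap _ _ _ hm.le⟩
  · refine (affineIndependent_iff_doubleArea_ne_zero (T := stretch m V)).mpr ?_
    rw [doubleArea_stretch]
    exact mul_ne_zero hm₀.ne' hV
  · rw [← dist_stretch_zero hm₀, ← dist_stretch_one hm₀] at h
    rcases h with h | h
    · exact .inr (.inl ((dist_comm _ _).trans h))
    · exact .inr (.inr h.symm)

lemma IsIsoscelesContainer.of_comp {S P R : Pt} (σ : Equiv.Perm (Fin 3))
    (h : IsIsoscelesContainer (V (σ 0)) (V (σ 1)) (V (σ 2)) S P R) :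
    IsIsoscelesContainer (V 0) (V 1) (V 2) S P R := by
  have hperm : tri (V (σ 0)) (V (σ 1)) (V (σ 2)) = tri (V 0) (V 1) (V 2) := by
    rw [tri_eq_convexHull_range V, ← convexHull_range_comp V σ]
    exact tri_eq_convexHull_range (V ∘ σ)
  exact ⟨h.1, h.2.1, hperm ▸ h.2.2⟩

lemma IsSharp.exists_isIsoscelesContainer (hV : doubleArea V ≠ 0) (h : IsSharp m V K) :
    ∃ T : Fin 3 → Pt, IsIsoscelesContainer (V 0) (V 1) (V 2) (T 0) (T 1) (T 2) ∧
      |doubleArea T| = m * |doubleArea V| ∧ tri (T 0) (T 1) (T 2) = K := by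
  obtain ⟨σ, rfl, h⟩ := h
  have hσ : 0 < dist (V (σ 0)) (V (σ 2)) := dist_pos.mpr fun heq =>
    absurd (σ.injective ((affineIndependent_iff_doubleArea_ne_zero.mpr hV).injective heq))
      (by decide)
  have hm : 1 < m := by
    rcases h with ⟨hlt, h⟩ | ⟨hlt, h⟩
    · rwa [← h, lt_mul_iff_one_lt_left hσ] at hlt
    · refine (lt_mul_iff_one_lt_left (pow_pos hσ 2)).mp ?_
      rw [h]
      linarith [pow_lt_pow_left₀ hlt dist_nonneg two_ne_zero]
  refine ⟨stretch m (V ∘ σ), ?_, ?_, tri_eq_convexHull_range _⟩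
  · exact .of_comp σ (isIsoscelesContainer_stretch (doubleArea_comp_ne_zero_iff.mpr hV) hm
      (h.imp And.right And.right))
  · rw [doubleArea_stretch, abs_mul, abs_doubleArea_comp, abs_of_pos (one_pos.trans hm)]

lemma IsAdmissible.isMinIsoscelesContainer_iff_isSharp (hV : IsAdmissible m V)
    (hV₀ : doubleArea V ≠ 0) (hsharp : ∃ K, IsSharp m V K) :
    (∃ S P R, IsMinIsoscelesContainer (V 0) (V 1) (V 2) S P R ∧ tri S P R = K) ↔
      IsSharp m V K := by
  obtain ⟨κ, hκ, harea⟩ := exists_volume_convexHull_range_eq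
  have htriArea (T : Fin 3 → Pt) : triArea (T 0) (T 1) (T 2) = κ * |doubleArea T| := by
    rw [triArea, tri_eq_convexHull_range, harea]
  constructor
  · rintro ⟨S, P, R, ⟨hcontainer, hmin⟩, rfl⟩
    obtain ⟨K₀, hK₀⟩ := hsharp
    obtain ⟨T₀, hT₀, hT₀_area, -⟩ := hK₀.exists_isIsoscelesContainer hV₀
    have hle : κ * |doubleArea ![S, P, R]| ≤ κ * (m * |doubleArea V|) := by
      rw [← hT₀_area, ← htriArea, ← htriArea]
      exact hmin _ _ _ hT₀
    rcases hcontainer.areaBound hV hV₀ with hlt | ⟨-, h⟩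
    · exact absurd (le_of_mul_le_mul_left hle hκ) hlt.not_ge
    · rwa [← tri_eq_convexHull_range] at h
  · intro hK
    obtain ⟨T, hT, hT_area, rfl⟩ := hK.exists_isIsoscelesContainer hV₀
    refine ⟨T 0, T 1, T 2, ⟨hT, fun S P R h => ?_⟩, rfl⟩
    have hle : m * |doubleArea V| ≤ |doubleArea ![S, P, R]| :=
      (h.areaBound hV hV₀).elim le_of_lt fun h => h.1.le
    rw [htriArea, hT_area]
    exact (mul_le_mul_of_nonneg_left hle hκ.le).trans_eq (htriArea ![S, P, R]).symm

end Minimal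

section Candidates

variable {A B C : Pt} {m : ℝ}

lemma perm_fin_three_cases : ∀ σ : Equiv.Perm (Fin 3),
    σ 0 = 0 ∧ σ 1 = 1 ∧ σ 2 = 2 ∨ σ 0 = 0 ∧ σ 1 = 2 ∧ σ 2 = 1 ∨ σ 0 = 1 ∧ σ 1 = 0 ∧ σ 2 = 2 ∨
      σ 0 = 1 ∧ σ 1 = 2 ∧ σ 2 = 0 ∨ σ 0 = 2 ∧ σ 1 = 0 ∧ σ 2 = 1 ∨ σ 0 = 2 ∧ σ 1 = 1 ∧ σ 2 = 0 := by
  decide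

lemma mul_sq_lt_add_sub_of_lt {a b c m : ℝ} (ha : 0 < a) (hab : a < b) (hbc : b < c) (hm : 0 < m)
    (h₁ : m * b ≤ c) (h₃ : m * c ^ 2 ≤ b ^ 2 + c ^ 2 - a ^ 2) :
    m * a ^ 2 < c ^ 2 + a ^ 2 - b ^ 2 ∧ m * b ^ 2 < c ^ 2 + b ^ 2 - a ^ 2 := by
  constructor
  · have hb : 0 < b := ha.trans hab
    have h : 0 < (c - b) * (b * (c + b) - a ^ 2) := mul_pos (by linarith) (by nlinarith)
    have h' := mul_le_mul_of_nonneg_right h₁ (sq_nonneg a)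
    refine lt_of_mul_lt_mul_left ?_ hb.le
    linarith
  · have h : b ^ 2 < c ^ 2 := by nlinarith
    have h' := mul_lt_mul_of_pos_left h hm
    linarith

lemma isAdmissible_iff_of_dist_lt (ha : 0 < dist B C) (hab : dist B C < dist C A)
    (hbc : dist C A < dist A B) :
    IsAdmissible m ![A, B, C] ↔ 0 < m ∧ m * dist C A ≤ dist A B ∧ m * dist B C ≤ dist C A ∧
      m * dist A B ^ 2 ≤ dist C A ^ 2 + dist A B ^ 2 - dist B C ^ 2 := by
  constructor
  · intro h
    have h₁ : dist A C < dist A B → m * dist A C ≤ dist A B := h.mul_dist_le 1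
    have h₂ : dist C B < dist C A → m * dist C B ≤ dist C A := h.mul_dist_le (finRotate 3).symm
    have h₃ : dist C B < dist A C → m * dist A B ^ 2 ≤ dist A C ^ 2 + dist A B ^ 2 - dist C B ^ 2 :=
      h.mul_dist_sq_le (Equiv.swap 1 2)
    rw [dist_comm A C] at h₁ h₃
    rw [dist_comm C B] at h₂ h₃
    exact ⟨h.pos, h₁ hbc, h₂ hab, h₃ hab⟩
  · rintro ⟨hm, h₁, h₂, h₃⟩
    obtain ⟨h₄, h₅⟩ := mul_sq_lt_add_sub_of_lt ha hab hbc hm h₁ h₃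
    refine ⟨hm, by nlinarith, ?_, ?_, ?_⟩
    all_goals
      intro σ
      obtain ⟨h0, h1, h2⟩ | ⟨h0, h1, h2⟩ | ⟨h0, h1, h2⟩ | ⟨h0, h1, h2⟩ | ⟨h0, h1, h2⟩ |
        ⟨h0, h1, h2⟩ := perm_fin_three_cases σ <;>
        simp only [h0, h1, h2, Matrix.cons_val, dist_comm A C, dist_comm B A, dist_comm C B] <;>
        intro h <;> linarith

lemma IsAdmissible.isSharp_iff_of_dist_lt {K : Set Pt} (h : IsAdmissible m ![A, B, C])
    (ha : 0 < dist B C) (hab : dist B C < dist C A) (hbc : dist C A < dist A B) :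
    IsSharp m ![A, B, C] K ↔
      m * dist C A = dist A B ∧ K = tri A B (AffineMap.lineMap A C m) ∨
      m * dist B C = dist C A ∧ K = tri C A (AffineMap.lineMap C B m) ∨
      m * dist A B ^ 2 = dist C A ^ 2 + dist A B ^ 2 - dist B C ^ 2 ∧
        K = tri A C (AffineMap.lineMap A B m) := by
  obtain ⟨hm, h₁, h₂, h₃⟩ := (isAdmissible_iff_of_dist_lt ha hab hbc).mp h
  obtain ⟨h₄, h₅⟩ := mul_sq_lt_add_sub_of_lt ha hab hbc hm h₁ h₃
  have htri (X Y Z : Pt) : tri X Y Z = convexHull ℝ (Set.range ![X, Y, Z]) :=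
    tri_eq_convexHull_range ![X, Y, Z]
  simp only [IsSharp, stretch, htri]
  constructor
  · rintro ⟨σ, rfl, h⟩
    obtain ⟨h0, h1, h2⟩ | ⟨h0, h1, h2⟩ | ⟨h0, h1, h2⟩ | ⟨h0, h1, h2⟩ | ⟨h0, h1, h2⟩ |
      ⟨h0, h1, h2⟩ := perm_fin_three_cases σ <;>
      simp only [Function.comp_apply, h0, h1, h2, Matrix.cons_val, dist_comm A C, dist_comm B A,
        dist_comm C B] at h ⊢ <;>
      grind
  · rintro (⟨h, rfl⟩ | ⟨h, rfl⟩ | ⟨h, rfl⟩)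
    · exact ⟨1, rfl, .inl ⟨(dist_comm A C).trans_lt hbc, by rwa [← dist_comm A C] at h⟩⟩
    · exact ⟨(finRotate 3).symm, rfl, .inl ⟨(dist_comm C B).trans_lt hab,
        by rwa [← dist_comm C B] at h⟩⟩
    · refine ⟨Equiv.swap 1 2, rfl, .inr ?_⟩
      change dist C B < dist A C ∧ m * dist A B ^ 2 = dist A C ^ 2 + dist A B ^ 2 - dist C B ^ 2
      rw [dist_comm C B, dist_comm A C]
      exact ⟨hab, h⟩

lemma exists_isAdmissible_isSharp (ha : 0 < dist B C) (hab : dist B C < dist C A)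
    (hbc : dist C A < dist A B) :
    ∃ m, IsAdmissible m ![A, B, C] ∧ ∃ K, IsSharp m ![A, B, C] K := by
  have hb := ha.trans hab
  have hc := hb.trans hbc
  have hpos : 0 < dist C A ^ 2 + dist A B ^ 2 - dist B C ^ 2 := by nlinarith
  set r₁ := dist A B / dist C A with hr₁
  set r₂ := dist C A / dist B C with hr₂
  set r₃ := (dist C A ^ 2 + dist A B ^ 2 - dist B C ^ 2) / dist A B ^ 2 with hr₃
  obtain ⟨m, hm, hm₁, hm₂, hm₃, hm_eq⟩ :
      ∃ m, 0 < m ∧ m ≤ r₁ ∧ m ≤ r₂ ∧ m ≤ r₃ ∧ (m = r₁ ∨ m = r₂ ∨ m = r₃) := by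
    refine ⟨min r₁ (min r₂ r₃), by positivity, ?_⟩
    grind
  rw [hr₁, le_div_iff₀ hb] at hm₁
  rw [hr₂, le_div_iff₀ ha] at hm₂
  rw [hr₃, le_div_iff₀ (by positivity)] at hm₃
  rw [hr₁, hr₂, hr₃, eq_div_iff hb.ne', eq_div_iff ha.ne', eq_div_iff (by positivity)] at hm_eq
  have h : IsAdmissible m ![A, B, C] :=
    (isAdmissible_iff_of_dist_lt ha hab hbc).mpr ⟨hm, hm₁, hm₂, hm₃⟩
  refine ⟨m, h, ?_⟩
  simp only [h.isSharp_iff_of_dist_lt ha hab hbc]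
  rcases hm_eq with h | h | h
  exacts [⟨_, .inl ⟨h, rfl⟩⟩, ⟨_, .inr (.inl ⟨h, rfl⟩)⟩, ⟨_, .inr (.inr ⟨h, rfl⟩)⟩]

lemma exists_doubleArea_eq_sum {T : Fin 3 → Pt} {X : Pt} (A B : Pt)
    (hX : X ∈ convexHull ℝ (Set.range T)) :
    ∃ w ∈ stdSimplex ℝ (Fin 3), doubleArea ![A, B, X] = ∑ i, w i * doubleArea ![A, B, T i] := by
  obtain ⟨w, hw, rfl⟩ := mem_convexHull_range.mp hX
  refine ⟨w, hw, ?_⟩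
  have h := hw.2
  simp only [Fin.sum_univ_three] at h ⊢
  obtain h : w 0 = 1 - w 1 - w 2 := by linarith
  simp only [doubleArea_eq, h, Matrix.cons_val, PiLp.add_apply, PiLp.smul_apply, smul_eq_mul]
  ring

lemma doubleArea_lineMap (A B X Y : Pt) (m : ℝ) :
    doubleArea ![A, B, AffineMap.lineMap X Y m] =
      (1 - m) * doubleArea ![A, B, X] + m * doubleArea ![A, B, Y] := by
  simp only [doubleArea_eq, AffineMap.lineMap_apply_module', Matrix.cons_val, PiLp.add_apply,
    PiLp.smul_apply, PiLp.sub_apply, smul_eq_mul]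
  ring

lemma doubleArea_self_left (A B : Pt) : doubleArea ![A, B, A] = 0 := by simp [doubleArea_eq]

lemma doubleArea_self_right (A B : Pt) : doubleArea ![A, B, B] = 0 := by
  simp [doubleArea_eq, mul_comm]

lemma tri_ne_tri_of_lineMap (hm : 1 < m) (hABC : doubleArea ![A, B, C] ≠ 0) :
    tri A B (AffineMap.lineMap A C m) ≠ tri C A (AffineMap.lineMap C B m) ∧
      tri A B (AffineMap.lineMap A C m) ≠ tri A C (AffineMap.lineMap A B m) ∧
      tri C A (AffineMap.lineMap C B m) ≠ tri A C (AffineMap.lineMap A B m) := by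
  have hvertex {P Q X Y₀ Y₁ Y₂ : Pt} (h : tri P Q X = tri Y₀ Y₁ Y₂) :
      ∃ w ∈ stdSimplex ℝ (Fin 3), doubleArea ![A, B, X] = w 0 * doubleArea ![A, B, Y₀] +
        w 1 * doubleArea ![A, B, Y₁] + w 2 * doubleArea ![A, B, Y₂] := by
    have hX : X ∈ tri Y₀ Y₁ Y₂ := h ▸ subset_convexHull ℝ _ (by simp)
    have hX' : X ∈ convexHull ℝ (Set.range ![Y₀, Y₁, Y₂]) :=
      tri_eq_convexHull_range ![Y₀, Y₁, Y₂] ▸ hX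
    simpa [Fin.sum_univ_three] using exists_doubleArea_eq_sum A B hX'
  refine ⟨fun h => ?_, fun h => ?_, fun h => ?_⟩
  · obtain ⟨w, ⟨hw, -⟩, h⟩ := hvertex h.symm
    have : 1 - m = w 2 * m := mul_right_cancel₀ hABC <| by
      simpa [doubleArea_lineMap, doubleArea_self_left, doubleArea_self_right, mul_assoc] using h
    linarith [mul_nonneg (hw 2) (one_pos.trans hm).le]
  · obtain ⟨w, hw, h⟩ := hvertex h
    have : m = w 1 := mul_right_cancel₀ hABC <| by
      simpa only [doubleArea_lineMap, doubleArea_self_left, doubleArea_self_right, mul_zero,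
        zero_add, add_zero] using h
    linarith [(mem_Icc_of_mem_stdSimplex hw 1).2]
  · obtain ⟨w, ⟨hw, -⟩, h⟩ := hvertex h
    have : 1 - m = w 1 := mul_right_cancel₀ hABC <| by
      simpa only [doubleArea_lineMap, doubleArea_self_left, doubleArea_self_right, mul_zero,
        zero_add, add_zero] using h
    linarith [hw 1]

lemma three_isMinIsoscelesContainer_iff (hABC : AffineIndependent ℝ ![A, B, C])
    (hab : dist B C < dist C A) (hbc : dist C A < dist A B) :
    (∃ S₁ P₁ R₁ S₂ P₂ R₂ S₃ P₃ R₃ : Pt,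
      IsMinIsoscelesContainer A B C S₁ P₁ R₁ ∧ IsMinIsoscelesContainer A B C S₂ P₂ R₂ ∧
      IsMinIsoscelesContainer A B C S₃ P₃ R₃ ∧ tri S₁ P₁ R₁ ≠ tri S₂ P₂ R₂ ∧
      tri S₁ P₁ R₁ ≠ tri S₃ P₃ R₃ ∧ tri S₂ P₂ R₂ ≠ tri S₃ P₃ R₃) ↔
    ∃ m, m * dist C A = dist A B ∧ m * dist B C = dist C A ∧
      m * dist A B ^ 2 = dist C A ^ 2 + dist A B ^ 2 - dist B C ^ 2 := by
  have hV₀ := affineIndependent_iff_doubleArea_ne_zero.mp hABC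
  have ha : 0 < dist B C := dist_pos.mpr (hABC.injective.ne (by decide : (1 : Fin 3) ≠ 2))
  constructor
  · rintro ⟨S₁, P₁, R₁, S₂, P₂, R₂, S₃, P₃, R₃, hmin₁, hmin₂, hmin₃, h₁₂, h₁₃, h₂₃⟩
    obtain ⟨m, hm, hsharp⟩ := exists_isAdmissible_isSharp ha hab hbc
    have hcases {S P R : Pt} (h : IsMinIsoscelesContainer A B C S P R) :=
      (hm.isSharp_iff_of_dist_lt ha hab hbc).mp
        ((hm.isMinIsoscelesContainer_iff_isSharp hV₀ hsharp).mp ⟨S, P, R, h, rfl⟩)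
    -- Three distinct regions among three candidates: every candidate, hence every equality, occurs
    grind [hcases hmin₁, hcases hmin₂, hcases hmin₃]
  · rintro ⟨m, h₁, h₂, h₃⟩
    have hm₁ : 1 < m := (lt_mul_iff_one_lt_left ha).mp (hab.trans_eq h₂.symm)
    have hm : IsAdmissible m ![A, B, C] := (isAdmissible_iff_of_dist_lt ha hab hbc).mpr
      ⟨one_pos.trans hm₁, h₁.le, h₂.le, h₃.le⟩
    have hsharp {K : Set Pt} := hm.isSharp_iff_of_dist_lt (K := K) ha hab hbc
    have hmin {K : Set Pt} := hm.isMinIsoscelesContainer_iff_isSharp (K := K) hV₀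
      ⟨_, hsharp.mpr (.inl ⟨h₁, rfl⟩)⟩
    obtain ⟨h₁₂, h₁₃, h₂₃⟩ := tri_ne_tri_of_lineMap hm₁ hV₀
    obtain ⟨S₁, P₁, R₁, hmin₁, e₁⟩ := hmin.mpr (hsharp.mpr (.inl ⟨h₁, rfl⟩))
    obtain ⟨S₂, P₂, R₂, hmin₂, e₂⟩ := hmin.mpr (hsharp.mpr (.inr (.inl ⟨h₂, rfl⟩)))
    obtain ⟨S₃, P₃, R₃, hmin₃, e₃⟩ := hmin.mpr (hsharp.mpr (.inr (.inr ⟨h₃, rfl⟩)))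
    rw [← e₁, ← e₂] at h₁₂
    rw [← e₁, ← e₃] at h₁₃
    rw [← e₂, ← e₃] at h₂₃
    exact ⟨S₁, P₁, R₁, S₂, P₂, R₂, S₃, P₃, R₃, hmin₁, hmin₂, hmin₃, h₁₂, h₁₃, h₂₃⟩

end Candidates

/-! ### The extremal angles -/

section Angle

lemma sin_three_mul_pos {x : ℝ} (hx : x ∈ Set.Icc (π / 5) (π / 4)) : 0 < sin (3 * x) :=
  sin_pos_of_pos_of_lt_pi (by linarith [hx.1, pi_pos]) (by linarith [hx.2, pi_pos])

lemma strictMonoOn_sin_mul_sin_two_mul_sub :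
    StrictMonoOn (fun x => sin x * sin (2 * x) - sin (3 * x) ^ 2) (Set.Icc (π / 5) (π / 4)) := by
  intro x hx y hy hxy
  have hx₁ := hx.1
  have hy₂ := hy.2
  have := pi_pos
  have h₁ : sin x < sin y :=
    sin_lt_sin_of_lt_of_le_pi_div_two (by linarith) (by linarith) hxy
  have h₂ : sin (2 * x) < sin (2 * y) :=
    sin_lt_sin_of_lt_of_le_pi_div_two (by linarith) (by linarith) (by linarith)
  have h₃ : sin (3 * y) < sin (3 * x) := by
    rw [← sin_pi_sub (3 * x), ← sin_pi_sub (3 * y)]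
    exact sin_lt_sin_of_lt_of_le_pi_div_two (by linarith) (by linarith) (by linarith)
  have h₄ : sin x * sin (2 * x) < sin y * sin (2 * y) :=
    mul_lt_mul'' h₁ h₂ (sin_nonneg_of_nonneg_of_le_pi (by linarith) (by linarith))
      (sin_nonneg_of_nonneg_of_le_pi (by linarith) (by linarith))
  exact sub_lt_sub h₄ (pow_lt_pow_left₀ h₃ (sin_three_mul_pos hy).le two_ne_zero)

lemma exists_sin_mul_sin_two_mul_eq :
    ∃ x ∈ Set.Icc (π / 5) (π / 4), sin x * sin (2 * x) = sin (3 * x) ^ 2 := by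
  have := pi_pos
  have hcont : ContinuousOn (fun x => sin x * sin (2 * x) - sin (3 * x) ^ 2)
      (Set.Icc (π / 5) (π / 4)) := by fun_prop
  suffices hmem : (0 : ℝ) ∈ Set.Icc (sin (π / 5) * sin (2 * (π / 5)) - sin (3 * (π / 5)) ^ 2)
      (sin (π / 4) * sin (2 * (π / 4)) - sin (3 * (π / 4)) ^ 2) by
    obtain ⟨x, hx, h⟩ := intermediate_value_Icc (by linarith) hcont hmem
    exact ⟨x, hx, sub_eq_zero.mp h⟩
  constructor
  · have h₁ : sin (3 * (π / 5)) = sin (2 * (π / 5)) := by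
      rw [← sin_pi_sub]
      ring_nf
    have h₂ : sin (π / 5) < sin (2 * (π / 5)) :=
      sin_lt_sin_of_lt_of_le_pi_div_two (by linarith) (by linarith) (by linarith)
    have h₃ : 0 < sin (2 * (π / 5)) := sin_pos_of_pos_of_lt_pi (by linarith) (by linarith)
    rw [h₁, sub_nonpos, sq]
    exact mul_le_mul_of_nonneg_right h₂.le h₃.le
  · have h₁ : sin (3 * (π / 4)) = sin (π / 4) := by
      rw [← sin_pi_sub]
      ring_nf
    have h₂ : 0 < sin (π / 4) := sin_pos_of_pos_of_lt_pi (by linarith) (by linarith)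
    have h₃ : sin (2 * (π / 4)) = 1 := by
      rw [← sin_pi_div_two]
      ring_nf
    rw [h₁, h₃, sub_nonneg, sq]
    exact mul_le_mul_of_nonneg_left (sin_le_one _) h₂.le

lemma eq_two_mul_of_sin_eq_sin_two_mul {α β γ : ℝ} (hα : 0 < α) (hαβ : α < β) (hβγ : β < γ)
    (hsum : α + β + γ = π) (h : sin γ = sin (2 * α)) : γ = 2 * α := by
  have hprod : 2 * (sin ((γ - 2 * α) / 2) * cos ((γ + 2 * α) / 2)) = 0 := by
    rw [← mul_assoc, ← sin_sub_sin, h, sub_self]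
  rcases (by simpa using hprod : _ ∨ _) with hsin | hcos
  · rw [sin_eq_zero_iff_of_lt_of_lt (by linarith) (by linarith)] at hsin
    linarith
  · exact absurd hcos (cos_pos_of_mem_Ioo ⟨by linarith, by linarith⟩).ne'

end Angle

section Triangle

variable {E P : Type*} [NormedAddCommGroup E] [InnerProductSpace ℝ E] [MetricSpace P]
  [NormedAddTorsor E P] {A B C : P}

lemma exists_dist_eq_mul_sin (h : ¬ Collinear ℝ {A, B, C}) :
    ∃ k > 0, dist B C = k * sin (∠ B A C) ∧ dist C A = k * sin (∠ A B C) ∧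
      dist A B = k * sin (∠ A C B) := by
  have hα := sin_pos_of_not_collinear (p₁ := B) (p₂ := A) (p₃ := C) (by rwa [Set.insert_comm])
  have hβ := law_sin B A C
  have hγ := law_sin A C B
  rw [angle_comm C B A, dist_comm C B, dist_comm A C] at hβ
  rw [dist_comm C B, dist_comm B A] at hγ
  refine ⟨dist B C / sin (∠ B A C), div_pos (dist_pos.mpr (ne₂₃_of_not_collinear h)) hα, ?_⟩
  simp only [div_mul_eq_mul_div, eq_div_iff hα.ne', true_and]
  exact ⟨by linarith, by linarith⟩

lemma dist_mul_dist_eq_sq_iff (h : ¬ Collinear ℝ {A, B, C}) :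
    dist B C * dist A B = dist C A ^ 2 ↔
      sin (∠ B A C) * sin (∠ A C B) = sin (∠ A B C) ^ 2 := by
  obtain ⟨k, hk, ha, hb, hc⟩ := exists_dist_eq_mul_sin h
  rw [ha, hb, hc, mul_mul_mul_comm, mul_pow, ← sq, mul_right_inj' (by positivity)]

lemma dist_eq_two_mul_dist_mul_cos_iff (h : ¬ Collinear ℝ {A, B, C}) :
    dist A B = 2 * dist B C * cos (∠ B A C) ↔ sin (∠ A C B) = sin (2 * ∠ B A C) := by
  obtain ⟨k, hk, ha, -, hc⟩ := exists_dist_eq_mul_sin h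
  rw [ha, hc, sin_two_mul, mul_left_comm 2 k, mul_assoc k, mul_right_inj' hk.ne']

lemma exists_mul_dist_eq_iff (h : ¬ Collinear ℝ {A, B, C}) :
    (∃ m, m * dist C A = dist A B ∧ m * dist B C = dist C A ∧
      m * dist A B ^ 2 = dist C A ^ 2 + dist A B ^ 2 - dist B C ^ 2) ↔
    dist B C * dist A B = dist C A ^ 2 ∧ dist A B = 2 * dist B C * cos (∠ B A C) := by
  have ha : 0 < dist B C := dist_pos.mpr (ne₂₃_of_not_collinear h)
  have hb : 0 < dist C A := dist_pos.mpr (ne₁₃_of_not_collinear h).symm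
  have hc : 0 < dist A B := dist_pos.mpr (ne₁₂_of_not_collinear h)
  have hcos : dist B C ^ 2 =
      dist A B ^ 2 + dist C A ^ 2 - 2 * dist A B * dist C A * cos (∠ B A C) := by
    simpa only [sq, dist_comm B A] using law_cos B A C
  constructor
  · rintro ⟨m, h₁, h₂, h₃⟩
    refine ⟨by linear_combination (-dist B C) * h₁ + dist C A * h₂, ?_⟩
    refine mul_left_cancel₀ (mul_pos hb hc).ne' ?_
    linear_combination dist B C * h₃ - dist A B ^ 2 * h₂ - dist B C * hcos
  · rintro ⟨h₁, h₂⟩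
    refine ⟨dist C A / dist B C, ?_, div_mul_cancel₀ _ ha.ne', ?_⟩
    · rw [div_mul_eq_mul_div, div_eq_iff ha.ne']
      linear_combination -h₁
    · rw [div_mul_eq_mul_div, div_eq_iff ha.ne']
      linear_combination dist B C * hcos + dist C A * dist A B * h₂

lemma dist_relations_iff_angles (h : ¬ Collinear ℝ {A, B, C}) (hab : dist B C < dist C A)
    (hbc : dist C A < dist A B) :
    (dist B C * dist A B = dist C A ^ 2 ∧ dist A B = 2 * dist B C * cos (∠ B A C)) ↔
      ∠ B A C ∈ Set.Icc (π / 5) (π / 4) ∧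
        sin (∠ B A C) * sin (2 * ∠ B A C) = sin (3 * ∠ B A C) ^ 2 ∧
        ∠ A B C = π - 3 * ∠ B A C ∧ ∠ A C B = 2 * ∠ B A C := by
  have hBAC : ¬ Collinear ℝ {B, A, C} := by rwa [Set.insert_comm]
  have hACB : ¬ Collinear ℝ {A, C, B} := by rwa [Set.pair_comm C B]
  have hCBA : ¬ Collinear ℝ {C, B, A} := by rwa [Set.pair_comm, Set.insert_comm, Set.pair_comm]
  have hα : 0 < ∠ B A C := angle_pos_of_not_collinear hBAC
  have hsum : ∠ B A C + ∠ A B C + ∠ A C B = π := by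
    rw [← angle_add_angle_add_angle_eq_pi C (ne₁₂_of_not_collinear hBAC), angle_comm B C A,
      angle_comm C A B]
    ring
  have hαβ : ∠ B A C < ∠ A B C := by
    rw [angle_comm B A C, angle_comm A B C, angle_lt_iff_dist_lt hCBA, dist_comm C B]
    exact hab
  have hβγ : ∠ A B C < ∠ A C B := by
    rw [angle_lt_iff_dist_lt hACB, dist_comm A C]
    exact hbc
  rw [dist_mul_dist_eq_sq_iff h, dist_eq_two_mul_dist_mul_cos_iff h]
  generalize ∠ B A C = α at *
  generalize ∠ A B C = β at *
  generalize ∠ A C B = γ at *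
  constructor
  · rintro ⟨h₁, h₂⟩
    obtain rfl := eq_two_mul_of_sin_eq_sin_two_mul hα hαβ hβγ hsum h₂
    obtain rfl : β = π - 3 * α := by linarith
    rw [sin_pi_sub] at h₁
    exact ⟨⟨by linarith, by linarith⟩, h₁, rfl, rfl⟩
  · rintro ⟨-, h₁, rfl, rfl⟩
    rw [sin_pi_sub]
    exact ⟨h₁, rfl⟩

end Triangle

/-- there is a unique `α*` in `[π/5, π/4]` with
`sin α* · sin 2α* = sin² 3α*`, and a triangle with side lengths `a < b < c`
has three pairwise distinct minimum area isosceles containers if and only if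
its angles are `α*`, `π - 3α*` and `2α*` (necessarily in this order at the
vertices `A`, `B`, `C`, since `a < b < c`). -/
theorem statement5 :
    ∃ αs : ℝ, αs ∈ Set.Icc (π / 5) (π / 4) ∧
      sin αs * sin (2 * αs) = sin (3 * αs) ^ 2 ∧
      (∀ β ∈ Set.Icc (π / 5) (π / 4),
        sin β * sin (2 * β) = sin (3 * β) ^ 2 → β = αs) ∧
      ∀ A B C : Pt, AffineIndependent ℝ ![A, B, C] →
        dist B C < dist C A → dist C A < dist A B →
        ((∃ S₁ P₁ R₁ S₂ P₂ R₂ S₃ P₃ R₃ : Pt,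
            IsMinIsoscelesContainer A B C S₁ P₁ R₁ ∧
            IsMinIsoscelesContainer A B C S₂ P₂ R₂ ∧
            IsMinIsoscelesContainer A B C S₃ P₃ R₃ ∧
            tri S₁ P₁ R₁ ≠ tri S₂ P₂ R₂ ∧
            tri S₁ P₁ R₁ ≠ tri S₃ P₃ R₃ ∧
            tri S₂ P₂ R₂ ≠ tri S₃ P₃ R₃) ↔
          (∠ B A C = αs ∧ ∠ A B C = π - 3 * αs ∧ ∠ A C B = 2 * αs)) := by
  obtain ⟨αs, hαs, hsin⟩ := exists_sin_mul_sin_two_mul_eq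
  have hunique : ∀ β ∈ Set.Icc (π / 5) (π / 4),
      sin β * sin (2 * β) = sin (3 * β) ^ 2 → β = αs := fun β hβ hβ_sin =>
    strictMonoOn_sin_mul_sin_two_mul_sub.injOn hβ hαs
      ((sub_eq_zero.mpr hβ_sin).trans (sub_eq_zero.mpr hsin).symm)
  refine ⟨αs, hαs, hsin, hunique, fun A B C hABC hab hbc => ?_⟩
  have hcol := affineIndependent_iff_not_collinear_set.mp hABC
  rw [three_isMinIsoscelesContainer_iff hABC hab hbc, exists_mul_dist_eq_iff hcol,
    dist_relations_iff_angles hcol hab hbc]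
  constructor
  · rintro ⟨hα, hα_sin, hβ, hγ⟩
    rw [← hunique _ hα hα_sin]
    exact ⟨rfl, hβ, hγ⟩
  · rintro ⟨rfl, hβ, hγ⟩
    exact ⟨hαs, hsin, hβ, hγ⟩
end
end

section
/- The constant √2 is best possible in the following sense: for every ε > 0 there exists a triangle ABC such that every isosceles container of ABC has area strictly greater than (√2 − ε) · t(ABC). -/
open EuclideanGeometry MeasureTheory Real

noncomputable section

/-!
For `0 < t ≤ 1/2`, the flat triangle with vertices `(0, 0)`, `(1, 0)`, `(t, δ)` forces the area
of its isosceles containers through two facts. A container with area of order `δ` also has all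
its vertices at height `O(δ)`, so its equal legs have nearly equal horizontal projections:
either the base is nearly vertical or the apex lies nearly above the midpoint of the base.
Moreover, a container `ABC` has a vertical chord of length at least `δ` at abscissa `t`, and if
`B` and `C` lie on the same side of `A` with horizontal offsets `p` and `q`, this forces its
area to be at least `p q / |t - a|` times that of the flat triangle, where `a` is the abscissa
of `A`.

Up to `O(δ)`, a vertical base with the apex at abscissa `a ≤ 0` gives the ratio
`(1 - a)² / (t - a) ≥ 4 (1 - t)` by the AM-GM inequality. An apex above the midpoint of the base
gives half of that, the chord bound being applied at the left end of the base. A vertical base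
with the apex at abscissa `a ≥ 1` gives `a² / (a - t) ≥ 1 / (1 - t)`. The choice
`t = 1 - √2 / 2` balances `2 (1 - t) = 1 / (1 - t) = √2`.
-/

lemma mem_tri_iff {A B C X : Pt} :
    X ∈ tri A B C ↔ ∃ b c : ℝ, 0 ≤ b ∧ 0 ≤ c ∧ b + c ≤ 1 ∧
      X = A + b • (B - A) + c • (C - A) := by
  constructor
  · intro hX
    rw [tri, convexHull_insert (Set.insert_nonempty _ _), convexHull_pair] at hX
    simp only [convexJoin_singleton_left, Set.mem_iUnion] at hX
    obtain ⟨_, ⟨p, q, hp, hq, hpq, rfl⟩, ⟨m, n, hm, hn, hmn, rfl⟩⟩ := hX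
    obtain rfl : q = 1 - p := by linarith
    obtain rfl : m = 1 - n := by linarith
    exact ⟨n * p, n * (1 - p), by positivity, by positivity, by linarith, by module⟩
  · rintro ⟨b, c, hb, hc, hbc, rfl⟩
    refine mem_convexHull_of_exists_fintype ![1 - b - c, b, c] ![A, B, C] ?_ ?_ ?_ ?_
    · simp [Fin.forall_fin_succ, hb, hc, hbc, le_sub_iff_add_le']
    · simp only [Fin.sum_univ_three, Matrix.cons_val]
      ring
    · simp [Fin.forall_fin_succ]
    · simp only [Fin.sum_univ_three, Matrix.cons_val]
      module

lemma triArea_nonneg (A B C : Pt) : 0 ≤ triArea A B C :=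
  ENNReal.toReal_nonneg

lemma triArea_le_of_subset {A B C S P R : Pt} (h : tri A B C ⊆ tri S P R) :
    triArea A B C ≤ triArea S P R :=
  ENNReal.toReal_mono
    ((Set.toFinite {S, P, R}).isCompact_convexHull ℝ).measure_ne_top (measure_mono h)

/-- Twice the signed area of the triangle with vertices `A`, `B`, `C`: the determinant of its
edge vectors at `A`. -/
def crossDet (A B C : Pt) : ℝ :=
  (B 0 - A 0) * (C 1 - A 1) - (C 0 - A 0) * (B 1 - A 1)

lemma crossDet_eq_zero_of_collinear {A B C : Pt} (h : Collinear ℝ {A, B, C}) :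
    crossDet A B C = 0 := by
  obtain ⟨v, hv⟩ := (collinear_iff_of_mem (Set.mem_insert A {B, C})).1 h
  obtain ⟨b, rfl⟩ := hv B (by simp)
  obtain ⟨c, rfl⟩ := hv C (by simp)
  simp only [crossDet, vadd_eq_add, PiLp.add_apply, PiLp.smul_apply, smul_eq_mul]
  ring

lemma affineIndependent_of_crossDet_ne_zero {A B C : Pt} (h : crossDet A B C ≠ 0) :
    AffineIndependent ℝ ![A, B, C] :=
  affineIndependent_iff_not_collinear_set.2 (mt crossDet_eq_zero_of_collinear h)

lemma volume_standardTriangle_prod :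
    volume {p : ℝ × ℝ | 0 ≤ p.1 ∧ 0 ≤ p.2 ∧ p.1 + p.2 ≤ 1} = ENNReal.ofReal (1 / 2) := by
  set T : Set (ℝ × ℝ) := {p | 0 ≤ p.1 ∧ 0 ≤ p.2 ∧ p.1 + p.2 ≤ 1} with hT
  have hslice (x : ℝ) : volume (Prod.mk x ⁻¹' T) =
      (Set.Icc 0 1).indicator (fun x => ENNReal.ofReal (1 - x)) x := by
    by_cases hx : x ∈ Set.Icc (0 : ℝ) 1
    · have hIcc : Prod.mk x ⁻¹' T = Set.Icc 0 (1 - x) := by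
        ext y
        simp [hT, hx.1, le_sub_iff_add_le']
      rw [hIcc, Set.indicator_of_mem hx, Real.volume_Icc, sub_zero]
    · have hempty : Prod.mk x ⁻¹' T = ∅ :=
        Set.eq_empty_of_forall_notMem fun y ⟨h0, hy, h1⟩ => hx ⟨h0, by linarith⟩
      rw [hempty, Set.indicator_of_notMem hx, measure_empty]
  calc volume T = ∫⁻ x in Set.Icc (0 : ℝ) 1, ENNReal.ofReal (1 - x) := by
        rw [Measure.volume_eq_prod, Measure.prod_apply (by measurability)]
        simp only [hslice, lintegral_indicator measurableSet_Icc]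
    _ = ENNReal.ofReal (∫ x in Set.Icc (0 : ℝ) 1, 1 - x) :=
        (ofReal_integral_eq_lintegral_ofReal
          (by fun_prop : Continuous fun x : ℝ => 1 - x).integrableOn_Icc
          ((ae_restrict_iff' measurableSet_Icc).2 (.of_forall fun x hx => sub_nonneg.2 hx.2))).symm
    _ = ENNReal.ofReal (1 / 2) := by
        rw [integral_Icc_eq_integral_Ioc, ← intervalIntegral.integral_of_le zero_le_one,
          intervalIntegral.integral_sub intervalIntegrable_const
            intervalIntegral.intervalIntegrable_id]
        norm_num

lemma triArea_standardTriangle : triArea 0 !₂[1, 0] !₂[0, 1] = 1 / 2 := by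
  have hpre : tri 0 !₂[1, 0] !₂[0, 1] =
      (fun X : Pt => (X 0, X 1)) ⁻¹' {p | 0 ≤ p.1 ∧ 0 ≤ p.2 ∧ p.1 + p.2 ≤ 1} := by
    ext X
    simp only [mem_tri_iff, Set.mem_preimage]
    constructor
    · rintro ⟨b, c, hb, hc, hbc, rfl⟩
      simpa using ⟨hb, hc, hbc⟩
    · rintro ⟨h0, h1, h01⟩
      refine ⟨X 0, X 1, h0, h1, h01, ?_⟩
      ext i
      fin_cases i <;> simp
  have hcoord : MeasurePreserving (fun X : Pt => (X 0, X 1)) :=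
    (volume_preserving_finTwoArrow ℝ).comp (PiLp.volume_preserving_ofLp (Fin 2))
  rw [triArea, hpre, hcoord.measure_preimage
    (by measurability : MeasurableSet _).nullMeasurableSet, volume_standardTriangle_prod,
    ENNReal.toReal_ofReal (by norm_num)]

/-- The linear map sending the standard basis to the edge vectors of `A B C` at `A`, whose
determinant is `crossDet A B C`. -/
def edgeMap (A B C : Pt) : Pt →ₗ[ℝ] Pt :=
  Matrix.toLin (EuclideanSpace.basisFun (Fin 2) ℝ).toBasis
    (EuclideanSpace.basisFun (Fin 2) ℝ).toBasis
    !![B 0 - A 0, C 0 - A 0; B 1 - A 1, C 1 - A 1]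

lemma det_edgeMap (A B C : Pt) : LinearMap.det (edgeMap A B C) = crossDet A B C := by
  rw [edgeMap, LinearMap.det_toLin, Matrix.det_fin_two_of, crossDet]

lemma edgeMap_apply (A B C X : Pt) :
    edgeMap A B C X = X 0 • (B - A) + X 1 • (C - A) := by
  ext i
  fin_cases i <;> simp [edgeMap, Matrix.toLin_apply, Matrix.mulVec, dotProduct] <;> ring

open scoped Pointwise in
lemma tri_eq_vadd_image_edgeMap (A B C : Pt) :
    tri A B C = A +ᵥ edgeMap A B C '' tri 0 !₂[1, 0] !₂[0, 1] := by
  rw [tri, tri, LinearMap.image_convexHull, ← convexHull_vadd]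
  simp [Set.image_insert_eq, edgeMap_apply, Set.vadd_set_insert, Set.vadd_set_singleton]

lemma triArea_eq_abs_crossDet (A B C : Pt) : triArea A B C = |crossDet A B C| / 2 := by
  rw [triArea, tri_eq_vadd_image_edgeMap, measure_vadd, Measure.addHaar_image_linearMap,
    det_edgeMap, ENNReal.toReal_mul, ENNReal.toReal_ofReal (abs_nonneg _), ← triArea,
    triArea_standardTriangle, mul_one_div]

lemma triArea_unit_base (Z : Pt) : triArea 0 !₂[1, 0] Z = |Z 1| / 2 := by
  simp [triArea_eq_abs_crossDet, crossDet]

lemma triArea_le_of_mem_tri {A B C X Y Z : Pt} (hX : X ∈ tri A B C) (hY : Y ∈ tri A B C)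
    (hZ : Z ∈ tri A B C) : triArea X Y Z ≤ triArea A B C :=
  triArea_le_of_subset <| convexHull_min
    (Set.insert_subset hX (Set.insert_subset hY (Set.singleton_subset_iff.2 hZ)))
    (convex_convexHull ℝ _)

lemma exists_vertex_le_of_mem_tri {A B C X : Pt} (hX : X ∈ tri A B C) (i : Fin 2) :
    A i ≤ X i ∨ B i ≤ X i ∨ C i ≤ X i := by
  have hconcave := (EuclideanSpace.proj (𝕜 := ℝ) i).toLinearMap.concaveOn
    (convex_convexHull ℝ {A, B, C})
  simpa using hconcave.exists_le_of_mem_convexHull (subset_convexHull ℝ _) hX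

lemma exists_le_vertex_of_mem_tri {A B C X : Pt} (hX : X ∈ tri A B C) (i : Fin 2) :
    X i ≤ A i ∨ X i ≤ B i ∨ X i ≤ C i := by
  have hconvex := (EuclideanSpace.proj (𝕜 := ℝ) i).toLinearMap.convexOn
    (convex_convexHull ℝ {A, B, C})
  simpa using hconvex.exists_ge_of_mem_convexHull (subset_convexHull ℝ _) hX

lemma abs_sub_mul_le_of_add_eq_add {b c b' c' p q : ℝ} (hb : 0 ≤ b) (hc : 0 ≤ c)
    (hb' : 0 ≤ b') (hc' : 0 ≤ c') (hpq : 0 ≤ p * q) (h : b * p + c * q = b' * p + c' * q) :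
    |(c - c') * q| ≤ |b * p + c * q| := by
  rcases mul_nonneg_iff.1 hpq with ⟨hp, hq⟩ | ⟨hp, hq⟩
  · refine (le_abs_self _).trans' (abs_le.2 ⟨?_, ?_⟩) <;>
      linarith [mul_nonneg hb hp, mul_nonneg hb' hp, mul_nonneg hc hq, mul_nonneg hc' hq]
  · refine (neg_le_abs _).trans' (abs_le.2 ⟨?_, ?_⟩) <;>
      linarith [mul_nonpos_of_nonneg_of_nonpos hb hp, mul_nonpos_of_nonneg_of_nonpos hb' hp,
        mul_nonpos_of_nonneg_of_nonpos hc hq, mul_nonpos_of_nonneg_of_nonpos hc' hq]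

lemma vertical_chord_mul_le_triArea {A B C X Y : Pt} (hX : X ∈ tri A B C) (hY : Y ∈ tri A B C)
    (hXY : X 0 = Y 0) (hBC : 0 ≤ (B 0 - A 0) * (C 0 - A 0)) :
    |X 1 - Y 1| * ((B 0 - A 0) * (C 0 - A 0)) ≤ |X 0 - A 0| * (2 * triArea A B C) := by
  obtain ⟨b, c, hb, hc, -, rfl⟩ := mem_tri_iff.1 hX
  obtain ⟨b', c', hb', hc', -, rfl⟩ := mem_tri_iff.1 hY
  simp only [PiLp.add_apply, PiLp.sub_apply, PiLp.smul_apply, smul_eq_mul, add_assoc,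
    add_right_inj, add_sub_add_left_eq_sub, add_sub_cancel_left] at hXY ⊢
  set p := B 0 - A 0 with hp
  set q := C 0 - A 0 with hq
  set d := b * (B 1 - A 1) + c * (C 1 - A 1) - (b' * (B 1 - A 1) + c' * (C 1 - A 1))
  have hchord : d * (p * q) = (c - c') * q * crossDet A B C := by
    rw [crossDet, ← hp, ← hq]
    linear_combination (B 1 - A 1) * q * hXY
  calc |d| * (p * q) = |d * (p * q)| := by rw [abs_mul, abs_of_nonneg hBC]
    _ = |(c - c') * q| * |crossDet A B C| := by rw [hchord, abs_mul]
    _ ≤ |b * p + c * q| * |crossDet A B C| := by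
        have hoffset := abs_sub_mul_le_of_add_eq_add hb hc hb' hc' hBC hXY
        exact mul_le_mul_of_nonneg_right hoffset (abs_nonneg _)
    _ = |b * p + c * q| * (2 * triArea A B C) := by
        rw [triArea_eq_abs_crossDet, mul_div_cancel₀ _ two_ne_zero]

lemma IsIsosceles.exists_apex {S P R : Pt} (h : IsIsosceles S P R) :
    ∃ V U W : Pt, tri V U W = tri S P R ∧ dist V U = dist V W ∧ U 0 ≤ W 0 := by
  obtain ⟨V, U, W, htri, hdist⟩ :
      ∃ V U W : Pt, tri V U W = tri S P R ∧ dist V U = dist V W := by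
    rcases h with h | h | h
    · exact ⟨R, S, P, by simp only [tri, Set.insert_comm R, Set.pair_comm R],
        by rw [← h, dist_comm]⟩
    · exact ⟨S, P, R, rfl, by rw [← h, dist_comm]⟩
    · exact ⟨P, S, R, by simp only [tri, Set.insert_comm P], by rw [← h, dist_comm]⟩
  rcases le_total (U 0) (W 0) with hUW | hWU
  · exact ⟨V, U, W, htri, hdist, hUW⟩
  · exact ⟨V, W, U, by rw [← htri, tri, tri, Set.pair_comm], hdist.symm, hWU⟩

lemma abs_sub_le_or_abs_add_sub_le_of_dist_eq {V U W : Pt} {η : ℝ} (h : dist V U = dist V W)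
    (hU : |V 1 - U 1| ≤ η) (hW : |V 1 - W 1| ≤ η) :
    |U 0 - W 0| ≤ η ∨ |U 0 + W 0 - 2 * V 0| ≤ η := by
  have hη : 0 ≤ η := (abs_nonneg _).trans hU
  have hsq : (V 0 - U 0) ^ 2 + (V 1 - U 1) ^ 2 = (V 0 - W 0) ^ 2 + (V 1 - W 1) ^ 2 := by
    rw [EuclideanSpace.dist_eq, EuclideanSpace.dist_eq,
      Real.sqrt_inj (by positivity) (by positivity)] at h
    simpa [Fin.sum_univ_two, Real.dist_eq, sq_abs] using h
  have hprod : |U 0 - W 0| * |U 0 + W 0 - 2 * V 0| ≤ η * η := by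
    calc |U 0 - W 0| * |U 0 + W 0 - 2 * V 0| = |(V 1 - W 1) ^ 2 - (V 1 - U 1) ^ 2| := by
          rw [← abs_mul]
          congr 1
          linear_combination hsq
      _ ≤ η ^ 2 := abs_sub_le_of_nonneg_of_le (sq_nonneg _)
          (sq_le_sq' (abs_le.1 hW).1 (abs_le.1 hW).2) (sq_nonneg _)
          (sq_le_sq' (abs_le.1 hU).1 (abs_le.1 hU).2)
      _ = η * η := sq η
  by_contra! hlt
  exact hprod.not_gt (mul_lt_mul'' hlt.1 hlt.2 hη hη)

lemma four_mul_mul_le_of_mul_add_sq_le {d e δ M : ℝ} (hd : 0 < d) (hδ : 0 ≤ δ)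
    (h : δ * (d + e) ^ 2 ≤ d * M) : 4 * e * δ ≤ M := by
  refine le_of_mul_le_mul_left ?_ hd
  calc d * (4 * e * δ) = δ * (4 * d * e) := by ring
    _ ≤ δ * (d + e) ^ 2 := by gcongr; exact four_mul_le_sq_add d e
    _ ≤ d * M := h

section FlatTriangle

variable {t δ η : ℝ} {V U W : Pt}

lemma le_triArea_of_apex_left (ht : 0 < t) (hδ : 0 ≤ δ) (hη : η ≤ 1)
    (hbot : !₂[t, 0] ∈ tri V U W) (htop : !₂[t, δ] ∈ tri V U W)
    (hV : V 0 ≤ 0) (hU : 1 - η ≤ U 0) (hW : 1 - η ≤ W 0) :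
    4 * (1 - η - t) * δ ≤ 2 * triArea V U W := by
  have hchord := vertical_chord_mul_le_triArea htop hbot rfl
    (mul_nonneg (by linarith) (by linarith))
  simp only [Matrix.cons_val, sub_zero, abs_of_nonneg hδ,
    abs_of_nonneg (show 0 ≤ t - V 0 by linarith)] at hchord
  refine four_mul_mul_le_of_mul_add_sq_le (d := t - V 0) (by linarith) hδ (hchord.trans' ?_)
  rw [sq]
  gcongr <;> linarith

lemma le_triArea_of_apex_right (ht : t ≤ 1 / 2) (hδ : 0 ≤ δ) (hη0 : 0 ≤ η) (hη1 : η ≤ 1)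
    (hbot : !₂[t, 0] ∈ tri V U W) (htop : !₂[t, δ] ∈ tri V U W)
    (hV : 1 ≤ V 0) (hU : U 0 ≤ η) (hW : W 0 ≤ η) :
    (1 - η) ^ 2 * δ ≤ (1 - t) * (2 * triArea V U W) := by
  have hchord := vertical_chord_mul_le_triArea htop hbot rfl
    (mul_nonneg_of_nonpos_of_nonpos (by linarith) (by linarith))
  simp only [Matrix.cons_val, sub_zero, abs_of_nonneg hδ,
    abs_of_nonpos (show t - V 0 ≤ 0 by linarith), neg_sub] at hchord
  have hlegs : (V 0 - η) ^ 2 ≤ (U 0 - V 0) * (W 0 - V 0) := by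
    rw [sq, ← neg_mul_neg (U 0 - V 0)]
    gcongr <;> linarith
  -- `v ↦ (v - η) ^ 2 / (v - t)` is minimal at `v = 1` on `[1, ∞)`.
  have hmono : (V 0 - t) * (1 - η) ^ 2 ≤ (1 - t) * (V 0 - η) ^ 2 := by
    have hlin : 0 ≤ (V 0 - 1) * (1 - η) * (1 + η - 2 * t) :=
      mul_nonneg (mul_nonneg (by linarith) (by linarith)) (by linarith)
    have hquad : 0 ≤ (V 0 - 1) ^ 2 * (1 - t) := mul_nonneg (sq_nonneg _) (by linarith)
    linarith
  refine le_of_mul_le_mul_left ?_ (show 0 < V 0 - t by linarith)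
  calc (V 0 - t) * ((1 - η) ^ 2 * δ) = (V 0 - t) * (1 - η) ^ 2 * δ := by ring
    _ ≤ (1 - t) * (V 0 - η) ^ 2 * δ := by gcongr
    _ ≤ (1 - t) * ((U 0 - V 0) * (W 0 - V 0)) * δ := by gcongr; linarith
    _ = (1 - t) * (δ * ((U 0 - V 0) * (W 0 - V 0))) := by ring
    _ ≤ (1 - t) * ((V 0 - t) * (2 * triArea V U W)) := by gcongr; linarith
    _ = (V 0 - t) * ((1 - t) * (2 * triArea V U W)) := by ring

lemma le_triArea_of_apex_middle (ht : 0 < t) (hδ : 0 ≤ δ) (hη0 : 0 ≤ η) (hη1 : η ≤ 1)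
    (hbot : !₂[t, 0] ∈ tri V U W) (htop : !₂[t, δ] ∈ tri V U W)
    (hU : U 0 ≤ 0) (hW : 1 ≤ W 0) (hV : U 0 + W 0 - η ≤ 2 * V 0) :
    2 * (1 - η - t) * δ ≤ 2 * triArea V U W := by
  have hswap : tri V U W = tri U V W := by rw [tri, tri, Set.insert_comm]
  rw [triArea, hswap, ← triArea]
  rw [hswap] at hbot htop
  have hchord := vertical_chord_mul_le_triArea htop hbot rfl
    (mul_nonneg (by linarith) (by linarith))
  simp only [Matrix.cons_val, sub_zero, abs_of_nonneg hδ,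
    abs_of_nonneg (show 0 ≤ t - U 0 by linarith)] at hchord
  have hlegs : (1 - η - U 0) ^ 2 ≤ 2 * (V 0 - U 0) * (W 0 - U 0) := by
    rw [sq]
    gcongr <;> linarith
  suffices 4 * (1 - η - t) * δ ≤ 2 * (2 * triArea U V W) by linarith
  refine four_mul_mul_le_of_mul_add_sq_le (d := t - U 0) (by linarith) hδ ?_
  calc δ * (t - U 0 + (1 - η - t)) ^ 2 = δ * (1 - η - U 0) ^ 2 := by ring
    _ ≤ δ * (2 * (V 0 - U 0) * (W 0 - U 0)) := by gcongr
    _ = 2 * (δ * ((V 0 - U 0) * (W 0 - U 0))) := by ring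
    _ ≤ 2 * ((t - U 0) * (2 * triArea U V W)) := by gcongr
    _ = (t - U 0) * (2 * (2 * triArea U V W)) := by ring

lemma le_triArea_of_dist_eq (ht0 : 0 < t) (ht : t ≤ 1 / 2) (hδ : 0 ≤ δ)
    (hη1 : η < 1) (hηarea : 4 * triArea V U W ≤ η) (hdist : dist V U = dist V W)
    (hUW : U 0 ≤ W 0) (hA : 0 ∈ tri V U W) (hB : !₂[1, 0] ∈ tri V U W)
    (hC : !₂[t, δ] ∈ tri V U W) :
    2 * (1 - η - t) * δ ≤ 2 * triArea V U W ∨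
      (1 - η) ^ 2 * δ ≤ (1 - t) * (2 * triArea V U W) := by
  have hη0 : 0 ≤ η := hηarea.trans' (mul_nonneg zero_le_four (triArea_nonneg V U W))
  have hheight {Z : Pt} (hZ : Z ∈ ({V, U, W} : Set Pt)) : |Z 1| ≤ 2 * triArea V U W := by
    have hle := triArea_le_of_mem_tri hA hB (subset_convexHull ℝ _ hZ)
    rw [triArea_unit_base] at hle
    linarith
  have hflat {Z : Pt} (hZ : Z ∈ ({V, U, W} : Set Pt)) : |V 1 - Z 1| ≤ η := by
    linarith [abs_sub (V 1) (Z 1), hheight (Set.mem_insert V _), hheight hZ]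
  have hbot : !₂[t, 0] ∈ tri V U W := by
    have hcomb := convex_convexHull ℝ {V, U, W} hA hB (a := 1 - t) (b := t)
      (by linarith) ht0.le (by ring)
    simpa [tri, ← WithLp.toLp_smul] using hcomb
  have hleft := exists_vertex_le_of_mem_tri hA 0
  have hright := exists_le_vertex_of_mem_tri hB 0
  simp only [PiLp.zero_apply, Matrix.cons_val] at hleft hright
  rcases abs_sub_le_or_abs_add_sub_le_of_dist_eq hdist (hflat (by simp)) (hflat (by simp))
    with hbase | hmid
  · rw [abs_le] at hbase
    by_cases hV : V 0 ≤ 0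
    · left
      have hW : 1 ≤ W 0 := by rcases hright with h | h | h <;> linarith
      have harea := le_triArea_of_apex_left ht0 hδ hη1.le hbot hC hV (by linarith) (by linarith)
      linarith [triArea_nonneg V U W]
    · right
      have hU : U 0 ≤ 0 := by rcases hleft with h | h | h <;> linarith
      have hV1 : 1 ≤ V 0 := by rcases hright with h | h | h <;> linarith
      exact le_triArea_of_apex_right ht hδ hη0 hη1.le hbot hC hV1 (by linarith) (by linarith)
  · rw [abs_le] at hmid
    have hU : U 0 ≤ 0 := by
      rcases hleft with h | h | h <;> rcases hright with h' | h' | h' <;> linarith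
    have hW : 1 ≤ W 0 := by rcases hright with h | h | h <;> linarith
    exact .inl <| le_triArea_of_apex_middle ht0 hδ hη0 hη1.le hbot hC hU hW (by linarith)

end FlatTriangle

lemma sqrt_two_sub_mul_triArea_le_of_isIsosceles {δ : ℝ} {S P R : Pt} (hδ : 0 ≤ δ)
    (hiso : IsIsosceles S P R) (hA : 0 ∈ tri S P R) (hB : !₂[1, 0] ∈ tri S P R)
    (hC : !₂[1 - √2 / 2, δ] ∈ tri S P R) :
    (√2 - 12 * δ) * triArea 0 !₂[1, 0] !₂[1 - √2 / 2, δ] ≤ triArea S P R := by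
  obtain ⟨V, U, W, htri, hdist, hUW⟩ := hiso.exists_apex
  rw [← htri] at hA hB hC
  rw [triArea_unit_base, triArea, ← htri, ← triArea]
  simp only [Matrix.cons_val, abs_of_nonneg hδ]
  have hsq : √2 * √2 = 2 := Real.mul_self_sqrt zero_le_two
  have hlower : 1 ≤ √2 := Real.one_le_sqrt.2 one_le_two
  have hupper : √2 ≤ 3 / 2 := Real.sqrt_le_iff.2 (by norm_num)
  by_contra! hsmall
  have hδpos : 0 < √2 - 12 * δ :=
    pos_of_mul_pos_left (hsmall.trans_le' (triArea_nonneg V U W)) (by positivity)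
  have harea : 4 * triArea V U W ≤ 4 * δ := by
    have hle : (√2 - 12 * δ) * δ ≤ 2 * δ := by gcongr; linarith
    linarith
  rcases le_triArea_of_dist_eq (by linarith) (by linarith) hδ (by linarith) harea
    hdist hUW hA hB hC with h | h
  · linarith [mul_nonneg hδ hδ]
  · have hscaled : √2 * (1 - 4 * δ) ^ 2 * δ ≤ 2 * triArea V U W := by
      linear_combination √2 * h + triArea V U W * hsq
    have hbernoulli : √2 - 12 * δ ≤ √2 * (1 - 4 * δ) ^ 2 := by
      linarith [mul_le_mul_of_nonneg_right hupper hδ,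
        mul_nonneg (zero_le_one.trans hlower) (sq_nonneg δ)]
    linarith [mul_le_mul_of_nonneg_right hbernoulli hδ]

/-- the constant `√2` is best possible: for every `ε > 0` there is
a triangle `A B C` all of whose isosceles containers have area strictly greater
than `(√2 - ε) · t(ABC)`. -/
theorem statement7 (ε : ℝ) (hε : 0 < ε) :
    ∃ A B C : Pt, AffineIndependent ℝ ![A, B, C] ∧
      ∀ S P R : Pt, IsIsoscelesContainer A B C S P R →
        (Real.sqrt 2 - ε) * triArea A B C < triArea S P R := by
  set δ : ℝ := ε / 13 with hδ_def
  have hδ : 0 < δ := by positivity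
  set C : Pt := !₂[1 - √2 / 2, δ]
  have hdet : crossDet 0 !₂[1, 0] C = δ := by simp [crossDet, C]
  have hind : AffineIndependent ℝ ![0, !₂[1, 0], C] :=
    affineIndependent_of_crossDet_ne_zero (hdet ▸ hδ.ne')
  have harea : 0 < triArea 0 !₂[1, 0] C := by
    rw [triArea_eq_abs_crossDet, hdet]
    positivity
  refine ⟨0, !₂[1, 0], C, hind, fun S P R ⟨_, hiso, hsub⟩ => ?_⟩
  obtain ⟨hA, hB, hC⟩ : 0 ∈ tri S P R ∧ !₂[1, 0] ∈ tri S P R ∧ C ∈ tri S P R := by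
    simpa [Set.insert_subset_iff] using (subset_convexHull ℝ _).trans hsub
  calc (√2 - ε) * triArea 0 !₂[1, 0] C < (√2 - 12 * δ) * triArea 0 !₂[1, 0] C := by
        gcongr
        linarith
    _ ≤ triArea S P R := sqrt_two_sub_mul_triArea_le_of_isIsosceles hδ.le hiso hA hB hC
end
end

section
/- For every acute triangle ABC with side lengths a < b < c, one has t(ABC₁) < t(AB̄C) and t(ABC₂) < t(ĀBC). Together with t(AB₁C) < t(ABC̄), this implies that a minimum area isosceles container of an acute triangle never equals a special container of the third kind. -/
open EuclideanGeometry MeasureTheory Real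

noncomputable section

open AffineMap
open scoped Pointwise

/-!
In a triangle `P Q R`, let `lineMap P R t` be the foot of the perpendicular from `Q` to `P R`, and
let `T` be the area of `P Q R`. The isosceles triangle `P Q R'` with apex `Q` and `R'` on `P R` has
base `2 t · P R`, hence area `2 t T`. The point `Q'` of the line `R Q` equidistant from `P` and `R`
lies on the perpendicular to `P R` through its midpoint, so `R Q' = R Q / (2 (1 - t))` by similar
triangles and `P Q' R` has area `T / (2 (1 - t))`. Now `1/2 < t` says that `Q` is closer to `R` than
to `P`, and `t < 1` says that the angle at `R` is acute. In this range `P Q R'` contains `P Q R`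
because `1 < 2 t`, and it is the smaller of the two triangles because `4 t (1 - t) < 1`.
The three pairs of special containers are the cases `(P, Q, R) = (A, B, C), (B, A, C), (A, C, B)`.
-/

section SpecialVertices

variable {V P : Type*} [NormedAddCommGroup V] [InnerProductSpace ℝ V] [MetricSpace P]
  [NormedAddTorsor V P]

/-- The affine coordinate on the line `p r` (with `p` at `0` and `r` at `1`) of the foot of the
perpendicular from `q`. For `p = r` it is the junk value `0`. -/
def footCoord (p r q : P) : ℝ := inner ℝ (q -ᵥ p) (r -ᵥ p) / dist p r ^ 2

theorem footCoord_mul_dist_sq (p r q : P) :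
    footCoord p r q * dist p r ^ 2 = inner ℝ (q -ᵥ p) (r -ᵥ p) := by
  rcases eq_or_ne p r with rfl | h
  · simp
  · exact div_mul_cancel₀ _ (pow_ne_zero 2 (dist_ne_zero.2 h))

theorem footCoord_add_footCoord_swap {p r : P} (h : p ≠ r) (q : P) :
    footCoord p r q + footCoord r p q = 1 := by
  rw [footCoord, footCoord, dist_comm r p, ← add_div,
    div_eq_one_iff_eq (pow_ne_zero 2 (dist_ne_zero.2 h)), ← neg_vsub_eq_vsub_rev r p,
    inner_neg_right, ← sub_eq_add_neg, ← inner_sub_left, vsub_sub_vsub_cancel_left,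
    real_inner_self_eq_norm_sq, dist_comm, dist_eq_norm_vsub V]

theorem footCoord_lineMap (p r q : P) (s : ℝ) :
    footCoord p r (lineMap p q s) = s * footCoord p r q := by
  rw [footCoord, footCoord, lineMap_vsub_left, real_inner_smul_left, mul_div_assoc]

theorem dist_lineMap_sq_s13 (p r q : P) (s : ℝ) :
    dist q (lineMap p r s) ^ 2 = dist q p ^ 2 + s * (s - 2 * footCoord p r q) * dist p r ^ 2 := by
  have hvsub : q -ᵥ lineMap p r s = (q -ᵥ p) - s • (r -ᵥ p) := by
    rw [lineMap_apply, vsub_vadd_eq_vsub_sub]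
  have hinner := footCoord_mul_dist_sq p r q
  rw [dist_comm p r] at hinner ⊢
  simp only [dist_eq_norm_vsub V] at hinner ⊢
  rw [hvsub, norm_sub_sq_real, real_inner_smul_right, norm_smul, mul_pow, Real.norm_eq_abs, sq_abs]
  linear_combination 2 * s * hinner

theorem dist_lineMap_eq_dist_left_iff {p r : P} (h : p ≠ r) (q : P) (s : ℝ) :
    dist q (lineMap p r s) = dist q p ↔ s = 0 ∨ s = 2 * footCoord p r q := by
  rw [← sq_eq_sq₀ dist_nonneg dist_nonneg, dist_lineMap_sq_s13, add_eq_left, mul_eq_zero,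
    or_iff_left (pow_ne_zero 2 (dist_ne_zero.2 h)), mul_eq_zero, sub_eq_zero]

theorem dist_eq_dist_iff_two_mul_footCoord_eq_one {p r : P} (h : p ≠ r) (q : P) :
    dist q p = dist q r ↔ 2 * footCoord p r q = 1 := by
  simpa [eq_comm] using dist_lineMap_eq_dist_left_iff h q 1

theorem dist_lt_dist_iff_one_lt_two_mul_footCoord {p r : P} (h : p ≠ r) (q : P) :
    dist q r < dist q p ↔ 1 < 2 * footCoord p r q := by
  have hsq := dist_lineMap_sq_s13 p r q 1
  rw [lineMap_apply_one, one_mul] at hsq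
  rw [← sq_lt_sq₀ dist_nonneg dist_nonneg, hsq, add_lt_iff_neg_left,
    ← neg_pos, ← neg_mul, mul_pos_iff_of_pos_right (pow_pos (dist_pos.2 h) 2), neg_sub, sub_pos]

theorem footCoord_pos_iff_angle_lt_pi_div_two {p r : P} (h : p ≠ r) (q : P) :
    0 < footCoord p r q ↔ ∠ r p q < π / 2 := by
  rw [angle, InnerProductGeometry.angle, arccos_lt_pi_div_two, footCoord, real_inner_comm]
  rcases eq_or_ne q p with rfl | hq
  · simp
  · rw [div_pos_iff_of_pos_right (pow_pos (dist_pos.2 h) 2), div_pos_iff_of_pos_right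
      (mul_pos (norm_pos_iff.2 (vsub_ne_zero.2 h.symm)) (norm_pos_iff.2 (vsub_ne_zero.2 hq)))]

/-- The vertex condition for a special container of the second kind: `p q r'` arises from the
triangle `p q r` by moving `r` along the side `p r` until `p q r'` is isosceles with apex `q`.
Requiring `r'` on the line `p r` rather than on the ray from `p` through `r` makes no difference
when the angle at `p` is acute. -/
structure IsSecondKindVertex (p q r r' : P) : Prop where
  mem_line : r' ∈ line[ℝ, p, r]
  ne : r' ≠ p
  dist_eq : dist q r' = dist q p

/-- The vertex condition for a special container of the third kind: `p q' r` arises from the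
triangle `p q r` by moving `q` along the side `r q` until `p q' r` is isosceles with apex `q'`. -/
structure IsThirdKindVertex (p q r q' : P) : Prop where
  mem_line : q' ∈ line[ℝ, r, q]
  dist_eq : dist q' p = dist q' r

theorem isSecondKindVertex_lineMap {p q r : P} (h : p ≠ r) (hq : footCoord p r q ≠ 0) :
    IsSecondKindVertex p q r (lineMap p r (2 * footCoord p r q)) where
  mem_line := lineMap_mem_affineSpan_pair _ p r
  ne := by simp [lineMap_eq_left_iff, h, hq]
  dist_eq := (dist_lineMap_eq_dist_left_iff h q _).2 (.inr rfl)

theorem IsSecondKindVertex.eq_lineMap {p q r r' : P} (h : IsSecondKindVertex p q r r')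
    (hpr : p ≠ r) : r' = lineMap p r (2 * footCoord p r q) := by
  obtain ⟨s, rfl⟩ := mem_affineSpan_pair_iff_exists_lineMap_eq.1 h.mem_line
  have hs : s ≠ 0 := by
    rintro rfl
    exact h.ne (lineMap_apply_zero p r)
  rw [((dist_lineMap_eq_dist_left_iff hpr q s).1 h.dist_eq).resolve_left hs]

theorem IsThirdKindVertex.eq_lineMap {p q r q' : P} (h : IsThirdKindVertex p q r q')
    (hpr : p ≠ r) : q' = lineMap r q (2 * footCoord r p q)⁻¹ := by
  obtain ⟨s, rfl⟩ := mem_affineSpan_pair_iff_exists_lineMap_eq.1 h.mem_line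
  have hs : s * (2 * footCoord r p q) = 1 := by
    rw [mul_left_comm, ← footCoord_lineMap]
    exact (dist_eq_dist_iff_two_mul_footCoord_eq_one hpr.symm _).1 h.dist_eq.symm
  rw [eq_inv_of_mul_eq_one_left hs]

end SpecialVertices

theorem addHaar_convexHull_insert_zero_range {ι E : Type*} [Fintype ι] [DecidableEq ι]
    [NormedAddCommGroup E] [NormedSpace ℝ E] [MeasurableSpace E] [BorelSpace E]
    (μ : Measure E) [μ.IsAddHaarMeasure] (b : Module.Basis ι ℝ E) (v : ι → E) :
    μ (convexHull ℝ (insert 0 (Set.range v))) =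
      ENNReal.ofReal |b.det v| * μ (convexHull ℝ (insert 0 (Set.range b))) := by
  have : FiniteDimensional ℝ E := .of_basis b
  have hcomp : b.constr ℝ v ∘ b = v := funext (b.constr_basis ℝ v)
  have himage : b.constr ℝ v '' insert 0 (Set.range b) = insert 0 (Set.range v) := by
    rw [Set.image_insert_eq, map_zero, ← Set.range_comp, hcomp]
  have hdet : LinearMap.det (b.constr ℝ v) = b.det v := by
    rw [← mul_one (LinearMap.det _), ← b.det_self, ← b.det_comp, hcomp]
  rw [← himage, ← LinearMap.image_convexHull, Measure.addHaar_image_linearMap, hdet]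

theorem tri_comm_left (A B C : Pt) : tri A B C = tri B A C := by
  rw [tri, tri, Set.insert_comm]

theorem tri_comm_right (A B C : Pt) : tri A B C = tri A C B := by
  rw [tri, tri, Set.pair_comm]

theorem triArea_comm_left (A B C : Pt) : triArea A B C = triArea B A C := by
  rw [triArea, triArea, tri_comm_left]

theorem triArea_comm_right (A B C : Pt) : triArea A B C = triArea A C B := by
  rw [triArea, triArea, tri_comm_right]

theorem tri_eq_vadd (A B C : Pt) :
    tri A B C = A +ᵥ convexHull ℝ (insert 0 (Set.range ![B - A, C - A])) := by
  rw [tri, ← convexHull_vadd]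
  congr 1
  simp [Set.vadd_set_insert, Set.pair_comm]

theorem triArea_eq_abs_det_mul (b : Module.Basis (Fin 2) ℝ Pt) (A B C : Pt) :
    triArea A B C = |b.det ![B - A, C - A]| * triArea 0 (b 0) (b 1) := by
  have hb : ![b 0 - 0, b 1 - 0] = b := by
    ext1 i
    fin_cases i <;> simp
  rw [triArea, triArea, tri_eq_vadd A, tri_eq_vadd 0, measure_vadd, measure_vadd, hb,
    addHaar_convexHull_insert_zero_range volume b, ENNReal.toReal_mul,
    ENNReal.toReal_ofReal (abs_nonneg _)]

theorem triArea_lineMap (A B C : Pt) (s : ℝ) :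
    triArea A B (lineMap A C s) = |s| * triArea A B C := by
  let b := (EuclideanSpace.basisFun (Fin 2) ℝ).toBasis
  have hupdate (v : Pt) : Function.update ![B - A, C - A] 1 v = ![B - A, v] := by
    ext1 i
    fin_cases i <;> rfl
  have hdet : b.det ![B - A, lineMap A C s - A] = s * b.det ![B - A, C - A] := by
    rw [← vsub_eq_sub (lineMap A C s), lineMap_vsub_left, ← hupdate, b.det.map_update_smul,
      hupdate, smul_eq_mul, vsub_eq_sub]
  rw [triArea_eq_abs_det_mul b, triArea_eq_abs_det_mul b A B C, hdet, abs_mul, mul_assoc]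

theorem triArea_pos {A B C : Pt} (h : AffineIndependent ℝ ![A, B, C]) : 0 < triArea A B C := by
  have hspan : affineSpan ℝ {A, B, C} = ⊤ := by
    have htop := (h.affineSpan_eq_top_iff_card_eq_finrank_add_one).2 (by simp)
    rwa [Matrix.range_cons, Matrix.range_cons_cons_empty] at htop
  have hinterior : (interior (tri A B C)).Nonempty :=
    interior_convexHull_nonempty_iff_affineSpan_eq_top.2 hspan
  have hcompact : IsCompact (tri A B C) := (Set.toFinite {A, B, C}).isCompact_convexHull ℝ
  exact ENNReal.toReal_pos (Measure.measure_pos_of_nonempty_interior volume hinterior).ne'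
    hcompact.measure_lt_top.ne

theorem tri_subset_tri_of_mem_segment {A C D : Pt} (B : Pt) (h : C ∈ segment ℝ A D) :
    tri A B C ⊆ tri A B D := by
  refine convexHull_min ?_ (convex_convexHull ℝ _)
  rintro x (rfl | rfl | rfl)
  · exact subset_convexHull _ _ (by simp)
  · exact subset_convexHull _ _ (by simp)
  · exact segment_subset_convexHull (by simp) (by simp) h

theorem isIsoscelesContainer_lineMap {A B C : Pt} (h : AffineIndependent ℝ ![A, B, C]) {s : ℝ}
    (hs : 1 ≤ s) (hdist : dist B (lineMap A C s) = dist B A) :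
    IsIsoscelesContainer A B C A B (lineMap A C s) := by
  have hs0 : s ≠ 0 := (zero_lt_one.trans_le hs).ne'
  have hAC : A ≠ C := h.injective.ne (by decide : (0 : Fin 3) ≠ 2)
  have hne : A ≠ lineMap A C s := by
    rwa [ne_comm, Ne, lineMap_eq_left_iff, not_or, and_iff_right hAC]
  have hcollinear : Collinear ℝ {A, C, lineMap A C s} :=
    collinear_triple_of_mem_affineSpan_pair (left_mem_affineSpan_pair ℝ A C)
      (right_mem_affineSpan_pair ℝ A C) (lineMap_mem_affineSpan_pair s A C)
  have hC : C ∈ segment ℝ A (lineMap A C s) := by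
    have hmem := lineMap_mem_segment ℝ A (lineMap A C s)
      ⟨inv_nonneg.2 (zero_le_one.trans hs), inv_le_one_of_one_le₀ hs⟩
    rwa [lineMap_lineMap_right, inv_mul_cancel₀ hs0, lineMap_apply_one] at hmem
  exact ⟨(affineIndependent_of_affineIndependent_collinear_ne h.comm_left hcollinear hne).comm_left,
    .inr (.inr (by rw [hdist, dist_comm])), tri_subset_tri_of_mem_segment B hC⟩

theorem IsMinIsoscelesContainer.congr_tri {A B C A' B' C' S P R : Pt}
    (h : IsMinIsoscelesContainer A B C S P R) (htri : tri A B C = tri A' B' C') :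
    IsMinIsoscelesContainer A' B' C' S P R := by
  simpa only [IsMinIsoscelesContainer, IsIsoscelesContainer, htri] using h

theorem IsMinIsoscelesContainer.tri_ne_of_triArea_lt {A B C S P R S' P' R' X Y Z : Pt}
    (h : IsMinIsoscelesContainer A B C S P R) (h' : IsIsoscelesContainer A B C S' P' R')
    (hlt : triArea S' P' R' < triArea X Y Z) : tri S P R ≠ tri X Y Z := by
  intro heq
  refine (h.2 S' P' R' h').not_gt ?_
  rwa [triArea, triArea, heq]

theorem OnRay.mem_line {X Y Z : Pt} (h : OnRay X Y Z) (hXY : X ≠ Y) : Z ∈ line[ℝ, X, Y] := by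
  obtain ⟨s, -, hs⟩ := h.exists_nonneg_left (sub_ne_zero.2 hXY.symm)
  refine mem_affineSpan_pair_iff_exists_lineMap_eq.2 ⟨s, ?_⟩
  rw [lineMap_apply, vsub_eq_sub, hs, vadd_eq_add, sub_add_cancel]

theorem IsSecondKindVertex.triArea_eq {P Q R R' : Pt} (h : IsSecondKindVertex P Q R R')
    (hPR : P ≠ R) : triArea P Q R' = |2 * footCoord P R Q| * triArea P Q R := by
  rw [h.eq_lineMap hPR, triArea_lineMap]

theorem IsThirdKindVertex.triArea_eq {P Q R Q' : Pt} (h : IsThirdKindVertex P Q R Q')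
    (hPR : P ≠ R) : triArea P Q' R = |2 * footCoord R P Q|⁻¹ * triArea P Q R := by
  rw [triArea_comm_right P Q', triArea_comm_left P R, h.eq_lineMap hPR, triArea_lineMap, abs_inv,
    triArea_comm_left R P, triArea_comm_right P R]

theorem IsSecondKindVertex.triArea_lt_triArea {P Q R R' Q' : Pt}
    (hR' : IsSecondKindVertex P Q R R') (hQ' : IsThirdKindVertex P Q R Q')
    (h : AffineIndependent ℝ ![P, Q, R]) (hdist : dist Q R < dist Q P) (hangle : ∠ P R Q < π / 2) :
    triArea P Q R' < triArea P Q' R := by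
  have hPR : P ≠ R := h.injective.ne (by decide : (0 : Fin 3) ≠ 2)
  have hone_lt : 1 < 2 * footCoord P R Q :=
    (dist_lt_dist_iff_one_lt_two_mul_footCoord hPR Q).1 hdist
  have hpos : 0 < footCoord R P Q :=
    (footCoord_pos_iff_angle_lt_pi_div_two hPR.symm Q).2 hangle
  have hprod : 2 * footCoord P R Q * (2 * footCoord R P Q) < 1 := by
    have hsum := footCoord_add_footCoord_swap hPR Q
    have hsq : 0 < (2 * footCoord P R Q - 1) ^ 2 := pow_pos (sub_pos.2 hone_lt) 2
    linear_combination hsq + 4 * footCoord P R Q * hsum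
  rw [hR'.triArea_eq hPR, hQ'.triArea_eq hPR, abs_of_pos (zero_lt_one.trans hone_lt),
    abs_of_pos (mul_pos two_pos hpos), ← one_div]
  exact mul_lt_mul_of_pos_right ((lt_div_iff₀ (mul_pos two_pos hpos)).2 hprod) (triArea_pos h)

theorem IsMinIsoscelesContainer.tri_ne_of_isThirdKindVertex {P Q R Q' X Y Z : Pt}
    (hmin : IsMinIsoscelesContainer P Q R X Y Z) (hQ' : IsThirdKindVertex P Q R Q')
    (h : AffineIndependent ℝ ![P, Q, R]) (hdist : dist Q R < dist Q P) (hangle : ∠ P R Q < π / 2) :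
    tri X Y Z ≠ tri P Q' R := by
  have hPR : P ≠ R := h.injective.ne (by decide : (0 : Fin 3) ≠ 2)
  have hone_lt : 1 < 2 * footCoord P R Q :=
    (dist_lt_dist_iff_one_lt_two_mul_footCoord hPR Q).1 hdist
  have hR' := isSecondKindVertex_lineMap hPR (q := Q) (by linarith)
  exact hmin.tri_ne_of_triArea_lt (isIsoscelesContainer_lineMap h hone_lt.le hR'.dist_eq)
    (hR'.triArea_lt_triArea hQ' h hdist hangle)

/-- for an acute triangle `A B C` with side lengths `a < b < c`,
`t(ABC₁) < t(AB̄C)` and `t(ABC₂) < t(ĀBC)`; together with `t(AB₁C) < t(ABC̄)`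
this implies that a minimum area isosceles container of an acute triangle
never equals a special container of the third kind. -/
theorem statement13 (A B C C₁ C₂ Abar Bbar Cbar : Pt)
    (hABC : AffineIndependent ℝ ![A, B, C])
    (hab : dist B C < dist C A) (hbc : dist C A < dist A B)
    (hacute : ∠ B A C < π / 2 ∧ ∠ A B C < π / 2 ∧ ∠ A C B < π / 2)
    (hC₁ray : OnRay A C C₁) (hC₁ne : C₁ ≠ A) (hC₁dist : dist B C₁ = dist A B)
    (hC₂ray : OnRay B C C₂) (hC₂ne : C₂ ≠ B) (hC₂dist : dist A C₂ = dist A B)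
    (hAbarLine : Abar ∈ line[ℝ, A, C]) (hAbarDist : dist Abar B = dist Abar C)
    (hBbarLine : Bbar ∈ line[ℝ, B, C]) (hBbarDist : dist Bbar A = dist Bbar C)
    (hCbarLine : Cbar ∈ line[ℝ, B, C]) (hCbarDist : dist Cbar A = dist Cbar B) :
    triArea A B C₁ < triArea A Bbar C ∧
    triArea A B C₂ < triArea Abar B C ∧
    ∀ S P R : Pt, IsMinIsoscelesContainer A B C S P R →
      tri S P R ≠ tri Abar B C ∧ tri S P R ≠ tri A Bbar C ∧
        tri S P R ≠ tri A B Cbar := by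
  have hAC : A ≠ C := hABC.injective.ne (by decide : (0 : Fin 3) ≠ 2)
  have hBC : B ≠ C := hABC.injective.ne (by decide : (1 : Fin 3) ≠ 2)
  have hC : ∠ B C A < π / 2 := angle_comm A C B ▸ hacute.2.2
  have hca : dist B C < dist B A := dist_comm A B ▸ hab.trans hbc
  have hcb : dist A C < dist A B := dist_comm C A ▸ hbc
  have hba : dist C B < dist C A := dist_comm B C ▸ hab
  have hC₁ : IsSecondKindVertex A B C C₁ :=
    ⟨hC₁ray.mem_line hAC, hC₁ne, hC₁dist.trans (dist_comm A B)⟩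
  have hC₂ : IsSecondKindVertex B A C C₂ := ⟨hC₂ray.mem_line hBC, hC₂ne, hC₂dist⟩
  have hAbar : IsThirdKindVertex B A C Abar := ⟨Set.pair_comm A C ▸ hAbarLine, hAbarDist⟩
  have hBbar : IsThirdKindVertex A B C Bbar := ⟨Set.pair_comm B C ▸ hBbarLine, hBbarDist⟩
  have hCbar : IsThirdKindVertex A C B Cbar := ⟨hCbarLine, hCbarDist⟩
  refine ⟨hC₁.triArea_lt_triArea hBbar hABC hca hacute.2.2, ?_, fun S P R hmin ↦ ⟨?_, ?_, ?_⟩⟩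
  · rw [triArea_comm_left A B, triArea_comm_left Abar B]
    exact hC₂.triArea_lt_triArea hAbar hABC.comm_left hcb hC
  · rw [tri_comm_left Abar B]
    exact (hmin.congr_tri (tri_comm_left A B C)).tri_ne_of_isThirdKindVertex hAbar hABC.comm_left
      hcb hC
  · exact hmin.tri_ne_of_isThirdKindVertex hBbar hABC hca hacute.2.2
  · rw [tri_comm_right A B Cbar]
    exact (hmin.congr_tri (tri_comm_right A B C)).tri_ne_of_isThirdKindVertex hCbar
      hABC.comm_right hba hacute.2.1
end
end

section
/- Let ABC be a triangle and let SPR be a minimum area isosceles container for ABC. Then each of the vertices A, B, C lies on the boundary of SPR, i.e. on the union of the segments [S,P], [P,R], [R,S], and each of the three segments [S,P], [P,R], [R,S] contains at least one of the points A, B, C. -/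
open EuclideanGeometry MeasureTheory Real

noncomputable section

/-!
Let `K` be a finite set and `b` an isosceles triangle of minimum area containing `K`. If a side of
`b` misses `K`, a homothety centred at the opposite vertex produces a smaller container, so every
side meets `K`. It remains to see that at least three points of `K` lie on the boundary. If one
point lies on two sides, it is a vertex `b i`, and the opposite side contains a further point `y`
of `K`.

* If `y` is interior to that side and there is no third contact, then a small rotation of `K` about
  `b i` moves `y` into the interior of `b`. The rotated set has the same minimum container but
  misses the side opposite to `b i`.
* If `y` is also a vertex and there is no third contact, let `b j` be the remaining vertex. It can
  be moved slightly so that the triangle stays isosceles and gets smaller: along the axis if `b j`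
  is the apex, and by a rotation about the apex otherwise. The affine map that moves `b j` in this
  way and fixes the other two vertices has determinant `< 1`, and for a small displacement the
  new triangle still contains `K`.
-/

open scoped Topology EuclideanSpace

lemma exists_third_index {i j : Fin 3} (hij : i ≠ j) :
    ∃ k, k ≠ i ∧ k ≠ j ∧ ∀ l ≠ k, l = i ∨ l = j := by
  decide +revert

lemma sum_fin_three_eq {M : Type*} [AddCommMonoid M] (f : Fin 3 → M) (i : Fin 3) :
    ∑ j, f j = f i + f (i + 1) + f (i + 2) := by
  rw [← Equiv.sum_comp (Equiv.addLeft i) f, Fin.sum_univ_three]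
  simp

lemma insert_pair_subset_of_three_le_encard_inter {α : Type*} {x y z : α} {s : Set α}
    (h : 3 ≤ ({x, y, z} ∩ s).encard) : {x, y, z} ⊆ s := by
  have hcard : ({x, y, z} : Set α).encard ≤ 3 := by
    classical
    simpa [← Set.encard_coe_eq_coe_finsetCard] using
      Nat.cast_le (α := ℕ∞).2 (Finset.card_le_three (a := x) (b := y) (c := z))
  exact Set.inter_eq_left.1 <|
    (Set.toFinite _).eq_of_subset_of_encard_le Set.inter_subset_left (hcard.trans h)

/-- The points `v j`, `j ≠ i`, are equidistant from `v i`; for a triangle `v : Fin 3 → P`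
this says that it is isosceles with apex `v i`. -/
def IsApex {ι P : Type*} [Dist P] (v : ι → P) (i : ι) : Prop :=
  ∀ j k, j ≠ i → k ≠ i → dist (v i) (v j) = dist (v i) (v k)

lemma isApex_iff_dist_eq_dist {P : Type*} [Dist P] {v : Fin 3 → P} {i : Fin 3} :
    IsApex v i ↔ dist (v i) (v (i + 1)) = dist (v i) (v (i + 2)) := by
  refine ⟨fun h ↦ h _ _ (by simp) (by simp), fun h j k hj hk ↦ ?_⟩
  have hcases : ∀ i j : Fin 3, j ≠ i → j = i + 1 ∨ j = i + 2 := by decide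
  rcases hcases i j hj with rfl | rfl <;> rcases hcases i k hk with rfl | rfl <;> simp only [h]

section AffineBasis

variable {ι k E : Type*} [CommRing k] [AddCommGroup E] [Module k E] (b : AffineBasis ι k E)

lemma eq_of_forall_coord_eq_zero [Finite ι] {i : ι} {x : E} (h : ∀ j ≠ i, b.coord j x = 0) :
    x = b i := by
  have := Fintype.ofFinite ι
  refine b.ext_elem fun j ↦ ?_
  rcases eq_or_ne j i with rfl | hj
  · rw [b.coord_apply_eq, ← b.sum_coord_apply_eq_one x,
      Finset.sum_eq_single j (fun k _ hk ↦ h k hk) (by simp)]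
  · rw [h j hj, b.coord_apply_ne hj]

lemma linear_coord_sub_vertex (i : ι) (w : E) :
    (b.coord i).linear (w - b i) = b.coord i w - 1 := by
  rw [← vsub_eq_sub w, AffineMap.linearMap_vsub, vsub_eq_sub, b.coord_apply_eq]

/-- The affine map that sends the vertex `b i` to `w` and fixes the other vertices of `b`. -/
def moveVertex (i : ι) (w : E) : E →ᵃ[k] E where
  toFun x := x + b.coord i x • (w - b i)
  linear := LinearMap.transvection (b.coord i).linear (w - b i)
  map_vadd' x v := by
    rw [AffineMap.map_vadd, LinearMap.transvection.apply]
    simp only [vadd_eq_add, add_smul]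
    abel

lemma moveVertex_apply (i : ι) (w x : E) :
    moveVertex b i w x = x + b.coord i x • (w - b i) := rfl

lemma moveVertex_comp [DecidableEq ι] (i : ι) (w : E) :
    moveVertex b i w ∘ b = Function.update b i w := by
  ext j
  rcases eq_or_ne j i with rfl | hj
  · simp [moveVertex_apply]
  · simp [moveVertex_apply, b.coord_apply_ne hj.symm, hj]

lemma det_linear_moveVertex [Module.Free k E] [Module.Finite k E] (i : ι) (w : E) :
    LinearMap.det (moveVertex b i w).linear = b.coord i w := by
  change LinearMap.det (LinearMap.transvection (b.coord i).linear (w - b i)) = _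
  rw [LinearMap.transvection.det, linear_coord_sub_vertex, add_sub_cancel]

end AffineBasis

section ConvexHull

variable {ι k E : Type*} [Field k] [LinearOrder k] [IsStrictOrderedRing k] [AddCommGroup E]
  [Module k E]

lemma mem_segment_of_coord_eq_zero (b : AffineBasis (Fin 3) k E) {i : Fin 3} {x : E}
    (hx : x ∈ convexHull k (Set.range b)) (hi : b.coord i x = 0) :
    x ∈ segment k (b (i + 1)) (b (i + 2)) := by
  rw [b.convexHull_eq_nonneg_coord] at hx
  refine ⟨b.coord (i + 1) x, b.coord (i + 2) x, hx _, hx _, ?_, ?_⟩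
  · simpa only [sum_fin_three_eq _ i, hi, zero_add] using b.sum_coord_apply_eq_one x
  · simpa only [sum_fin_three_eq _ i, hi, zero_smul, zero_add] using
      b.linear_combination_coord_eq_self x

lemma mem_homothety_image_convexHull (b : AffineBasis ι k E) {i : ι} {r : k} (hr : 0 < r)
    {x : E} (hx : x ∈ convexHull k (Set.range b)) (hi : 1 - r ≤ b.coord i x) :
    x ∈ AffineMap.homothety (b i) r '' convexHull k (Set.range b) := by
  refine ⟨AffineMap.homothety (b i) r⁻¹ x, ?_, ?_⟩
  · rw [b.convexHull_eq_nonneg_coord] at hx ⊢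
    intro j
    rw [AffineMap.homothety_eq_lineMap, AffineMap.apply_lineMap, AffineMap.lineMap_apply_ring']
    rcases eq_or_ne j i with rfl | hj
    · rw [b.coord_apply_eq]
      have : r⁻¹ * (1 - r) ≤ r⁻¹ * b.coord j x := by gcongr
      have : r⁻¹ * (1 - r) = r⁻¹ - 1 := by field_simp
      linarith
    · rw [b.coord_apply_ne hj, sub_zero, add_zero]
      exact mul_nonneg (inv_nonneg.2 hr.le) (hx j)
  · rw [← AffineMap.homothety_mul_apply, mul_inv_cancel₀ hr.ne', AffineMap.homothety_one,
      AffineMap.id_apply]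

end ConvexHull

lemma eventually_mem_moveVertex_image {ι E : Type*} [Finite ι] [NormedAddCommGroup E]
    [NormedSpace ℝ E] [FiniteDimensional ℝ E] (b : AffineBasis ι ℝ E) (i : ι) {x : E}
    (hx : ∀ j, 0 < b.coord j x) :
    ∀ᶠ w in 𝓝 (b i), x ∈ moveVertex b i w '' convexHull ℝ (Set.range b) := by
  have hcoord (j : ι) : Continuous (b.coord j) := continuous_barycentric_coord b j
  -- `moveVertex b i w` scales the coordinate `i` by `b.coord i w`, hence the formula.
  let preimage (w : E) : E := -(b.coord i x / b.coord i w) • (w - b i) +ᵥ x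
  have hcont : ContinuousAt preimage (b i) := by
    have : b.coord i (b i) ≠ 0 := by simp
    have := (hcoord i).continuousAt (x := b i)
    fun_prop (disch := assumption)
  have hcoord_pre : ∀ᶠ w in 𝓝 (b i), ∀ j, 0 < b.coord j (preimage w) :=
    Filter.eventually_all.2 fun j ↦ ((hcoord j).continuousAt.comp hcont).eventually_const_lt <| by
      simpa [preimage] using hx j
  have hw : ∀ᶠ w in 𝓝 (b i), 0 < b.coord i w :=
    ((hcoord i).tendsto (b i)).eventually_const_lt (by simp)
  filter_upwards [hw, hcoord_pre] with w hw hpre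
  refine ⟨preimage w, ?_, ?_⟩
  · rw [b.convexHull_eq_nonneg_coord]
    exact fun j ↦ (hpre j).le
  · have : b.coord i (preimage w) = b.coord i x / b.coord i w := by
      rw [AffineMap.map_vadd, map_smul, linear_coord_sub_vertex, vadd_eq_add, smul_eq_mul]
      field_simp
      ring
    rw [moveVertex_apply, this]
    simp only [preimage, vadd_eq_add, neg_smul]
    abel

section Rotation

variable {V : Type*} [NormedAddCommGroup V] [InnerProductSpace ℝ V]
  [Fact (Module.finrank ℝ V = 2)] (o : Orientation ℝ V (Fin 2))

lemma continuous_rotation_apply (v : V) : Continuous fun t : ℝ ↦ o.rotation t v := by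
  simp only [Orientation.rotation_apply, Real.Angle.cos_coe, Real.Angle.sin_coe]
  fun_prop

lemma map_rotation_add_map_rotation_neg (L : V →ₗ[ℝ] ℝ) (v : V) (t : ℝ) :
    L (o.rotation t v) + L (o.rotation (-t : ℝ) v) = 2 * Real.cos t * L v := by
  simp only [Orientation.rotation_apply, Real.Angle.cos_coe, Real.Angle.sin_coe, Real.cos_neg,
    Real.sin_neg, map_add, map_smul, smul_eq_mul]
  ring

lemma frequently_rotation_lt (L : V →ₗ[ℝ] ℝ) {v : V} (hv : 0 < L v) :
    ∃ᶠ t : ℝ in 𝓝 0, L (o.rotation t v) < L v := by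
  intro h
  have hneg : Filter.Tendsto (fun t : ℝ ↦ -t) (𝓝 0) (𝓝 0) := by
    simpa using (continuous_neg (G := ℝ)).tendsto 0
  obtain ⟨t, ⟨hpos, hneg⟩, ht⟩ := (((h.and (hneg.eventually h)).filter_mono
    nhdsWithin_le_nhds).and (Ioo_mem_nhdsGT Real.pi_pos)).exists
  have hcos : Real.cos t < 1 := by
    simpa using Real.cos_lt_cos_of_nonneg_of_le_pi le_rfl ht.2.le ht.1
  have : Real.cos t * L v < L v := mul_lt_of_lt_one_left hv hcos
  linarith [map_rotation_add_map_rotation_neg o L v t]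

/-- The rotation of the plane by the angle `θ` about the point `c`. -/
def rotationAbout (c : V) (θ : Real.Angle) : V ≃ᵃⁱ[ℝ] V :=
  (AffineIsometryEquiv.vaddConst ℝ c).symm.trans
    ((o.rotation θ).toAffineIsometryEquiv.trans (AffineIsometryEquiv.vaddConst ℝ c))

lemma rotationAbout_apply (c : V) (θ : Real.Angle) (x : V) :
    rotationAbout o c θ x = o.rotation θ (x - c) + c := rfl

lemma tendsto_rotationAbout (c x : V) :
    Filter.Tendsto (fun t : ℝ ↦ rotationAbout o c t x) (𝓝 0) (𝓝 x) := by
  have : Continuous fun t : ℝ ↦ rotationAbout o c t x :=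
    (continuous_rotation_apply o (x - c)).add_const c
  simpa [rotationAbout_apply] using this.tendsto 0

lemma frequently_rotationAbout_lt (f : V →ᵃ[ℝ] ℝ) {c x : V} (h : f c < f x) :
    ∃ᶠ t : ℝ in 𝓝 0, f (rotationAbout o c t x) < f x := by
  have hf (v : V) : f (v + c) = f.linear v + f c := f.map_vadd c v
  have hx : f x = f.linear (x - c) + f c := by rw [← hf, sub_add_cancel]
  refine (frequently_rotation_lt o f.linear (v := x - c) (by linarith)).mono fun t ht ↦ ?_
  rw [rotationAbout_apply, hf, hx]
  gcongr

lemma eventually_coord_rotationAbout_pos {ι : Type*} (b : AffineBasis ι ℝ V) {j : ι} {c x : V}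
    (hx : 0 < b.coord j x) : ∀ᶠ t : ℝ in 𝓝 0, 0 < b.coord j (rotationAbout o c t x) := by
  have : FiniteDimensional ℝ V := .of_fact_finrank_eq_two
  exact (((continuous_barycentric_coord b j).tendsto x).comp
    (tendsto_rotationAbout o c x)).eventually_const_lt hx

lemma frequently_coord_rotationAbout_pos {ι : Type*} [Finite ι] (b : AffineBasis ι ℝ V) {i : ι}
    {y : V} (hy : b.coord i y = 0) (hpos : ∀ j ≠ i, 0 < b.coord j y) :
    ∃ᶠ t : ℝ in 𝓝 0, ∀ j, 0 < b.coord j (rotationAbout o (b i) t y) := by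
  have hi : ∃ᶠ t : ℝ in 𝓝 0, 0 < b.coord i (rotationAbout o (b i) t y) := by
    simpa [hy] using frequently_rotationAbout_lt o (-b.coord i) (c := b i) (x := y) (by simp [hy])
  have hne : ∀ᶠ t : ℝ in 𝓝 0, ∀ j, j ≠ i → 0 < b.coord j (rotationAbout o (b i) t y) :=
    Filter.eventually_all.2 fun j ↦ Filter.eventually_imp_distrib_left.2 fun hj ↦
      eventually_coord_rotationAbout_pos o b (hpos j hj)
  refine (hi.and_eventually hne).mono fun t ⟨hi, hne⟩ j ↦ ?_
  rcases eq_or_ne j i with rfl | hj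
  exacts [hi, hne j hj]

end Rotation

section Volume

lemma measure_image_affineMap {k E : Type*} [Ring k] [AddCommGroup E] [Module k E]
    [MeasurableSpace E] [MeasurableAdd E] (μ : Measure E) [μ.IsAddRightInvariant] (f : E →ᵃ[k] E)
    (s : Set E) : μ (f '' s) = μ (f.linear '' s) := by
  have hf : f '' s = (· + f 0) '' (f.linear '' s) := by
    rw [Set.image_image]
    exact Set.image_congr fun x _ ↦ congrFun f.decomp x
  rw [hf, Set.image_add_right, measure_preimage_add_right]

lemma volume_image_affineIsometryEquiv {V : Type*} [NormedAddCommGroup V]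
    [InnerProductSpace ℝ V] [FiniteDimensional ℝ V] [MeasurableSpace V] [BorelSpace V]
    (g : V ≃ᵃⁱ[ℝ] V) (s : Set V) : volume (g '' s) = volume s := by
  rw [← g.linearIsometryEquiv.symm.measurePreserving.measure_preimage_equiv
    (f := g.linearIsometryEquiv.symm.toMeasurableEquiv) s]
  refine (measure_image_affineMap volume g.toAffineEquiv.toAffineMap s).trans ?_
  exact congrArg volume (g.linearIsometryEquiv.image_eq_preimage_symm s)

end Volume

section IsApex

variable {V : Type*} [NormedAddCommGroup V] [InnerProductSpace ℝ V]

lemma frequently_isApex_update_self (b : AffineBasis (Fin 3) ℝ V) {i : Fin 3} (h : IsApex b i) :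
    ∃ᶠ w in 𝓝 (b i), IsApex (Function.update b i w) i ∧ b.coord i w < 1 := by
  have h₁ : i + 1 ≠ i := by simp
  have h₂ : i + 2 ≠ i := by simp
  let w (t : ℝ) : V := AffineMap.lineMap (b i) (midpoint ℝ (b (i + 1)) (b (i + 2))) t
  have hw : Filter.Tendsto w (𝓝[>] 0) (𝓝 (b i)) := by
    have : Continuous w := AffineMap.lineMap_continuous
    simpa [w] using (this.tendsto 0).mono_left nhdsWithin_le_nhds
  refine hw.frequently (Filter.Eventually.frequently ?_)
  filter_upwards [self_mem_nhdsWithin] with t ht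
  constructor
  · rw [isApex_iff_dist_eq_dist, Function.update_self, Function.update_of_ne h₁,
      Function.update_of_ne h₂, ← AffineSubspace.mem_perpBisector_iff_dist_eq]
    exact AffineMap.lineMap_mem t
      (AffineSubspace.mem_perpBisector_iff_dist_eq.2 (isApex_iff_dist_eq_dist.1 h))
      (AffineSubspace.midpoint_mem_perpBisector _ _)
  · have : b.coord i (w t) = 1 - t := by
      simp [w, AffineMap.apply_lineMap, AffineMap.map_midpoint, b.coord_apply_ne h₁.symm,
        b.coord_apply_ne h₂.symm, AffineMap.lineMap_apply_ring]
    linarith [Set.mem_Ioi.1 ht]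

variable [Fact (Module.finrank ℝ V = 2)]

lemma frequently_isApex_update_of_ne {ι : Type*} [DecidableEq ι] (b : AffineBasis ι ℝ V)
    {i j : ι} (hij : i ≠ j) (h : IsApex b j) :
    ∃ᶠ w in 𝓝 (b i), IsApex (Function.update b i w) j ∧ b.coord i w < 1 := by
  have : FiniteDimensional ℝ V := .of_fact_finrank_eq_two
  let o := (Module.finBasisOfFinrankEq (n := 2) ℝ V Fact.out).orientation
  have hlt : ∃ᶠ t : ℝ in 𝓝 0, b.coord i (rotationAbout o (b j) t (b i)) < 1 := by
    simpa using frequently_rotationAbout_lt o (b.coord i) (c := b j) (x := b i) (by simp [hij])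
  refine (tendsto_rotationAbout o (b j) (b i)).frequently (hlt.mono fun t ht ↦ ⟨?_, ht⟩)
  have hdist : dist (b j) (rotationAbout o (b j) t (b i)) = dist (b j) (b i) := by
    simpa [rotationAbout_apply] using (rotationAbout o (b j) t).dist_map (b j) (b i)
  have hall (k : ι) (hk : k ≠ j) :
      dist (b j) (Function.update b i (rotationAbout o (b j) t (b i)) k) = dist (b j) (b i) := by
    rcases eq_or_ne k i with rfl | hki
    · rw [Function.update_self, hdist]
    · rw [Function.update_of_ne hki, h k i hk hij]
  intro k l hk hl
  rw [Function.update_of_ne hij.symm, hall k hk, hall l hl]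

lemma frequently_isApex_update (b : AffineBasis (Fin 3) ℝ V) (h : ∃ j, IsApex b j) (i : Fin 3) :
    ∃ᶠ w in 𝓝 (b i), (∃ j, IsApex (Function.update b i w) j) ∧ b.coord i w < 1 := by
  obtain ⟨j, hj⟩ := h
  have key : ∃ᶠ w in 𝓝 (b i), IsApex (Function.update b i w) j ∧ b.coord i w < 1 := by
    rcases eq_or_ne i j with rfl | hij
    exacts [frequently_isApex_update_self b hj, frequently_isApex_update_of_ne b hij hj]
  exact key.mono fun w ⟨hw, hlt⟩ ↦ ⟨⟨j, hw⟩, hlt⟩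

end IsApex

/-- `b` is a triangle of minimum area among the isosceles triangles containing the set `K`. -/
structure IsMinContainer (K : Set Pt) (b : AffineBasis (Fin 3) ℝ Pt) : Prop where
  exists_isApex : ∃ i, IsApex b i
  subset_convexHull : K ⊆ convexHull ℝ (Set.range b)
  volume_le : ∀ v : Fin 3 → Pt, AffineIndependent ℝ v → (∃ i, IsApex v i) →
    K ⊆ convexHull ℝ (Set.range v) →
      volume (convexHull ℝ (Set.range b)) ≤ volume (convexHull ℝ (Set.range v))

/-- The contact points of `K` with the triangle `b`. A point of the triangle lies on its boundary
exactly when one of its barycentric coordinates vanishes, so for `K` contained in the triangle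
these are the points of `K` on the boundary. -/
def contacts (K : Set Pt) (b : AffineBasis (Fin 3) ℝ Pt) : Set Pt :=
  {x ∈ K | ∃ i, b.coord i x = 0}

namespace IsMinContainer

variable {K : Set Pt} {b : AffineBasis (Fin 3) ℝ Pt}

lemma one_le_abs_det (h : IsMinContainer K b) {f : Pt →ᵃ[ℝ] Pt}
    (hdet : LinearMap.det f.linear ≠ 0) (hapex : ∃ i, IsApex (f ∘ b) i)
    (hK : K ⊆ f '' convexHull ℝ (Set.range b)) : 1 ≤ |LinearMap.det f.linear| := by
  have hpos : volume (convexHull ℝ (Set.range b)) ≠ 0 :=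
    (Measure.measure_pos_of_nonempty_interior _ ⟨_, b.centroid_mem_interior_convexHull⟩).ne'
  have hfin : volume (convexHull ℝ (Set.range b)) ≠ ⊤ :=
    ((Set.finite_range b).isCompact_convexHull ℝ).measure_ne_top
  have hf : Function.Injective f :=
    f.linear_injective_iff.1 (f.linear.equivOfDetNeZero hdet).injective
  have himage : convexHull ℝ (Set.range (f ∘ b)) = f '' convexHull ℝ (Set.range b) := by
    rw [Set.range_comp, f.image_convexHull]
  have hle := h.volume_le (f ∘ b) (b.ind.map' f hf) hapex (himage ▸ hK)
  rw [himage, measure_image_affineMap, Measure.addHaar_image_linearMap] at hle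
  by_contra! hlt
  refine hle.not_gt ?_
  simpa using ENNReal.mul_lt_mul_left hpos hfin (ENNReal.ofReal_lt_one.2 hlt)

lemma image (h : IsMinContainer K b) (g : Pt ≃ᵃⁱ[ℝ] Pt)
    (hg : g '' K ⊆ convexHull ℝ (Set.range b)) : IsMinContainer (g '' K) b where
  exists_isApex := h.exists_isApex
  subset_convexHull := hg
  volume_le v hv hapex hK := by
    have himage : convexHull ℝ (Set.range (g.symm ∘ v)) =
        g.symm '' convexHull ℝ (Set.range v) := by
      rw [Set.range_comp]
      exact (g.symm.toAffineEquiv.toAffineMap.image_convexHull _).symm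
    rw [← volume_image_affineIsometryEquiv g.symm (convexHull ℝ (Set.range v)), ← himage]
    refine h.volume_le _ ?_ ?_ ?_
    · exact hv.map' g.symm.toAffineEquiv.toAffineMap g.symm.injective
    · simpa only [IsApex, Function.comp_apply, g.symm.dist_map] using hapex
    · rw [himage]
      exact fun x hx ↦ ⟨g x, hK ⟨x, hx, rfl⟩, g.symm_apply_apply x⟩

lemma coord_nonneg (h : IsMinContainer K b) {x : Pt} (hx : x ∈ K) (i : Fin 3) :
    0 ≤ b.coord i x := by
  have hx := h.subset_convexHull hx
  rw [b.convexHull_eq_nonneg_coord] at hx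
  exact hx i

lemma exists_coord_eq_zero (h : IsMinContainer K b) (hK : IsCompact K) (i : Fin 3) :
    ∃ x ∈ K, b.coord i x = 0 := by
  by_contra! hne
  have hpos : ∀ x ∈ K, 0 < b.coord i x := fun x hx ↦
    (h.coord_nonneg hx i).lt_of_ne' (hne x hx)
  obtain ⟨c, hc, hcK⟩ :=
    hK.exists_forall_le' (continuous_barycentric_coord b i).continuousOn hpos
  let r : ℝ := max (1 - c) (1 / 2)
  have hr0 : 0 < r := by positivity
  have hr1 : r < 1 := max_lt (by linarith) (by norm_num)
  have hdet : LinearMap.det (AffineMap.homothety (b i) r).linear = r ^ 2 := by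
    simp [AffineMap.homothety_linear]
  have := h.one_le_abs_det (f := AffineMap.homothety (b i) r) (by rw [hdet]; positivity) ?_ ?_
  · rw [hdet, abs_of_pos (by positivity)] at this
    nlinarith
  · obtain ⟨j, hj⟩ := h.exists_isApex
    refine ⟨j, fun k l hk hl ↦ ?_⟩
    have hdist (x y : Pt) : dist (AffineMap.homothety (b i) r x) (AffineMap.homothety (b i) r y) =
        ‖r‖ * dist x y := by
      simp [AffineMap.homothety_apply, dist_smul₀]
    simp only [Function.comp_apply, hdist, hj k l hk hl]
  · exact fun x hx ↦ mem_homothety_image_convexHull b hr0 (h.subset_convexHull hx)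
      (by linarith [hcK x hx, le_max_left (1 - c) (1 / 2)])

lemma exists_contact_ne_of_coord_pos (h : IsMinContainer K b) (hK : K.Finite) {i : Fin 3} {y : Pt}
    (hy : b.coord i y = 0) (hpos : ∀ j ≠ i, 0 < b.coord j y) :
    ∃ x ∈ contacts K b, x ≠ b i ∧ x ≠ y := by
  by_contra! hcontact
  let o := (EuclideanSpace.basisFun (Fin 2) ℝ).toBasis.orientation
  let ρ (t : ℝ) : Pt ≃ᵃⁱ[ℝ] Pt := rotationAbout o (b i) t
  have hK_inside : ∀ᶠ t in 𝓝 0, ∀ x ∈ K, x ≠ b i → x ≠ y → ∀ j, 0 < b.coord j (ρ t x) := by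
    refine (Filter.eventually_all_finite hK).2 fun x hx ↦ ?_
    simp only [Filter.eventually_imp_distrib_left]
    exact fun hxi hxy ↦ Filter.eventually_all.2 fun j ↦ eventually_coord_rotationAbout_pos o b <|
      (h.coord_nonneg hx j).lt_of_ne' fun hj ↦ hxy (hcontact x ⟨hx, j, hj⟩ hxi)
  obtain ⟨t, hty, htK⟩ :=
    ((frequently_coord_rotationAbout_pos o b hy hpos).and_eventually hK_inside).exists
  have hinside : ∀ x ∈ K, x ≠ b i → ∀ j, 0 < b.coord j (ρ t x) := by
    intro x hx hxi
    rcases eq_or_ne x y with rfl | hxy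
    exacts [hty, htK x hx hxi hxy]
  have hfix : ρ t (b i) = b i := by simp [ρ, rotationAbout_apply]
  have hsubset : ρ t '' K ⊆ convexHull ℝ (Set.range b) := by
    rw [b.convexHull_eq_nonneg_coord]
    rintro _ ⟨x, hx, rfl⟩ j
    rcases eq_or_ne x (b i) with rfl | hxi
    exacts [hfix.symm ▸ h.coord_nonneg hx j, (hinside x hx hxi j).le]
  obtain ⟨_, ⟨x, hx, rfl⟩, hzero⟩ :=
    (h.image (ρ t) hsubset).exists_coord_eq_zero (hK.image _).isCompact i
  rcases eq_or_ne x (b i) with rfl | hxi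
  · rw [hfix, b.coord_apply_eq] at hzero
    exact one_ne_zero hzero
  · exact (hinside x hx hxi i).ne' hzero

lemma eventually_one_le_coord (h : IsMinContainer K b) (hK : K.Finite) {i : Fin 3}
    (hcontact : ∀ x ∈ contacts K b, ∃ j ≠ i, x = b j) :
    ∀ᶠ w in 𝓝 (b i), (∃ j, IsApex (Function.update b i w) j) → 1 ≤ b.coord i w := by
  have hcover : ∀ᶠ w in 𝓝 (b i), K ⊆ moveVertex b i w '' convexHull ℝ (Set.range b) := by
    refine (Filter.eventually_all_finite hK).2 fun x hx ↦ ?_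
    by_cases hx0 : ∃ j, b.coord j x = 0
    · obtain ⟨j, hj, rfl⟩ := hcontact x ⟨hx, hx0⟩
      exact Filter.Eventually.of_forall fun w ↦ ⟨b j, h.subset_convexHull hx, by
        simp [moveVertex_apply, b.coord_apply_ne hj.symm]⟩
    · push Not at hx0
      exact eventually_mem_moveVertex_image b i fun j ↦ (h.coord_nonneg hx j).lt_of_ne' (hx0 j)
  have hpos : ∀ᶠ w in 𝓝 (b i), 0 < b.coord i w :=
    ((continuous_barycentric_coord b i).tendsto (b i)).eventually_const_lt (by simp)
  filter_upwards [hcover, hpos] with w hw hwpos hapex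
  have hdet := det_linear_moveVertex b i w
  have := h.one_le_abs_det (hdet ▸ hwpos.ne') (moveVertex_comp b i w ▸ hapex) hw
  rwa [hdet, abs_of_pos hwpos] at this

lemma exists_contact_ne_vertices (h : IsMinContainer K b) (hK : K.Finite) (i : Fin 3) :
    ∃ x ∈ contacts K b, ∀ j ≠ i, x ≠ b j := by
  by_contra! hcontact
  obtain ⟨w, ⟨hapex, hlt⟩, hle⟩ := ((frequently_isApex_update b h.exists_isApex i).and_eventually
    (h.eventually_one_le_coord hK hcontact)).exists
  exact hlt.not_ge (hle hapex)

lemma exists_contact_ne (h : IsMinContainer K b) (hK : K.Finite) {i : Fin 3} {y : Pt} (hyK : y ∈ K)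
    (hy : b.coord i y = 0) : ∃ x ∈ contacts K b, x ≠ b i ∧ x ≠ y := by
  by_cases hpos : ∀ j ≠ i, 0 < b.coord j y
  · exact h.exists_contact_ne_of_coord_pos hK hy hpos
  push Not at hpos
  obtain ⟨j, hji, hj⟩ := hpos
  obtain ⟨k, hki, hkj, hk⟩ := exists_third_index hji.symm
  have hyk : y = b k := eq_of_forall_coord_eq_zero b fun l hl ↦ by
    rcases hk l hl with rfl | rfl
    exacts [hy, hj.antisymm (h.coord_nonneg hyK l)]
  obtain ⟨x, hx, hne⟩ := h.exists_contact_ne_vertices hK j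
  exact ⟨x, hx, hne i hji.symm, hyk ▸ hne k hkj⟩

lemma three_le_encard_contacts (h : IsMinContainer K b) (hK : K.Finite) :
    3 ≤ (contacts K b).encard := by
  choose f hfK hf using h.exists_coord_eq_zero hK.isCompact
  by_cases hinj : Function.Injective f
  · have hrange : 3 ≤ (Set.range f).encard := by simpa using hinj.encard_range
    exact hrange.trans <| Set.encard_le_encard <|
      Set.range_subset_iff.2 fun i ↦ ⟨hfK i, i, hf i⟩
  · obtain ⟨j, k, hjk, hne⟩ := Function.not_injective_iff.1 hinj
    obtain ⟨i, hij, hik, hi⟩ := exists_third_index hne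
    have hvertex : f j = b i := eq_of_forall_coord_eq_zero b fun l hl ↦ by
      rcases hi l hl with rfl | rfl
      exacts [hf l, hjk ▸ hf l]
    have hfi : f i ≠ b i := fun heq ↦ by simpa [heq] using hf i
    obtain ⟨x, hx, hxi, hxf⟩ := h.exists_contact_ne hK (hfK i) (hf i)
    rw [← Set.encard_eq_three.2 ⟨b i, f i, x, hfi.symm, hxi.symm, hxf.symm, rfl⟩]
    refine Set.encard_le_encard ?_
    simp only [Set.insert_subset_iff, Set.singleton_subset_iff]
    exact ⟨⟨hvertex ▸ hfK j, j, hvertex ▸ hf j⟩, ⟨hfK i, i, hf i⟩, hx⟩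

end IsMinContainer

lemma isIsosceles_iff_exists_isApex {S P R : Pt} :
    IsIsosceles S P R ↔ ∃ i, IsApex ![S, P, R] i := by
  simp only [IsIsosceles, isApex_iff_dist_eq_dist]
  constructor
  · rintro (h | h | h)
    exacts [⟨2, by simpa [dist_comm] using h.symm⟩, ⟨0, by simpa [dist_comm] using h.symm⟩,
      ⟨1, by simpa [dist_comm] using h.symm⟩]
  · rintro ⟨i, h⟩
    fin_cases i
    exacts [.inr (.inl (by simpa [dist_comm] using h.symm)),
      .inr (.inr (by simpa [dist_comm] using h.symm)), .inl (by simpa [dist_comm] using h.symm)]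

lemma tri_eq_convexHull_range_s15 (S P R : Pt) : tri S P R = convexHull ℝ (Set.range ![S, P, R]) := by
  rw [tri, Matrix.range_cons, Matrix.range_cons, Matrix.range_cons, Matrix.range_empty]
  simp only [Set.singleton_union, insert_empty_eq]

lemma IsMinIsoscelesContainer.exists_affineBasis {A B C S P R : Pt}
    (h : IsMinIsoscelesContainer A B C S P R) :
    ∃ b : AffineBasis (Fin 3) ℝ Pt, ⇑b = ![S, P, R] ∧ IsMinContainer {A, B, C} b := by
  obtain ⟨⟨hind, hiso, hsub⟩, hmin⟩ := h
  have htop : affineSpan ℝ (Set.range ![S, P, R]) = ⊤ := by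
    rw [hind.affineSpan_eq_top_iff_card_eq_finrank_add_one]
    simp
  refine ⟨⟨![S, P, R], hind, htop⟩, rfl, isIsosceles_iff_exists_isApex.1 hiso, ?_, ?_⟩
  · exact (subset_convexHull ℝ _).trans (hsub.trans (tri_eq_convexHull_range_s15 S P R).subset)
  · intro v hv hapex hK
    obtain ⟨S', P', R', rfl⟩ : ∃ S' P' R', v = ![S', P', R'] :=
      ⟨v 0, v 1, v 2, by ext i : 1; fin_cases i <;> rfl⟩
    change volume (convexHull ℝ (Set.range ![S, P, R])) ≤ _
    simp only [← tri_eq_convexHull_range_s15] at hK ⊢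
    refine (ENNReal.toReal_le_toReal ?_ ?_).1 (hmin S' P' R' ⟨hv,
      isIsosceles_iff_exists_isApex.2 hapex, convexHull_min hK (convex_convexHull ℝ _)⟩)
    all_goals exact (Set.toFinite _).isCompact_convexHull ℝ |>.measure_ne_top

lemma iUnion_segment_cyclic (S P R : Pt) :
    ⋃ i : Fin 3, segment ℝ (![S, P, R] (i + 1)) (![S, P, R] (i + 2)) =
      segment ℝ S P ∪ segment ℝ P R ∪ segment ℝ R S := by
  ext x
  simp only [Set.mem_iUnion, Fin.exists_fin_succ, IsEmpty.exists_iff, or_false, Set.mem_union]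
  change x ∈ segment ℝ P R ∨ x ∈ segment ℝ R S ∨ x ∈ segment ℝ S P ↔ _
  tauto

theorem statement15_general {K : Set Pt} (hK : K.Finite) {b : AffineBasis (Fin 3) ℝ Pt}
    (h : IsMinContainer K b) :
    (∀ i, ∃ x ∈ K, x ∈ segment ℝ (b (i + 1)) (b (i + 2))) ∧
      3 ≤ (K ∩ ⋃ i, segment ℝ (b (i + 1)) (b (i + 2))).encard := by
  constructor
  · intro i
    obtain ⟨x, hx, hi⟩ := h.exists_coord_eq_zero hK.isCompact i
    exact ⟨x, hx, mem_segment_of_coord_eq_zero b (h.subset_convexHull hx) hi⟩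
  · refine (h.three_le_encard_contacts hK).trans (Set.encard_le_encard ?_)
    rintro x ⟨hx, i, hi⟩
    exact ⟨hx, Set.mem_iUnion.2
      ⟨i, mem_segment_of_coord_eq_zero b (h.subset_convexHull hx) hi⟩⟩

/-- if `S P R` is a minimum area isosceles container for the
triangle `A B C`, then `A`, `B`, `C` lie on the boundary of `S P R`, and each
side of `S P R` contains at least one of them. -/
theorem statement15 (A B C S P R : Pt)
    (hABC : AffineIndependent ℝ ![A, B, C])
    (hmin : IsMinIsoscelesContainer A B C S P R) :
    (A ∈ segment ℝ (S) (P) ∪ segment ℝ (P) (R) ∪ segment ℝ (R) (S)) ∧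
    (B ∈ segment ℝ (S) (P) ∪ segment ℝ (P) (R) ∪ segment ℝ (R) (S)) ∧
    (C ∈ segment ℝ (S) (P) ∪ segment ℝ (P) (R) ∪ segment ℝ (R) (S)) ∧
    (∃ X ∈ ({A, B, C} : Set Pt), X ∈ segment ℝ (S) (P)) ∧
    (∃ X ∈ ({A, B, C} : Set Pt), X ∈ segment ℝ (P) (R)) ∧
    (∃ X ∈ ({A, B, C} : Set Pt), X ∈ segment ℝ (R) (S)) := by
  obtain ⟨b, hb, h⟩ := hmin.exists_affineBasis
  obtain ⟨hside, hcard⟩ := statement15_general (Set.toFinite _) h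
  rw [hb, iUnion_segment_cyclic] at hcard
  rw [hb] at hside
  have hsubset := insert_pair_subset_of_three_le_encard_inter hcard
  exact ⟨hsubset (by simp), hsubset (by simp), hsubset (by simp), hside 2, hside 0, hside 1⟩
end
end
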